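/- Let Ω ⊂ ℂⁿ, n ≥ 2, be a bounded simply-connected pseudoconvex domain with C^∞ boundary, and let p ∈ ∂Ω be a strongly pseudoconvex boundary point. Let F : Ω → Ω be a holomorphic map such that F(q) = q for some q ∈ Ω and F(z) = z + o(‖z−p‖²) as z → p within Ω. Then F(z) = z for all z ∈ Ω. -/

import Mathlib

open Complex Topology Filter Metric Set Function

noncomputable section

/-- `ℂⁿ` as a normed space. -/
abbrev En (n : ℕ) : Type := EuclideanSpace ℂ (Fin n)

/-- A domain: a nonempty open connected set. -/
def IsDomain' {n : ℕ} (Ω : Set (En n)) : Prop :=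
  IsOpen Ω ∧ IsConnected Ω

/-- The Levi form of `ρ` at `q` in direction `ξ`:
`(1/4)(H_q(ξ,ξ) + H_q(iξ,iξ))` with `H_q` the second real Fréchet derivative. -/
def LeviForm {n : ℕ} (ρ : En n → ℝ) (q ξ : En n) : ℝ :=
  (1 / 4) * (iteratedFDeriv ℝ 2 ρ q ![ξ, ξ] + iteratedFDeriv ℝ 2 ρ q ![I • ξ, I • ξ])

/-- `ξ` lies in the complex tangent space of `{ρ = 0}` at `q`. -/
def InCplxTangent {n : ℕ} (ρ : En n → ℝ) (q ξ : En n) : Prop :=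
  fderiv ℝ ρ q ξ = 0 ∧ fderiv ℝ ρ q (I • ξ) = 0

/-- `ρ` is a `C^m` defining function for `Ω`. -/
def IsDefiningFunction {n : ℕ} (Ω : Set (En n)) (m : ℕ∞) (ρ : En n → ℝ) : Prop :=
  ContDiff ℝ m ρ ∧ Ω = {z | ρ z < 0} ∧ frontier Ω = {z | ρ z = 0} ∧
    ∀ q ∈ frontier Ω, fderiv ℝ ρ q ≠ 0

/-- `q` is a strongly pseudoconvex point with respect to `ρ`. -/
def StronglyPcxAt {n : ℕ} (ρ : En n → ℝ) (q : En n) : Prop :=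
  ∀ ξ : En n, ξ ≠ 0 → InCplxTangent ρ q ξ → 0 < LeviForm ρ q ξ

/-- `Ω` is pseudoconvex with `C^∞` boundary, witnessed by the defining function `ρ`. -/
def IsPcxCinfBoundary {n : ℕ} (Ω : Set (En n)) (ρ : En n → ℝ) : Prop :=
  IsDefiningFunction Ω ⊤ ρ ∧
    ∀ q ∈ frontier Ω, ∀ ξ : En n, InCplxTangent ρ q ξ → 0 ≤ LeviForm ρ q ξ

/-- `F z = z + o(‖z - p‖^k)` as `z → p` within `Ω`. -/
def LittleOh {n : ℕ} (Ω : Set (En n)) (F : En n → En n) (p : En n) (k : ℕ) : Prop :=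
  Tendsto (fun z => ‖F z - z‖ / ‖z - p‖ ^ k) (𝓝[Ω] p) (𝓝 0)

/-- `F` is an automorphism of `Ω`: a holomorphic bijection with holomorphic inverse. -/
def IsAutomorphismOf {n : ℕ} (F : En n → En n) (Ω : Set (En n)) : Prop :=
  DifferentiableOn ℂ F Ω ∧ MapsTo F Ω Ω ∧
    ∃ G : En n → En n, DifferentiableOn ℂ G Ω ∧ MapsTo G Ω Ω ∧
      (∀ z ∈ Ω, G (F z) = z) ∧ (∀ z ∈ Ω, F (G z) = z)

/-!
The iterates of `F` are bounded by a constant independent of their order, so the powers of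
`A = F'(q)` are bounded. Hence `|det A| < 1`, or `A = 1`, or `A` has a unimodular eigenvalue
`μ ≠ 1`. If `A = 1`, then `F` is the identity by H. Cartan's uniqueness theorem. The other two cases
contradict the contact of `F` with the identity at `p`, because smallness of a holomorphic function
propagates between `q` and `p` by two-constants estimates.

Suppose first that `ℓ ∘ A = μ ℓ` with `ℓ ≠ 0`. The averages of `μ⁻ᵏ ℓ (Fᵏ z - q)` over `k` are
almost eigenfunctions of composition with `F`, and their derivative at `q` is `ℓ`. At distance `t`
from `p`, `F` moves points by only `o(t²)`, which makes the averages as small as `exp (-m)`, where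
`m t` can be taken arbitrarily large. By the Hopf lemma in a ball touching `∂Ω` at `p` they tend to
zero at a fixed distance from `p`, hence on all of `Ω`, which contradicts `ℓ ≠ 0`.

Suppose now that `|det A| < 1`. The Jacobians of `Fᵏ` are then exponentially small in `k`, locally
uniformly in `Ω`. Strong pseudoconvexity yields a negative plurisubharmonic function `log φ` with a
pole at `p` modelled on `-re (1 / ψ)`, for a holomorphic support function `ψ`. Since `Fᵏ` agrees
with the identity to second order at `p`, the function `log φ ∘ Fᵏ` lies below a fixed multiple of
minus the pluricomplex Poisson kernel of the touching ball. This confines `Fᵏ` near `p`, uniformly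
in `k`, and Cauchy's estimates on nonisotropic polydiscs bound its Jacobian nontangentially at `p`.
Together with the smallness inside `Ω`, the Jacobian at distance `t` from `p` along the normal is
`O(exp (-b k t))`. On the other hand `Fᵏ` is close to the identity there as long as `k t` is bounded
and `t` is small, so that its Jacobian stays above `1 / 2`: a contradiction when `k t` is a large
constant.
-/

section HolomorphicSupport

variable {E G : Type*} [NormedAddCommGroup E] [NormedSpace ℂ E] [NormedAddCommGroup G]
  [NormedSpace ℂ G]

/-- `φ` is continuous on `U` and touched from below at every point of `U` by the modulus of a
holomorphic function. This is the form in which `log φ` being plurisubharmonic is used here. -/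
def HasHolomorphicSupport (φ : E → ℝ) (U : Set E) : Prop :=
  ContinuousOn φ U ∧ ∀ c ∈ U, ∃ g : E → ℂ,
    (∀ᶠ z in 𝓝 c, DifferentiableAt ℂ g z ∧ ‖g z‖ ≤ φ z) ∧ ‖g c‖ = φ c

namespace HasHolomorphicSupport

variable {φ ψ : E → ℝ} {U V : Set E}

lemma nonneg (h : HasHolomorphicSupport φ U) {c : E} (hc : c ∈ U) : 0 ≤ φ c := by
  obtain ⟨g, -, hg⟩ := h.2 c hc
  exact hg ▸ norm_nonneg _

lemma mono (h : HasHolomorphicSupport φ U) (hVU : V ⊆ U) : HasHolomorphicSupport φ V :=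
  ⟨h.1.mono hVU, fun c hc => h.2 c (hVU hc)⟩

lemma comp (h : HasHolomorphicSupport φ U) {W : Set G} (hW : IsOpen W) {γ : G → E}
    (hγ : DifferentiableOn ℂ γ W) (hm : MapsTo γ W U) :
    HasHolomorphicSupport (fun z => φ (γ z)) W := by
  refine ⟨h.1.comp hγ.continuousOn hm, fun c hc => ?_⟩
  obtain ⟨g, hg, hgc⟩ := h.2 _ (hm hc)
  refine ⟨g ∘ γ, ?_, hgc⟩
  have hcont : ContinuousAt γ c := hγ.continuousOn.continuousAt (hW.mem_nhds hc)
  filter_upwards [hcont.eventually hg, hW.mem_nhds hc] with z hz hzW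
  exact ⟨hz.1.comp z (hγ.differentiableAt (hW.mem_nhds hzW)), hz.2⟩

lemma mul (hφ : HasHolomorphicSupport φ U) (hψ : HasHolomorphicSupport ψ U) :
    HasHolomorphicSupport (fun z => φ z * ψ z) U := by
  refine ⟨hφ.1.mul hψ.1, fun c hc => ?_⟩
  obtain ⟨f, hf, hfc⟩ := hφ.2 c hc
  obtain ⟨g, hg, hgc⟩ := hψ.2 c hc
  refine ⟨fun z => f z * g z, ?_, by rw [norm_mul, hfc, hgc]⟩
  filter_upwards [hf, hg] with z hz hz'
  refine ⟨hz.1.mul hz'.1, ?_⟩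
  rw [norm_mul]
  exact mul_le_mul hz.2 hz'.2 (norm_nonneg _) ((norm_nonneg _).trans hz.2)

lemma eventually_eq_of_isLocalMax (h : HasHolomorphicSupport φ U) {c : E} (hc : c ∈ U)
    (hmax : IsLocalMax φ c) : ∀ᶠ z in 𝓝 c, φ z = φ c := by
  obtain ⟨g, hg, hgc⟩ := h.2 c hc
  have hgmax : IsLocalMax (norm ∘ g) c := by
    filter_upwards [hg, hmax] with z hz hzc
    exact hz.2.trans (hzc.trans_eq hgc.symm)
  filter_upwards [hg, hmax, norm_eventually_eq_of_isLocalMax (hg.mono fun z hz => hz.1) hgmax]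
    with z hz hzc hzg
  exact le_antisymm hzc (hgc ▸ hzg ▸ hz.2)

/-- Among the points where a maximum exceeding the boundary values is attained, one that is
extreme in some direction would be interior, against local constancy. -/
lemma le_of_forall_mem_frontier_le [Nontrivial E] [FiniteDimensional ℂ E] (hU : IsOpen U)
    (hUb : Bornology.IsBounded U) (hφ : ContinuousOn φ (closure U))
    (h : HasHolomorphicSupport φ U) {C : ℝ} (hC : ∀ z ∈ frontier U, φ z ≤ C) {z : E}
    (hz : z ∈ U) : φ z ≤ C := by
  by_contra! hlt
  have : ProperSpace E := FiniteDimensional.proper ℂ E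
  have hK : IsCompact (closure U) := hUb.isCompact_closure
  obtain ⟨w, hw, hmax⟩ := hK.exists_isMaxOn ⟨z, subset_closure hz⟩ hφ
  obtain ⟨v, hv⟩ := exists_ne (0 : E)
  obtain ⟨ℓ, -, hℓ⟩ := exists_dual_vector ℂ v (norm_ne_zero_iff.2 hv)
  have hA : IsCompact (closure U ∩ φ ⁻¹' {φ w}) :=
    hK.of_isClosed_subset (hφ.preimage_isClosed_of_isClosed isClosed_closure isClosed_singleton)
      inter_subset_left
  obtain ⟨c, ⟨hcK, hcw⟩, hcmax⟩ := hA.exists_isMaxOn ⟨w, hw, rfl⟩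
    (continuous_re.comp ℓ.continuous).continuousOn
  rw [mem_preimage, mem_singleton_iff] at hcw
  have hcU : c ∈ U := by
    by_contra hcU
    have hcC := hC c ⟨hcK, by rwa [hU.interior_eq]⟩
    linarith [isMaxOn_iff.1 hmax z (subset_closure hz)]
  have hUc : ∀ᶠ y in 𝓝 c, y ∈ closure U := mem_of_superset (hU.mem_nhds hcU) subset_closure
  have hloc : IsLocalMax φ c := hUc.mono fun y hy => (hmax hy).trans_eq hcw.symm
  have hray : Tendsto (fun x : ℝ => c + (x : ℂ) • v) (𝓝[>] 0) (𝓝 c) := by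
    have : Tendsto (fun x : ℝ => c + (x : ℂ) • v) (𝓝 0) (𝓝 (c + ((0 : ℝ) : ℂ) • v)) :=
      Continuous.tendsto (by fun_prop) 0
    simp only [ofReal_zero, zero_smul, add_zero] at this
    exact this.mono_left nhdsWithin_le_nhds
  obtain ⟨x, ⟨hxφ, hxU⟩, hx⟩ := ((hray.eventually
    ((h.eventually_eq_of_isLocalMax hcU hloc).and hUc)).and self_mem_nhdsWithin).exists
  have hle : (ℓ (c + (x : ℂ) • v)).re ≤ (ℓ c).re := hcmax ⟨hxU, hxφ.trans hcw⟩
  have hpos : 0 < x * ‖v‖ := mul_pos hx (norm_pos_iff.2 hv)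
  rw [map_add, map_smul, hℓ] at hle
  simp at hle
  linarith

end HasHolomorphicSupport

lemma hasHolomorphicSupport_norm {f : E → ℂ} {U : Set E} (hU : IsOpen U)
    (hf : DifferentiableOn ℂ f U) : HasHolomorphicSupport (fun z => ‖f z‖) U :=
  ⟨hf.continuousOn.norm, fun c hc => ⟨f, by
    filter_upwards [hU.mem_nhds hc] with z hz
    exact ⟨hf.differentiableAt (hU.mem_nhds hz), le_rfl⟩, rfl⟩⟩

/-- Near `c` the function `‖z‖ ^ β` is the modulus of a branch of `z ^ β`, which is taken of
`z / c` to stay away from the slit. -/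
lemma hasHolomorphicSupport_norm_rpow (β : ℝ) :
    HasHolomorphicSupport (fun z : ℂ => ‖z‖ ^ β) {0}ᶜ := by
  refine ⟨continuous_norm.continuousOn.rpow_const fun z hz => Or.inl (norm_ne_zero_iff.2 hz),
    fun c (hc : c ≠ 0) => ?_⟩
  have hc0 : 0 < ‖c‖ := norm_pos_iff.2 hc
  have hnorm : ∀ z : ℂ, ‖(z / c) ^ (β : ℂ) * ((‖c‖ ^ β : ℝ) : ℂ)‖ = ‖z‖ ^ β := fun z => by
    rw [norm_mul, norm_cpow_real, norm_div, norm_real, Real.norm_eq_abs,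
      abs_of_pos (Real.rpow_pos_of_pos hc0 _), ← Real.mul_rpow (by positivity) hc0.le,
      div_mul_cancel₀ _ hc0.ne']
  have hslit : ∀ᶠ z in 𝓝 c, z / c ∈ slitPlane :=
    (continuous_id.div_const c).continuousAt.eventually (isOpen_slitPlane.mem_nhds (by simp [hc]))
  refine ⟨fun z => (z / c) ^ (β : ℂ) * ((‖c‖ ^ β : ℝ) : ℂ), ?_, hnorm c⟩
  filter_upwards [hslit] with z hz
  exact ⟨((differentiableAt_id.div_const c).cpow_const hz).mul_const _, (hnorm z).le⟩

end HolomorphicSupport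

section TwoCircles

variable {φ : ℂ → ℝ}

lemma HasHolomorphicSupport.le_of_forall_norm_eq {s t C : ℝ}
    (h : HasHolomorphicSupport φ {w | s ≤ ‖w‖ ∧ ‖w‖ ≤ t}) (hs : ∀ w, ‖w‖ = s → φ w ≤ C)
    (ht : ∀ w, ‖w‖ = t → φ w ≤ C) {z : ℂ} (hsz : s ≤ ‖z‖) (hzt : ‖z‖ ≤ t) : φ z ≤ C := by
  rcases hsz.eq_or_lt with hsz | hsz
  · exact hs z hsz.symm
  rcases hzt.eq_or_lt with hzt | hzt
  · exact ht z hzt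
  set U : Set ℂ := {w | s < ‖w‖} ∩ {w | ‖w‖ < t}
  have hUo : IsOpen U :=
    (isOpen_lt continuous_const continuous_norm).inter (isOpen_lt continuous_norm continuous_const)
  have hUcl : closure U ⊆ {w | s ≤ ‖w‖ ∧ ‖w‖ ≤ t} :=
    closure_minimal (fun w ⟨(hsw : s < ‖w‖), (hwt : ‖w‖ < t)⟩ => ⟨hsw.le, hwt.le⟩)
      ((isClosed_le continuous_const continuous_norm).inter
        (isClosed_le continuous_norm continuous_const))
  have hUb : Bornology.IsBounded U :=
    isBounded_ball.subset fun w (hw : w ∈ U) => mem_ball_zero_iff.2 hw.2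
  refine (h.mono (subset_closure.trans hUcl)).le_of_forall_mem_frontier_le hUo hUb (h.1.mono hUcl)
    (fun w hw => ?_) ⟨hsz, hzt⟩
  obtain ⟨hsw, hwt⟩ := hUcl (frontier_subset_closure hw)
  rcases hsw.eq_or_lt with hsw | hsw
  · exact hs w hsw.symm
  · refine ht w (hwt.antisymm (not_lt.1 fun hlt => ?_))
    rw [hUo.frontier_eq] at hw
    exact hw.2 ⟨hsw, hlt⟩

/-- Hadamard's two-circles estimate: compare `φ` with `‖z‖ ^ α` on the annulus. -/
lemma HasHolomorphicSupport.le_rpow (h : HasHolomorphicSupport φ (ball 0 1))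
    (h1 : ∀ z ∈ ball (0 : ℂ) 1, φ z ≤ 1) {s α : ℝ} (hs : 0 < s) (hα : 0 ≤ α)
    (hsmall : ∀ z ∈ ball (0 : ℂ) 1, ‖z‖ ≤ s → φ z ≤ s ^ α) {z : ℂ} (hz : z ∈ ball (0 : ℂ) 1)
    (hsz : s ≤ ‖z‖) : φ z ≤ ‖z‖ ^ α := by
  have hz1 : ‖z‖ < 1 := mem_ball_zero_iff.1 hz
  have hz0 : 0 < ‖z‖ := hs.trans_le hsz
  have annulus : ∀ t ∈ Ioo ‖z‖ 1, φ z * ‖z‖ ^ (-α) ≤ t ^ (-α) := by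
    rintro t ⟨hzt, ht1⟩
    have hball : {w : ℂ | s ≤ ‖w‖ ∧ ‖w‖ ≤ t} ⊆ ball 0 1 := fun w hw =>
      mem_ball_zero_iff.2 (hw.2.trans_lt ht1)
    have hprod : HasHolomorphicSupport (fun w => φ w * ‖w‖ ^ (-α)) {w | s ≤ ‖w‖ ∧ ‖w‖ ≤ t} :=
      (h.mono hball).mul
        ((hasHolomorphicSupport_norm_rpow _).mono fun w hw => norm_pos_iff.1 (hs.trans_le hw.1))
    refine hprod.le_of_forall_norm_eq (fun w hw => ?_) (fun w hw => ?_) hsz hzt.le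
    · calc φ w * ‖w‖ ^ (-α) ≤ s ^ α * s ^ (-α) := by
            rw [hw]
            gcongr
            exact hsmall w (hball ⟨hw.ge, hw.trans_le (hsz.trans hzt.le)⟩) hw.le
        _ = 1 := by rw [← Real.rpow_add hs, add_neg_cancel, Real.rpow_zero]
        _ ≤ t ^ (-α) :=
            Real.one_le_rpow_of_pos_of_le_one_of_nonpos (hz0.trans hzt) ht1.le (neg_nonpos.2 hα)
    · calc φ w * ‖w‖ ^ (-α) ≤ 1 * t ^ (-α) := by
            rw [hw]
            have ht0 : 0 ≤ t := hz0.le.trans hzt.le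
            gcongr
            exact h1 w (hball ⟨hsz.trans (hzt.le.trans hw.ge), hw.le⟩)
        _ = t ^ (-α) := one_mul _
  have hlim : Tendsto (fun t : ℝ => t ^ (-α)) (𝓝[<] 1) (𝓝 1) := by
    have := (Real.continuousAt_rpow_const 1 (-α) (Or.inl one_ne_zero)).tendsto
    rw [Real.one_rpow] at this
    exact this.mono_left nhdsWithin_le_nhds
  have hle : φ z * ‖z‖ ^ (-α) ≤ 1 :=
    ge_of_tendsto hlim (eventually_of_mem (Ioo_mem_nhdsLT hz1) annulus)
  rwa [Real.rpow_neg hz0.le, ← div_eq_mul_inv, div_le_one (Real.rpow_pos_of_pos hz0 α)] at hle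

lemma HasHolomorphicSupport.le_exp (h : HasHolomorphicSupport φ (ball 0 1))
    (h1 : ∀ z ∈ ball (0 : ℂ) 1, φ z ≤ 1) {L M : ℝ} (hL : 1 ≤ L) (hM : 0 ≤ M)
    (hsmall : ∀ z ∈ ball (0 : ℂ) 1, ‖z‖ ≤ Real.exp (-L) → φ z ≤ Real.exp (-M)) {z : ℂ}
    (hz : z ∈ ball (0 : ℂ) 1) : φ z ≤ Real.exp (-(M / L * (1 - ‖z‖))) := by
  have : 0 < L := zero_lt_one.trans_le hL
  have hML : 0 ≤ M / L := by positivity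
  rcases le_total ‖z‖ (Real.exp (-L)) with hle | hle
  · refine (hsmall z hz hle).trans (Real.exp_le_exp.2 ?_)
    nlinarith [norm_nonneg z, div_le_self hM hL]
  · have hz0 : 0 < ‖z‖ := (Real.exp_pos _).trans_le hle
    have hpow : Real.exp (-L) ^ (M / L) = Real.exp (-M) := by
      rw [← Real.exp_mul]
      congr 1
      field_simp
    calc φ z ≤ ‖z‖ ^ (M / L) :=
          h.le_rpow h1 (Real.exp_pos _) hML (by rwa [hpow]) hz hle
      _ = Real.exp (Real.log ‖z‖ * (M / L)) := Real.rpow_def_of_pos hz0 _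
      _ ≤ _ := Real.exp_le_exp.2 (by nlinarith [Real.log_le_sub_one_of_pos hz0])

end TwoCircles

section Moebius

open scoped ComplexConjugate

variable {a w : ℂ}

/-- The automorphism `w ↦ (w + a) / (1 + a̅ w)` of the unit disc, sending `0` to `a`. -/
def discShift (a w : ℂ) : ℂ :=
  (w + a) / (1 + conj a * w)

lemma one_add_conj_mul_ne_zero (ha : ‖a‖ < 1) (hw : ‖w‖ < 1) : 1 + conj a * w ≠ 0 := by
  intro h
  have : ‖conj a * w‖ = 1 := by rw [eq_neg_of_add_eq_zero_right h, norm_neg, norm_one]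
  rw [norm_mul, RCLike.norm_conj] at this
  nlinarith [norm_nonneg w, norm_nonneg a]

lemma differentiableOn_discShift (ha : ‖a‖ < 1) : DifferentiableOn ℂ (discShift a) (ball 0 1) :=
  fun w hw => by
    have hne : 1 + conj a * w ≠ 0 := one_add_conj_mul_ne_zero ha (mem_ball_zero_iff.1 hw)
    exact DifferentiableAt.differentiableWithinAt (by
      unfold discShift
      fun_prop (disch := assumption))

lemma one_sub_norm_discShift_sq (ha : ‖a‖ < 1) (hw : ‖w‖ < 1) :
    1 - ‖discShift a w‖ ^ 2 = (1 - ‖a‖ ^ 2) * (1 - ‖w‖ ^ 2) / ‖1 + conj a * w‖ ^ 2 := by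
  have hne : ‖1 + conj a * w‖ ^ 2 ≠ 0 :=
    pow_ne_zero 2 (norm_ne_zero_iff.2 (one_add_conj_mul_ne_zero ha hw))
  have key : ‖1 + conj a * w‖ ^ 2 - ‖w + a‖ ^ 2 = (1 - ‖a‖ ^ 2) * (1 - ‖w‖ ^ 2) := by
    simp only [← normSq_eq_norm_sq, normSq_apply]
    simp
    ring
  rw [discShift, norm_div, div_pow, ← key, sub_div, div_self hne]

lemma norm_discShift_lt_one (ha : ‖a‖ < 1) (hw : ‖w‖ < 1) : ‖discShift a w‖ < 1 := by
  have hne : 0 < ‖1 + conj a * w‖ := norm_pos_iff.2 (one_add_conj_mul_ne_zero ha hw)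
  have hpos : 0 < (1 - ‖a‖ ^ 2) * (1 - ‖w‖ ^ 2) := by
    apply mul_pos <;> nlinarith [norm_nonneg a, norm_nonneg w]
  have : 0 < 1 - ‖discShift a w‖ ^ 2 := by
    rw [one_sub_norm_discShift_sq ha hw]
    positivity
  nlinarith [norm_nonneg (discShift a w)]

lemma discShift_discShift_neg (ha : ‖a‖ < 1) (hw : ‖w‖ < 1) :
    discShift a (discShift (-a) w) = w := by
  have ha' : ‖-a‖ < 1 := by rwa [norm_neg]
  have hb := one_add_conj_mul_ne_zero ha (norm_discShift_lt_one ha' hw)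
  have hd := one_add_conj_mul_ne_zero ha' hw
  have hmul : discShift (-a) w * (1 + conj (-a) * w) = w + -a := div_mul_cancel₀ _ hd
  rw [map_neg] at hmul
  rw [discShift, div_eq_iff hb]
  linear_combination hmul

lemma norm_discShift_sub_le (ha : ‖a‖ < 1) (hw : ‖w‖ ≤ 1 / 32) :
    ‖discShift a w - a‖ ≤ (1 - ‖a‖) / 15 := by
  have hne := one_add_conj_mul_ne_zero ha (hw.trans_lt (by norm_num))
  have hsub : discShift a w - a = w * ((1 - ‖a‖ ^ 2 : ℝ) : ℂ) / (1 + conj a * w) := by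
    have : a * conj a = (‖a‖ : ℂ) ^ 2 := mul_conj' a
    rw [discShift, eq_div_iff hne, sub_mul, div_mul_cancel₀ _ hne]
    push_cast
    linear_combination -w * this
  have ha2 : 0 ≤ 1 - ‖a‖ ^ 2 := by nlinarith [norm_nonneg a]
  have hden : 31 / 32 ≤ ‖1 + conj a * w‖ := by
    have := norm_sub_le_norm_add (1 : ℂ) (conj a * w)
    rw [norm_mul, RCLike.norm_conj, norm_one] at this
    nlinarith [norm_nonneg w]
  have hnum : ‖w‖ * (1 - ‖a‖ ^ 2) ≤ 1 / 32 * (2 * (1 - ‖a‖)) :=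
    mul_le_mul hw (by nlinarith) ha2 (by norm_num)
  rw [hsub, norm_div, norm_mul, norm_real, Real.norm_of_nonneg ha2, div_le_iff₀ (by linarith)]
  nlinarith

/-- `HasHolomorphicSupport.le_exp` transported by the automorphism moving `0` to `a`. -/
lemma HasHolomorphicSupport.le_exp_poisson {φ : ℂ → ℝ} (h : HasHolomorphicSupport φ (ball 0 1))
    (h1 : ∀ z ∈ ball (0 : ℂ) 1, φ z ≤ 1) {M : ℝ} (ha : ‖a‖ < 1) (hM : 0 ≤ M)
    (hsmall : ∀ z ∈ ball (0 : ℂ) 1, ‖z - a‖ ≤ (1 - ‖a‖) / 15 → φ z ≤ Real.exp (-M)) {z : ℂ}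
    (hz : z ∈ ball (0 : ℂ) 1) :
    φ z ≤ Real.exp (-(M / 8 * ((1 - ‖a‖ ^ 2) * (1 - ‖z‖ ^ 2) / ‖1 - conj a * z‖ ^ 2))) := by
  have hz1 : ‖z‖ < 1 := mem_ball_zero_iff.1 hz
  have ha' : ‖-a‖ < 1 := by rwa [norm_neg]
  have hmaps : MapsTo (discShift a) (ball 0 1) (ball 0 1) := fun w hw =>
    mem_ball_zero_iff.2 (norm_discShift_lt_one ha (mem_ball_zero_iff.1 hw))
  have hexp : Real.exp (-4) ≤ 1 / 32 := by
    have he : Real.exp 4 = Real.exp 1 ^ 4 := by rw [← Real.exp_nat_mul]; norm_num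
    rw [Real.exp_neg, inv_eq_one_div, he]
    refine one_div_le_one_div_of_le (by norm_num) ?_
    calc (32 : ℝ) ≤ 2.7 ^ 4 := by norm_num
      _ ≤ Real.exp 1 ^ 4 := by gcongr; linarith [Real.exp_one_gt_d9]
  have hb1 : ‖discShift (-a) z‖ < 1 := norm_discShift_lt_one ha' hz1
  have main := (h.comp isOpen_ball (differentiableOn_discShift ha) hmaps).le_exp
    (fun w hw => h1 _ (hmaps hw)) (L := 4) (by norm_num) hM
    (fun w hw hwL => hsmall _ (hmaps hw) (norm_discShift_sub_le ha (hwL.trans hexp)))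
    (mem_ball_zero_iff.2 hb1)
  rw [discShift_discShift_neg ha hz1] at main
  have hpoisson := one_sub_norm_discShift_sq ha' hz1
  rw [norm_neg, map_neg, neg_mul, ← sub_eq_add_neg] at hpoisson
  refine main.trans (Real.exp_le_exp.2 ?_)
  rw [← hpoisson]
  have hb2 : 1 - ‖discShift (-a) z‖ ^ 2 ≤ 2 * (1 - ‖discShift (-a) z‖) := by
    nlinarith [sq_nonneg (1 - ‖discShift (-a) z‖)]
  nlinarith

end Moebius

section Cauchy

variable {E G : Type*} [NormedAddCommGroup E] [NormedSpace ℂ E] [NormedAddCommGroup G]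
  [NormedSpace ℂ G] {f : E → G} {c : E} {R C : ℝ} {U : Set E}

lemma norm_fderiv_le_of_norm_le_ball (hR : 0 < R) (hf : DifferentiableOn ℂ f (ball c R))
    (hC : ∀ z ∈ ball c R, ‖f z‖ ≤ C) : ‖fderiv ℂ f c‖ ≤ 2 * C / R := by
  refine norm_fderiv_le_div_of_mapsTo_ball hf (fun z hz => ?_) hR
  rw [mem_closedBall_iff_norm]
  linarith [norm_sub_le (f z) (f c), hC z hz, hC c (mem_ball_self hR)]

lemma norm_fderiv_le_of_norm_le_ball_of_mem_half (hR : 0 < R)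
    (hf : DifferentiableOn ℂ f (ball c R)) (hC : ∀ z ∈ ball c R, ‖f z‖ ≤ C) {y : E}
    (hy : y ∈ ball c (R / 2)) : ‖fderiv ℂ f y‖ ≤ 4 * C / R := by
  have hsub : ball y (R / 2) ⊆ ball c R := ball_subset_ball' (by linarith [mem_ball.1 hy])
  refine (norm_fderiv_le_of_norm_le_ball (half_pos hR) (hf.mono hsub)
    fun w hw => hC w (hsub hw)).trans_eq ?_
  field_simp
  ring

lemma norm_sub_le_of_norm_le_ball (hR : 0 < R) (hf : DifferentiableOn ℂ f (ball c R))
    (hC : ∀ z ∈ ball c R, ‖f z‖ ≤ C) {y z : E} (hy : y ∈ ball c (R / 2)) (hz : z ∈ ball c (R / 2)) :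
    ‖f z - f y‖ ≤ 4 * C / R * ‖z - y‖ :=
  (convex_ball c (R / 2)).norm_image_sub_le_of_norm_fderiv_le (𝕜 := ℂ)
    (fun _ hx => hf.differentiableAt
      (isOpen_ball.mem_nhds (ball_subset_ball (half_le_self hR.le) hx)))
    (fun _ hx => norm_fderiv_le_of_norm_le_ball_of_mem_half hR hf hC hx) hy hz

lemma norm_sub_sub_fderiv_le_of_norm_le_ball (hR : 0 < R) (hf : DifferentiableOn ℂ f (ball c R))
    (hC : ∀ z ∈ ball c R, ‖f z‖ ≤ C) {z : E} (hz : z ∈ ball c R) :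
    ‖f z - f c - fderiv ℂ f c (z - c)‖ ≤ 4 * C * (‖z - c‖ / R) ^ 2 := by
  have hfc := (hf.differentiableAt (ball_mem_nhds c hR)).hasFDerivAt
  have hlin : ∀ w ∈ ball c R, ‖fderiv ℂ f c (w - c)‖ ≤ 2 * C := fun w hw => by
    have hbd := norm_fderiv_le_of_norm_le_ball hR hf hC
    calc ‖fderiv ℂ f c (w - c)‖ ≤ ‖fderiv ℂ f c‖ * ‖w - c‖ := (fderiv ℂ f c).le_opNorm _
      _ ≤ 2 * C / R * R := mul_le_mul hbd (mem_ball_iff_norm.1 hw).le (norm_nonneg _)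
            ((norm_nonneg _).trans hbd)
      _ = 2 * C := by field_simp
  have main := dist_le_mul_div_pow_of_mapsTo_ball_of_isLittleO (n := 1) (R₂ := 4 * C) (z := z)
    (f := fun w => f w - fderiv ℂ f c (w - c)) (c := c) (R₁ := R)
    (hf.sub (by fun_prop)) (fun w hw => ?_) ?_ hz
  · simpa [dist_eq_norm, sub_right_comm] using main
  · rw [mem_closedBall_iff_norm]
    simp only [sub_self, map_zero, sub_zero, sub_right_comm _ _ (f c)]
    linarith [hC w hw, hC c (mem_ball_self hR), hlin w hw, norm_sub_le (f w) (f c),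
      norm_sub_le (f w - f c) (fderiv ℂ f c (w - c))]
  · simp only [sub_self, map_zero, sub_zero, pow_one]
    exact (hfc.isLittleO.congr_left fun w => sub_right_comm _ _ _).norm_right

lemma differentiableAt_of_tendstoUniformlyOn_ball [CompleteSpace G] {ι : Type*} {l : Filter ι}
    [l.NeBot] {g : ι → E → G} {h : E → G} (hR : 0 < R)
    (hg : ∀ᶠ i in l, DifferentiableOn ℂ (g i) (ball c R))
    (hlim : TendstoUniformlyOn g h l (ball c R)) : DifferentiableAt ℂ h c := by
  have hdiff : ∀ i, DifferentiableOn ℂ (g i) (ball c R) →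
      ∀ y ∈ ball c (R / 2), DifferentiableAt ℂ (g i) y := fun i hi y hy =>
    hi.differentiableAt (isOpen_ball.mem_nhds (ball_subset_ball (half_le_self hR.le) hy))
  have hcauchy : UniformCauchySeqOn (fun i y => fderiv ℂ (g i) y) l (ball c (R / 2)) := by
    intro u hu
    obtain ⟨ε, hε, hεu⟩ := Metric.mem_uniformity_dist.1 hu
    have : 0 < ε * R / 8 := by positivity
    filter_upwards [hlim.uniformCauchySeqOn _ (Metric.dist_mem_uniformity this), hg.prod_mk hg]
      with ⟨i, j⟩ hij ⟨hi, hj⟩ y hy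
    refine hεu ?_
    have hbd := norm_fderiv_le_of_norm_le_ball_of_mem_half hR (hi.sub hj)
      (fun z hz => ((dist_eq_norm (g i z) (g j z)).symm.trans_lt (hij z hz)).le) hy
    rw [fderiv_sub (hdiff i hi y hy) (hdiff j hj y hy)] at hbd
    rw [dist_eq_norm]
    refine hbd.trans_lt ?_
    rw [div_lt_iff₀ hR]
    linarith [mul_pos hε hR]
  have hlimit : ∀ y : E, ∃ T : E →L[ℂ] G, y ∈ ball c (R / 2) →
      Tendsto (fun i => fderiv ℂ (g i) y) l (𝓝 T) := fun y => by
    by_cases hy : y ∈ ball c (R / 2)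
    · exact (CompleteSpace.complete (hcauchy.cauchy_map hy)).imp fun T hT _ => hT
    · exact ⟨0, fun h => absurd h hy⟩
  choose T hT using hlimit
  have hunif := (hcauchy.tendstoUniformlyOn_of_tendsto fun y hy => hT y hy)
    |>.tendstoUniformlyOnFilter.mono_right (le_principal_iff.2 (ball_mem_nhds c (half_pos hR)))
  refine (hasFDerivAt_of_tendstoUniformlyOnFilter (f := g) hunif ?_ ?_).differentiableAt
  · filter_upwards [hg.prod_mk (ball_mem_nhds c (half_pos hR))] with ⟨i, y⟩ ⟨hi, hy⟩
    exact (hdiff i hi y hy).hasFDerivAt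
  · filter_upwards [ball_mem_nhds c hR] with y hy using hlim.tendsto_at hy

lemma tendstoUniformlyOn_slope_fderiv (hR : 0 < R) (hf : DifferentiableOn ℂ f (ball c R))
    (hC : ∀ z ∈ ball c R, ‖f z‖ ≤ C) (w : E) :
    TendstoUniformlyOn (fun (t : ℂ) y => t⁻¹ • (f (y + t • w) - f y)) (fun y => fderiv ℂ f y w)
      (𝓝[≠] 0) (ball c (R / 2)) := by
  rw [Metric.tendstoUniformlyOn_iff]
  intro ε hε
  have hstep : ∀ᶠ t : ℂ in 𝓝[≠] 0, ‖t • w‖ < R / 2 := by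
    have : Tendsto (fun t : ℂ => ‖t • w‖) (𝓝 0) (𝓝 ‖(0 : ℂ) • w‖) :=
      Continuous.tendsto (by fun_prop) 0
    rw [zero_smul, norm_zero] at this
    exact (this.mono_left nhdsWithin_le_nhds).eventually_lt_const (half_pos hR)
  have herr : ∀ᶠ t : ℂ in 𝓝[≠] 0, 4 * C * (‖w‖ / (R / 2)) ^ 2 * ‖t‖ < ε := by
    have : Tendsto (fun t : ℂ => 4 * C * (‖w‖ / (R / 2)) ^ 2 * ‖t‖) (𝓝 0)
        (𝓝 (4 * C * (‖w‖ / (R / 2)) ^ 2 * ‖(0 : ℂ)‖)) := Continuous.tendsto (by fun_prop) 0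
    rw [norm_zero, mul_zero] at this
    exact (this.mono_left nhdsWithin_le_nhds).eventually_lt_const hε
  filter_upwards [hstep, herr, self_mem_nhdsWithin] with t ht htε (ht0 : t ≠ 0) y hy
  have hsub : ball y (R / 2) ⊆ ball c R := ball_subset_ball' (by linarith [mem_ball.1 hy])
  have htaylor := norm_sub_sub_fderiv_le_of_norm_le_ball (half_pos hR) (hf.mono hsub)
    (fun z hz => hC z (hsub hz)) (z := y + t • w) (by rwa [mem_ball_iff_norm, add_sub_cancel_left])
  rw [add_sub_cancel_left, map_smul] at htaylor
  have hfactor : t⁻¹ • (f (y + t • w) - f y) - fderiv ℂ f y w =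
      t⁻¹ • (f (y + t • w) - f y - t • fderiv ℂ f y w) := by
    rw [smul_sub t⁻¹ (f _ - f _), inv_smul_smul₀ ht0]
  have : 0 < ‖t‖ := norm_pos_iff.2 ht0
  rw [dist_comm, dist_eq_norm, hfactor, norm_smul, norm_inv]
  calc ‖t‖⁻¹ * ‖f (y + t • w) - f y - t • fderiv ℂ f y w‖
      ≤ ‖t‖⁻¹ * (4 * C * (‖t • w‖ / (R / 2)) ^ 2) := by gcongr
    _ = 4 * C * (‖w‖ / (R / 2)) ^ 2 * ‖t‖ := by
        rw [norm_smul]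
        field_simp
    _ < ε := htε

lemma exists_ball_norm_le (hU : IsOpen U) (hf : DifferentiableOn ℂ f U) {x : E} (hx : x ∈ U) :
    ∃ R > 0, ball x R ⊆ U ∧ ∀ z ∈ ball x R, ‖f z‖ ≤ ‖f x‖ + 1 := by
  have hcont : ContinuousAt (fun z => ‖f z‖) x :=
    (hf.continuousOn.continuousAt (hU.mem_nhds hx)).norm
  obtain ⟨R, hR, hball⟩ := Metric.eventually_nhds_iff_ball.1
    ((hU.eventually_mem hx).and (hcont.eventually_lt_const (lt_add_one _)))
  exact ⟨R, hR, fun z hz => (hball z hz).1, fun z hz => (hball z hz).2.le⟩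

lemma differentiableOn_fderiv_apply [CompleteSpace G] (hU : IsOpen U) (hf : DifferentiableOn ℂ f U)
    (w : E) : DifferentiableOn ℂ (fun y => fderiv ℂ f y w) U := by
  intro x hx
  obtain ⟨R, hR, hsub, hC⟩ := exists_ball_norm_le hU hf hx
  refine (differentiableAt_of_tendstoUniformlyOn_ball (half_pos hR) ?_
    (tendstoUniformlyOn_slope_fderiv hR (hf.mono hsub) hC w)).differentiableWithinAt
  have hstep : ∀ᶠ t : ℂ in 𝓝[≠] 0, ‖t • w‖ < R / 2 := by
    have : Tendsto (fun t : ℂ => ‖t • w‖) (𝓝 0) (𝓝 ‖(0 : ℂ) • w‖) :=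
      Continuous.tendsto (by fun_prop) 0
    rw [zero_smul, norm_zero] at this
    exact (this.mono_left nhdsWithin_le_nhds).eventually_lt_const (half_pos hR)
  filter_upwards [hstep] with t ht y hy
  have hy' : ‖y - x‖ < R / 2 := mem_ball_iff_norm.1 hy
  have hyt : y + t • w ∈ ball x R := by
    rw [mem_ball_iff_norm, add_sub_right_comm]
    linarith [norm_add_le (y - x) (t • w)]
  have hyU : y ∈ U := hsub (ball_subset_ball (half_le_self hR.le) hy)
  have hd : DifferentiableAt ℂ (fun y => f (y + t • w)) y :=
    DifferentiableAt.comp (g := f) y (hf.differentiableAt (hU.mem_nhds (hsub hyt))) (by fun_prop)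
  exact ((hd.sub (hf.differentiableAt (hU.mem_nhds hyU))).const_smul t⁻¹).differentiableWithinAt

lemma norm_fderiv_sub_fderiv_le [CompleteSpace G] (hR : 0 < R)
    (hf : DifferentiableOn ℂ f (ball c R)) (hC : ∀ z ∈ ball c R, ‖f z‖ ≤ C) {y z : E}
    (hy : y ∈ ball c (R / 4)) (hz : z ∈ ball c (R / 4)) :
    ‖fderiv ℂ f z - fderiv ℂ f y‖ ≤ 32 * C / R ^ 2 * ‖z - y‖ := by
  have hC0 : 0 ≤ C := (norm_nonneg _).trans (hC c (mem_ball_self hR))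
  rw [show R / 4 = R / 2 / 2 by ring] at hy hz
  refine ContinuousLinearMap.opNorm_le_bound _ (by positivity) fun w => ?_
  refine (norm_sub_le_of_norm_le_ball (half_pos hR) (C := 4 * C / R * ‖w‖)
    ((differentiableOn_fderiv_apply isOpen_ball hf w).mono (ball_subset_ball (half_le_self hR.le)))
    (fun x hx => (fderiv ℂ f x).le_of_opNorm_le
      (norm_fderiv_le_of_norm_le_ball_of_mem_half hR hf hC hx) w) hy hz).trans_eq ?_
  field_simp
  ring

end Cauchy

section ExpSmall

variable {X : Type*} [PseudoMetricSpace X] {f : ℕ → X → ℂ} {K : ℕ → ℝ}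

/-- Near `x` the functions `f j` are at most `exp (-a K j)` for some `a > 0` and all large `j`. -/
def IsExpSmallAt (f : ℕ → X → ℂ) (K : ℕ → ℝ) (x : X) : Prop :=
  ∃ r > 0, ∃ a > 0, ∀ᶠ j in atTop, ∀ z ∈ ball x r, ‖f j z‖ ≤ Real.exp (-(a * K j))

lemma isOpen_setOf_isExpSmallAt : IsOpen {x | IsExpSmallAt f K x} := by
  rw [Metric.isOpen_iff]
  rintro x ⟨r, hr, a, ha, h⟩
  refine ⟨r / 2, half_pos hr, fun y hy => ⟨r / 2, half_pos hr, a, ha, ?_⟩⟩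
  filter_upwards [h] with j hj z hz
  exact hj z (ball_subset_ball' (by linarith [mem_ball.1 hy]) hz)

end ExpSmall

section Propagation

variable {E G : Type*} [NormedAddCommGroup E] [NormedSpace ℂ E] [NormedAddCommGroup G]
  [NormedSpace ℂ G] {Ω : Set E}

lemma eq_zero_of_eventually_eq_zero [CompleteSpace G] (hΩo : IsOpen Ω) (hΩc : IsPreconnected Ω)
    {f : E → G} (hf : DifferentiableOn ℂ f Ω) {x₀ : E} (hx₀ : x₀ ∈ Ω)
    (h₀ : ∀ᶠ x in 𝓝 x₀, f x = 0) {x : E} (hx : x ∈ Ω) : f x = 0 := by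
  suffices hsub : Ω ⊆ {x | ∀ᶠ y in 𝓝 x, f y = 0} from (hsub hx).self_of_nhds
  refine hΩc.subset_of_closure_inter_subset isOpen_setOfPred_eventually_nhds ⟨x₀, hx₀, h₀⟩ ?_
  rintro x ⟨hxcl, hxΩ⟩
  obtain ⟨R, hR, hRΩ⟩ := Metric.isOpen_iff.1 hΩo x hxΩ
  obtain ⟨y, hy, hyx⟩ := Metric.mem_closure_iff.1 hxcl (R / 4) (by positivity)
  filter_upwards [ball_mem_nhds x (by positivity : 0 < R / 4)] with z hz
  set line : ℂ → E := fun ζ => y + ζ • (z - y) with hline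
  have hcont : Continuous line := by fun_prop
  have hmaps : MapsTo line (ball 0 (3 / 2)) Ω := fun ζ hζ => hRΩ <| by
    have : ‖ζ‖ < 3 / 2 := mem_ball_zero_iff.1 hζ
    have hzy : ‖z - y‖ < R / 2 := by
      rw [← dist_eq_norm]
      linarith [dist_triangle z x y, mem_ball.1 hz]
    have hdist : dist (line ζ) y ≤ 3 / 2 * ‖z - y‖ := by
      rw [hline, dist_eq_norm, add_sub_cancel_left, norm_smul]
      gcongr
    rw [dist_comm] at hyx
    rw [mem_ball]
    linarith [dist_triangle (line ζ) y x]
  have hanal : AnalyticOnNhd ℂ (f ∘ line) (ball 0 (3 / 2)) :=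
    (hf.comp (by fun_prop) hmaps).analyticOnNhd isOpen_ball
  have hy0 : line 0 = y := by simp [hline]
  have hzero := hanal.eqOn_zero_of_preconnected_of_eventuallyEq_zero
    (convex_ball (0 : ℂ) (3 / 2)).isPreconnected (mem_ball_self (by norm_num))
    (hcont.continuousAt.tendsto.eventually (p := fun y => f y = 0) (by rwa [hy0]))
    (by norm_num : (1 : ℂ) ∈ ball 0 (3 / 2))
  simpa [hline] using hzero

/-- The two-circles estimate on the complex line through the centre `y` of the small ball. -/
lemma HasHolomorphicSupport.le_exp_of_le_on_ball {φ : E → ℝ} {x y z : E} {r R L M : ℝ}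
    (h : HasHolomorphicSupport φ (ball x R)) (h1 : ∀ z ∈ ball x R, φ z ≤ 1) (hL : 1 ≤ L)
    (hM : 0 ≤ M) (hr : R * Real.exp (-L) ≤ r) (hy : y ∈ ball x (R / 4))
    (hsmall : ∀ z ∈ ball y r, φ z ≤ Real.exp (-M)) (hz : z ∈ ball x (R / 4)) :
    φ z ≤ Real.exp (-(M / (5 * L))) := by
  have hR : 0 < R := by linarith [(dist_nonneg (x := y) (y := x)).trans_lt hy]
  set v : E := (5 / 4 : ℂ) • (z - y) with hv
  have hvn : ‖v‖ ≤ 5 / 8 * R := by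
    have hzy : ‖z - y‖ ≤ R / 2 := by
      rw [← dist_eq_norm]
      linarith [dist_triangle_right z y x, mem_ball.1 hy, mem_ball.1 hz]
    rw [hv, norm_smul]
    norm_num
    linarith
  have hmaps : MapsTo (fun ζ : ℂ => y + ζ • v) (ball 0 1) (ball x R) := fun ζ hζ => by
    have : ‖ζ‖ < 1 := mem_ball_zero_iff.1 hζ
    have hdist : dist (y + ζ • v) y ≤ 5 / 8 * R := by
      rw [dist_eq_norm, add_sub_cancel_left, norm_smul]
      nlinarith [norm_nonneg v]
    rw [mem_ball]
    linarith [dist_triangle (y + ζ • v) y x, mem_ball.1 hy]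
  have main := (h.comp isOpen_ball (by fun_prop) hmaps).le_exp (fun ζ hζ => h1 _ (hmaps hζ)) hL hM
    (fun ζ _ hζL => hsmall _ <| by
      rw [mem_ball_iff_norm, add_sub_cancel_left, norm_smul]
      calc ‖ζ‖ * ‖v‖ ≤ Real.exp (-L) * (5 / 8 * R) := by gcongr
        _ < R * Real.exp (-L) := by nlinarith [mul_pos hR (Real.exp_pos (-L))]
        _ ≤ r := hr)
    (z := (4 / 5 : ℂ)) (by simp; norm_num)
  have hyz : y + (4 / 5 : ℂ) • v = z := by
    rw [hv, smul_smul]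
    norm_num
  have h45 : ‖(4 / 5 : ℂ)‖ = 4 / 5 := by norm_num
  rw [hyz, h45] at main
  exact main.trans_eq (by congr 2; field_simp; norm_num)

variable {f : ℕ → E → ℂ} {K : ℕ → ℝ}

lemma IsExpSmallAt.of_mem_ball (hK : Tendsto K atTop atTop) {x y : E} {R C : ℝ}
    (hf : ∀ j, DifferentiableOn ℂ (f j) (ball x R)) (hC : ∀ j, ∀ z ∈ ball x R, ‖f j z‖ ≤ C)
    (hyx : y ∈ ball x (R / 4)) (hy : IsExpSmallAt f K y) : IsExpSmallAt f K x := by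
  obtain ⟨r, hr, a, ha, hsm⟩ := hy
  have hR : 0 < R := by linarith [(dist_nonneg (x := y) (y := x)).trans_lt hyx]
  set D := max C 1
  have hD1 : 1 ≤ D := le_max_right _ _
  have hD0 : 0 < D := zero_lt_one.trans_le hD1
  set L := max 1 (Real.log (R / r))
  have hL1 : 1 ≤ L := le_max_left _ _
  have hLr : R * Real.exp (-L) ≤ r := by
    have : R / r ≤ Real.exp L := (Real.log_le_iff_le_exp (by positivity)).1 (le_max_right _ _)
    rw [div_le_iff₀ hr] at this
    rw [Real.exp_neg, ← div_eq_mul_inv, div_le_iff₀ (Real.exp_pos L)]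
    linarith
  refine ⟨R / 4, by positivity, a / (10 * L), by positivity, ?_⟩
  filter_upwards [hsm, (hK.const_mul_atTop (by positivity : 0 < a / (10 * L))).eventually_ge_atTop
    (Real.log D), hK.eventually_ge_atTop 0] with j hj hlog hKj z hz
  have hnorm : ∀ z, ‖f j z * (D : ℂ)⁻¹‖ = ‖f j z‖ / D := fun z => by
    rw [norm_mul, norm_inv, norm_real, Real.norm_of_nonneg hD0.le, div_eq_mul_inv]
  have main := (hasHolomorphicSupport_norm isOpen_ball
    ((hf j).mul_const (D : ℂ)⁻¹)).le_exp_of_le_on_ball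
    (fun w hw => by
      rw [hnorm, div_le_one hD0]
      exact (hC j w hw).trans (le_max_left _ _)) hL1 (mul_nonneg ha.le hKj) hLr hyx
    (fun w hw => by
      rw [hnorm]
      exact (div_le_self (norm_nonneg _) hD1).trans (hj w hw)) hz
  rw [hnorm, div_le_iff₀ hD0] at main
  calc ‖f j z‖ ≤ Real.exp (-(a * K j / (5 * L))) * D := main
    _ = Real.exp (-(a * K j / (5 * L)) + Real.log D) := by rw [Real.exp_add, Real.exp_log hD0]
    _ ≤ Real.exp (-(a / (10 * L) * K j)) := by
        have : a * K j / (5 * L) = 2 * (a / (10 * L) * K j) := by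
          field_simp
          ring
        exact Real.exp_le_exp.2 (by linarith)

lemma IsExpSmallAt.of_isPreconnected (hΩo : IsOpen Ω) (hΩc : IsPreconnected Ω)
    (hK : Tendsto K atTop atTop) (hf : ∀ j, DifferentiableOn ℂ (f j) Ω)
    (hbd : ∀ x ∈ Ω, ∃ r > 0, ∃ C, ∀ j, ∀ z ∈ ball x r, ‖f j z‖ ≤ C) {x₀ : E} (hx₀ : x₀ ∈ Ω)
    (h₀ : IsExpSmallAt f K x₀) {x : E} (hx : x ∈ Ω) : IsExpSmallAt f K x := by
  refine hΩc.subset_of_closure_inter_subset isOpen_setOf_isExpSmallAt ⟨x₀, hx₀, h₀⟩ ?_ hx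
  rintro x ⟨hxcl, hxΩ⟩
  obtain ⟨r₁, hr₁, hr₁Ω⟩ := Metric.isOpen_iff.1 hΩo x hxΩ
  obtain ⟨r₂, hr₂, C, hC⟩ := hbd x hxΩ
  have : 0 < min r₁ r₂ := lt_min hr₁ hr₂
  obtain ⟨y, hy, hyx⟩ := Metric.mem_closure_iff.1 hxcl (min r₁ r₂ / 4) (by positivity)
  exact hy.of_mem_ball hK
    (fun j => (hf j).mono ((ball_subset_ball (min_le_left _ _)).trans hr₁Ω))
    (fun j z hz => hC j z (ball_subset_ball (min_le_right _ _) hz)) (mem_ball'.2 hyx)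

end Propagation

section LinearAlgebra

lemma eq_zero_of_forall_nat_mul_le {x D : ℝ} (hx : 0 ≤ x) (h : ∀ k : ℕ, k * x ≤ D) : x = 0 := by
  refine hx.eq_of_not_lt' fun hpos => ?_
  obtain ⟨k, hk⟩ := exists_nat_gt (D / x)
  rw [div_lt_iff₀ hpos] at hk
  exact hk.not_ge (h k)

lemma norm_multiset_prod_le_one {s : Multiset ℂ} (hs : ∀ z ∈ s, ‖z‖ ≤ 1) : ‖s.prod‖ ≤ 1 :=
  s.prod_induction (‖·‖ ≤ 1)
    (fun a b ha hb => by rw [norm_mul]; exact mul_le_one₀ ha (norm_nonneg b) hb) (by simp) hs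

lemma exists_dual_apply_apply_eq_mul {𝕜 V : Type*} [Field 𝕜] [AddCommGroup V] [Module 𝕜 V]
    [FiniteDimensional 𝕜 V] {T : Module.End 𝕜 V} {μ : 𝕜} (hμ : T.HasEigenvalue μ) :
    ∃ ℓ : Module.Dual 𝕜 V, ℓ ≠ 0 ∧ ∀ x, ℓ (T x) = μ * ℓ x := by
  set S : Module.End 𝕜 V := T - algebraMap 𝕜 (Module.End 𝕜 V) μ
  have hrange : LinearMap.range S < ⊤ := by
    rw [lt_top_iff_ne_top]
    exact fun htop => Module.End.hasEigenvalue_iff.1 hμ <|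
      (Module.End.eigenspace_def).trans (LinearMap.ker_eq_bot_iff_range_eq_top.2 htop)
  obtain ⟨ℓ, hℓ0, hℓ⟩ := Submodule.exists_le_ker_of_lt_top _ hrange
  refine ⟨ℓ, hℓ0, fun x => ?_⟩
  have hx : ℓ (S x) = 0 := hℓ ⟨x, rfl⟩
  simpa [S, sub_eq_zero] using hx

variable {E : Type*} [NormedAddCommGroup E] [NormedSpace ℂ E] {A : E →L[ℂ] E} {C : ℝ}

lemma norm_le_one_of_hasEigenvalue_of_norm_pow_le (hA : ∀ k : ℕ, ‖A ^ k‖ ≤ C) {μ : ℂ}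
    (hμ : Module.End.HasEigenvalue (A : E →ₗ[ℂ] E) μ) : ‖μ‖ ≤ 1 := by
  obtain ⟨v, hv⟩ := hμ.exists_hasEigenvector
  have hpow (k : ℕ) : (A ^ k) v = μ ^ k • v := by
    rw [← hv.pow_apply k, ← ContinuousLinearMap.toLinearMap_pow, ContinuousLinearMap.coe_coe]
  by_contra! hlt
  obtain ⟨k, hk⟩ := ((tendsto_pow_atTop_atTop_of_one_lt hlt).eventually_gt_atTop C).exists
  have hle := (A ^ k).le_of_opNorm_le (hA k) v
  rw [hpow, norm_smul, norm_pow] at hle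
  exact hk.not_ge (le_of_mul_le_mul_right hle (norm_pos_iff.2 hv.2))

lemma apply_eq_self_of_sub_apply_sub_eq_zero (hA : ∀ k : ℕ, ‖A ^ k‖ ≤ C) {x : E}
    (hx : (A - 1) ((A - 1) x) = 0) : (A - 1) x = 0 := by
  have hpow (k : ℕ) : (A ^ k) x = x + (k : ℂ) • (A - 1) x := by
    induction k with
    | zero => simp
    | succ k ih =>
      have hAN (y : E) : A y = y + (A - 1) y := by simp
      rw [pow_succ', mul_apply_eq_comp, ih, hAN, map_add, map_smul, hx]
      push_cast
      module
  refine norm_eq_zero.1 (eq_zero_of_forall_nat_mul_le (D := C * ‖x‖ + ‖x‖) (norm_nonneg _)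
    fun k => ?_)
  calc (k : ℝ) * ‖(A - 1) x‖ = ‖(A ^ k) x - x‖ := by rw [hpow, add_sub_cancel_left, norm_smul]; simp
    _ ≤ ‖(A ^ k) x‖ + ‖x‖ := norm_sub_le _ _
    _ ≤ C * ‖x‖ + ‖x‖ := by gcongr; exact (A ^ k).le_of_opNorm_le (hA k) x

lemma eq_one_of_isNilpotent_sub_one (hA : ∀ k : ℕ, ‖A ^ k‖ ≤ C) (hnil : IsNilpotent (A - 1)) :
    A = 1 := by
  have hdown (k : ℕ) (x : E) (hx : ((A - 1) ^ (k + 1)) x = 0) : (A - 1) x = 0 := by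
    induction k generalizing x with
    | zero => simpa using hx
    | succ k ih =>
      refine apply_eq_self_of_sub_apply_sub_eq_zero hA (ih _ ?_)
      rwa [← mul_apply_eq_comp, ← pow_succ]
  obtain ⟨k, hk⟩ := hnil
  refine sub_eq_zero.1 (ContinuousLinearMap.ext fun x => hdown k x ?_)
  rw [pow_succ, hk, zero_mul, zero_apply]

variable [FiniteDimensional ℂ E]

lemma norm_eq_one_of_mem_roots_charpoly (hA : ∀ k : ℕ, ‖A ^ k‖ ≤ C)
    (hdet : 1 ≤ ‖A.det‖) {μ : ℂ}
    (hμ : μ ∈ (A : E →ₗ[ℂ] E).charpoly.roots) : ‖μ‖ = 1 := by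
  have hle : ∀ ν ∈ (A : E →ₗ[ℂ] E).charpoly.roots, ‖ν‖ ≤ 1 := fun ν hν =>
    norm_le_one_of_hasEigenvalue_of_norm_pow_le hA <|
      (Module.End.hasEigenvalue_iff_isRoot_charpoly _ ν).2 (Polynomial.isRoot_of_mem_roots hν)
  obtain ⟨s, hs⟩ := Multiset.exists_cons_of_mem hμ
  rw [ContinuousLinearMap.det,
    Module.End.det_eq_prod_roots_charpoly_of_splits (IsAlgClosed.splits _), hs,
    Multiset.prod_cons, norm_mul] at hdet
  have hprod : ‖s.prod‖ ≤ 1 :=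
    norm_multiset_prod_le_one fun ν hν => hle ν (hs ▸ Multiset.mem_cons_of_mem hν)
  exact (hle μ hμ).antisymm (hdet.trans (mul_le_of_le_one_right (norm_nonneg μ) hprod))

lemma isNilpotent_sub_one_of_forall_mem_roots_charpoly
    (h : ∀ μ ∈ (A : E →ₗ[ℂ] E).charpoly.roots, μ = 1) : IsNilpotent (A - 1) := by
  set T : Module.End ℂ E := (A : E →ₗ[ℂ] E)
  have hT : (T - 1) ^ Multiset.card T.charpoly.roots = 0 := by
    have := LinearMap.aeval_self_charpoly T
    rw [(IsAlgClosed.splits T.charpoly).eq_prod_roots_of_monic (LinearMap.charpoly_monic T),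
      Multiset.eq_replicate_card.2 h] at this
    simpa using this
  refine ⟨Multiset.card T.charpoly.roots, ContinuousLinearMap.coe_injective ?_⟩
  rwa [ContinuousLinearMap.toLinearMap_pow]

lemma det_lt_one_or_eq_one_or_exists_unimodular_of_norm_pow_le (hA : ∀ k : ℕ, ‖A ^ k‖ ≤ C) :
    ‖A.det‖ < 1 ∨ A = 1 ∨
      ∃ μ : ℂ, ‖μ‖ = 1 ∧ μ ≠ 1 ∧ ∃ ℓ : E →L[ℂ] ℂ, ℓ ≠ 0 ∧ ∀ x, ℓ (A x) = μ * ℓ x := by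
  refine or_iff_not_imp_left.2 fun hdet => ?_
  rw [not_lt] at hdet
  by_cases h : ∀ μ ∈ (A : E →ₗ[ℂ] E).charpoly.roots, μ = 1
  · exact .inl (eq_one_of_isNilpotent_sub_one hA
      (isNilpotent_sub_one_of_forall_mem_roots_charpoly h))
  · push Not at h
    obtain ⟨μ, hμ, hμ1⟩ := h
    obtain ⟨ℓ, hℓ0, hℓ⟩ := exists_dual_apply_apply_eq_mul <|
      (Module.End.hasEigenvalue_iff_isRoot_charpoly _ μ).2 (Polynomial.isRoot_of_mem_roots hμ)
    refine .inr ⟨μ, norm_eq_one_of_mem_roots_charpoly hA hdet hμ, hμ1,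
      LinearMap.toContinuousLinearMap ℓ, ?_, hℓ⟩
    simpa using hℓ0

end LinearAlgebra

section SelfMap

variable {E : Type*} [NormedAddCommGroup E] [NormedSpace ℂ E] {Ω : Set E} {F : E → E} {C : ℝ}
  {q : E}

/-- `F` is a holomorphic map of the open set `Ω` into itself; its values outside `Ω` are
irrelevant. -/
structure IsHolomorphicSelfMap (F : E → E) (Ω : Set E) : Prop where
  differentiableOn : DifferentiableOn ℂ F Ω
  mapsTo : MapsTo F Ω Ω

lemma IsHolomorphicSelfMap.iterate (hF : IsHolomorphicSelfMap F Ω) (k : ℕ) :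
    IsHolomorphicSelfMap F^[k] Ω where
  differentiableOn := by
    induction k with
    | zero => exact differentiableOn_id
    | succ k ih => rw [iterate_succ]; exact ih.comp hF.differentiableOn hF.mapsTo
  mapsTo := hF.mapsTo.iterate k

lemma IsHolomorphicSelfMap.fderiv_iterate (hF : IsHolomorphicSelfMap F Ω) (hΩ : IsOpen Ω)
    (hq : q ∈ Ω) (hfix : F q = q) (k : ℕ) : fderiv ℂ F^[k] q = fderiv ℂ F q ^ k :=
  ((hF.differentiableOn.differentiableAt (hΩ.mem_nhds hq)).hasFDerivAt.iterate hfix k).fderiv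

lemma IsHolomorphicSelfMap.exists_forall_norm_iterate_sub_le [CompleteSpace E]
    (hF : IsHolomorphicSelfMap F Ω) (hΩ : IsOpen Ω) (hC : ∀ x ∈ Ω, ‖x‖ ≤ C) (hq : q ∈ Ω)
    (hfix : F q = q) (hA : fderiv ℂ F q = 1) :
    ∃ δ > 0, ∀ k, ∀ x ∈ ball q δ, ∀ y ∈ ball q δ,
      ‖F^[k] y - F^[k] x - (y - x)‖ ≤ 1 / 2 * ‖y - x‖ := by
  obtain ⟨R, hR, hRΩ⟩ := Metric.isOpen_iff.1 hΩ q hq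
  have hC0 : 0 ≤ C := (norm_nonneg q).trans (hC q hq)
  refine ⟨min (R / 4) (R ^ 2 / (64 * (C + 1))), by positivity, fun k x hx y hy => ?_⟩
  have hFk := hF.iterate k
  have hd : DifferentiableOn ℂ F^[k] (ball q R) := hFk.differentiableOn.mono hRΩ
  have hquarter {z : E} (hz : z ∈ ball q (min (R / 4) (R ^ 2 / (64 * (C + 1))))) :
      z ∈ ball q (R / 4) := ball_subset_ball (min_le_left _ _) hz
  refine (convex_ball q _).norm_image_sub_le_of_norm_fderiv_le' (𝕜 := ℂ) (φ := 1)
    (fun z hz => hd.differentiableAt (isOpen_ball.mem_nhds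
      (ball_subset_ball (by linarith) (hquarter hz)))) (fun z hz => ?_) hx hy
  have hz' : ‖z - q‖ ≤ R ^ 2 / (64 * (C + 1)) :=
    (mem_ball_iff_norm.1 hz).le.trans (min_le_right _ _)
  calc ‖fderiv ℂ F^[k] z - 1‖ = ‖fderiv ℂ F^[k] z - fderiv ℂ F^[k] q‖ := by
        rw [hF.fderiv_iterate hΩ hq hfix, hA, one_pow]
    _ ≤ 32 * C / R ^ 2 * ‖z - q‖ := norm_fderiv_sub_fderiv_le hR hd
        (fun w hw => hC _ (hFk.mapsTo (hRΩ hw))) (mem_ball_self (by linarith)) (hquarter hz)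
    _ ≤ 32 * C / R ^ 2 * (R ^ 2 / (64 * (C + 1))) := by gcongr
    _ = C / (C + 1) / 2 := by field_simp; ring
    _ ≤ 1 / 2 := by
      gcongr
      exact div_le_one_of_le₀ (by linarith) (by linarith)

lemma norm_iterate_sub_sub_smul_le {s : Set E} {x : E} (hx : x ∈ s) (hFx : F x ∈ s)
    (hs : ∀ k, ∀ x ∈ s, ∀ y ∈ s, ‖F^[k] y - F^[k] x - (y - x)‖ ≤ 1 / 2 * ‖y - x‖) (k : ℕ) :
    ‖F^[k] x - x - (k : ℂ) • (F x - x)‖ ≤ k * (1 / 2 * ‖F x - x‖) := by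
  induction k with
  | zero => simp
  | succ k ih =>
    rw [iterate_succ_apply]
    calc ‖F^[k] (F x) - x - ((k + 1 : ℕ) : ℂ) • (F x - x)‖
        = ‖(F^[k] (F x) - F^[k] x - (F x - x)) + (F^[k] x - x - (k : ℂ) • (F x - x))‖ := by
          congr 1; push_cast; module
      _ ≤ 1 / 2 * ‖F x - x‖ + k * (1 / 2 * ‖F x - x‖) :=
          norm_add_le_of_le (hs k x hx _ hFx) ih
      _ = _ := by push_cast; ring

/-- If `F x ≠ x`, the orbit of `x` would drift away linearly, contradicting boundedness. -/
lemma IsHolomorphicSelfMap.eventually_eq_self [CompleteSpace E]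
    (hF : IsHolomorphicSelfMap F Ω) (hΩ : IsOpen Ω) (hC : ∀ x ∈ Ω, ‖x‖ ≤ C) (hq : q ∈ Ω)
    (hfix : F q = q) (hA : fderiv ℂ F q = 1) : ∀ᶠ x in 𝓝 q, F x = x := by
  obtain ⟨δ, hδ, hlip⟩ := hF.exists_forall_norm_iterate_sub_le hΩ hC hq hfix hA
  have hcont : Tendsto F (𝓝 q) (𝓝 q) := by
    simpa [ContinuousAt, hfix] using
      hF.differentiableOn.continuousOn.continuousAt (hΩ.mem_nhds hq)
  filter_upwards [hcont (ball_mem_nhds q hδ), ball_mem_nhds q hδ, hΩ.mem_nhds hq]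
    with x hFx hx hxΩ
  have hdrift := norm_iterate_sub_sub_smul_le hx hFx hlip
  have hzero : 1 / 2 * ‖F x - x‖ = 0 := by
    refine eq_zero_of_forall_nat_mul_le (D := 2 * C) (by positivity) fun k => ?_
    have hk : ‖(k : ℂ) • (F x - x)‖ = k * ‖F x - x‖ := by rw [norm_smul]; simp
    have hsub := norm_sub_le_norm_sub_add_norm_sub ((k : ℂ) • (F x - x)) (F^[k] x - x) 0
    have hbd := norm_sub_le (F^[k] x) x
    have := hdrift k
    rw [norm_sub_rev] at this
    rw [sub_zero, sub_zero, hk] at hsub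
    linarith [hC _ (hF.mapsTo.iterate k hxΩ), hC x hxΩ]
  rw [← sub_eq_zero, ← norm_eq_zero]
  linarith

end SelfMap

section BallPoisson

open scoped ComplexConjugate

variable {E : Type*} [NormedAddCommGroup E] [InnerProductSpace ℂ E] {φ : E → ℝ} {x y : E} {M : ℝ}

lemma HasHolomorphicSupport.le_exp_of_le_one_sub_sq {φ : ℂ → ℝ} {a z : ℂ} {s : ℝ}
    (h : HasHolomorphicSupport φ (ball 0 1)) (h1 : ∀ w ∈ ball (0 : ℂ) 1, φ w ≤ 1) (hM : 0 ≤ M)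
    (ha : ‖a‖ < 1) (hsa : s ≤ 1 - ‖a‖ ^ 2) (hz : 16 / 25 ≤ 1 - ‖z‖ ^ 2)
    (hsmall : ∀ w ∈ ball (0 : ℂ) 1, ‖w - a‖ ≤ (1 - ‖a‖) / 15 → φ w ≤ Real.exp (-M)) :
    φ z ≤ Real.exp (-(M / 50 * s)) := by
  have hz1 : ‖z‖ < 1 := by nlinarith [norm_nonneg z]
  have ha2 : 0 ≤ 1 - ‖a‖ ^ 2 := by nlinarith [norm_nonneg a]
  have hden0 : 0 < ‖1 - conj a * z‖ := by
    simpa [sub_eq_add_neg] using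
      norm_pos_iff.2 (one_add_conj_mul_ne_zero (a := -a) (by rwa [norm_neg]) hz1)
  have hden : ‖1 - conj a * z‖ ≤ 2 := by
    refine (norm_sub_le _ _).trans ?_
    rw [norm_one, norm_mul, RCLike.norm_conj]
    nlinarith [norm_nonneg a, norm_nonneg z]
  refine (h.le_exp_poisson h1 ha hM hsmall (mem_ball_zero_iff.2 hz1)).trans
    (Real.exp_le_exp.2 (neg_le_neg ?_))
  calc M / 50 * s ≤ M / 50 * (1 - ‖a‖ ^ 2) := by gcongr
    _ = M / 8 * ((1 - ‖a‖ ^ 2) * (16 / 25) / 2 ^ 2) := by ring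
    _ ≤ M / 8 * ((1 - ‖a‖ ^ 2) * (1 - ‖z‖ ^ 2) / ‖1 - conj a * z‖ ^ 2) := by gcongr

lemma exists_orthogonal_line (hxy : x ≠ y) :
    ∃ (P e : E) (α β : ℂ), ‖e‖ = 1 ∧ inner ℂ P e = 0 ∧ P + α • e = x ∧ P + β • e = y := by
  have hne : (‖x - y‖ : ℂ) ≠ 0 := by exact_mod_cast norm_ne_zero_iff.2 (sub_ne_zero.2 hxy)
  set e : E := (‖x - y‖ : ℂ)⁻¹ • (x - y)
  have he : ‖e‖ = 1 := norm_smul_inv_norm (sub_ne_zero.2 hxy)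
  refine ⟨y - inner ℂ e y • e, e, inner ℂ e y + ‖x - y‖, inner ℂ e y, he, ?_, ?_, by abel⟩
  · rw [inner_sub_left, inner_smul_left, inner_conj_symm, inner_self_eq_norm_sq_to_K, he]
    simp
  · rw [add_smul, smul_inv_smul₀ hne]
    abel

lemma exists_chord (hx : ‖x‖ < 1) (hxy : x ≠ y) :
    ∃ (P e : E) (ρ : ℝ) (ξ η : ℂ), ‖e‖ = 1 ∧ 0 < ρ ∧ P + (ρ * ξ) • e = x ∧ P + (ρ * η) • e = y ∧
      ∀ ζ : ℂ, 1 - ‖P + (ρ * ζ) • e‖ ^ 2 = ρ ^ 2 * (1 - ‖ζ‖ ^ 2) := by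
  obtain ⟨P, e, α, β, he, hPe, rfl, rfl⟩ := exists_orthogonal_line hxy
  have hnorm (ζ : ℂ) : ‖P + ζ • e‖ ^ 2 = ‖P‖ ^ 2 + ‖ζ‖ ^ 2 := by
    have h := norm_add_sq_eq_norm_sq_add_norm_sq_of_inner_eq_zero (𝕜 := ℂ) P (ζ • e)
      (by rw [inner_smul_right, hPe, mul_zero])
    rw [norm_smul, he, mul_one] at h
    linarith
  have hP : 0 < 1 - ‖P‖ ^ 2 := by
    nlinarith [hnorm α, norm_nonneg (P + α • e), sq_nonneg ‖α‖]
  have hρ : ((√(1 - ‖P‖ ^ 2) : ℝ) : ℂ) ≠ 0 := by exact_mod_cast (Real.sqrt_pos.2 hP).ne'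
  refine ⟨P, e, √(1 - ‖P‖ ^ 2), α / √(1 - ‖P‖ ^ 2), β / √(1 - ‖P‖ ^ 2), he, Real.sqrt_pos.2 hP,
    by rw [mul_div_cancel₀ _ hρ], by rw [mul_div_cancel₀ _ hρ], fun ζ => ?_⟩
  rw [hnorm, norm_mul, norm_real, Real.norm_of_nonneg (Real.sqrt_nonneg _), mul_pow,
    Real.sq_sqrt hP.le]
  ring

/-- The one-variable estimate on the intersection of the ball with the line through `x` and `y`. -/
lemma HasHolomorphicSupport.le_exp_of_mem_unit_ball (h : HasHolomorphicSupport φ (ball 0 1))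
    (h1 : ∀ z ∈ ball (0 : E) 1, φ z ≤ 1) (hM : 0 ≤ M) (hy : ‖y‖ < 1)
    (hsmall : ∀ z ∈ ball (0 : E) 1, ‖z - y‖ ≤ (1 - ‖y‖) / 6 → φ z ≤ Real.exp (-M))
    (hx : ‖x‖ ≤ 3 / 5) : φ x ≤ Real.exp (-(M / 50 * (1 - ‖y‖))) := by
  rcases eq_or_ne x y with rfl | hxy
  · refine (hsmall x (mem_ball_zero_iff.2 hy) (by simp; linarith)).trans (Real.exp_le_exp.2 ?_)
    nlinarith [norm_nonneg x]
  obtain ⟨P, e, ρ, ξ, η, he, hρ, rfl, rfl, hsq⟩ := exists_chord (hx.trans_lt (by norm_num)) hxy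
  set γ : ℂ → E := fun ζ => P + ((ρ : ℂ) * ζ) • e
  have hγ0 (ζ : ℂ) : 0 ≤ ‖γ ζ‖ := norm_nonneg _
  have hγ : MapsTo γ (ball 0 1) (ball 0 1) := fun ζ hζ => by
    have : 0 < ρ ^ 2 * (1 - ‖ζ‖ ^ 2) :=
      mul_pos (by positivity) (by nlinarith [norm_nonneg ζ, mem_ball_zero_iff.1 hζ])
    rw [mem_ball_zero_iff]
    nlinarith [hsq ζ, hγ0 ζ]
  have hρ1 : ρ ^ 2 ≤ 1 := by simpa using (hsq 0).symm.le.trans (sub_le_self _ (sq_nonneg _))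
  have hle (ζ : ℂ) (hζ : ‖γ ζ‖ < 1) : 1 - ‖γ ζ‖ ^ 2 ≤ 1 - ‖ζ‖ ^ 2 := by
    have hpos : 0 < ρ ^ 2 * (1 - ‖ζ‖ ^ 2) := by rw [← hsq]; nlinarith [hγ0 ζ]
    exact (hsq ζ).trans_le
      (mul_le_of_le_one_left (pos_of_mul_pos_right hpos (by positivity)).le hρ1)
  have hξ : 16 / 25 ≤ 1 - ‖ξ‖ ^ 2 := by
    nlinarith [hle ξ (hx.trans_lt (by norm_num)), hγ0 ξ]
  have hη : 1 - ‖γ η‖ ≤ 1 - ‖η‖ ^ 2 := by nlinarith [hle η hy, hγ0 η]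
  have hρ2 : 4 / 5 ≤ ρ := by
    have : 16 / 25 ≤ ρ ^ 2 * (1 - ‖ξ‖ ^ 2) := by rw [← hsq]; nlinarith [hγ0 ξ]
    nlinarith [sq_nonneg ‖ξ‖]
  have hη1 : ‖η‖ < 1 := by nlinarith [norm_nonneg η]
  have hρη : ρ * (1 - ‖η‖) ≤ 5 / 2 * (1 - ‖γ η‖) := by
    have h₁ : ρ ^ 2 * (1 - ‖η‖ ^ 2) ≤ 2 * (1 - ‖γ η‖) := by rw [← hsq]; nlinarith [hγ0 η]
    have h₂ : ρ ^ 2 * (1 - ‖η‖) ≤ ρ ^ 2 * (1 - ‖η‖ ^ 2) := by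
      gcongr
      nlinarith [norm_nonneg η]
    nlinarith [mul_nonneg hρ.le (sub_nonneg.2 hη1.le)]
  refine (h.comp isOpen_ball (γ := γ) (by fun_prop) hγ).le_exp_of_le_one_sub_sq
    (fun ζ hζ => h1 _ (hγ hζ)) hM hη1 hη hξ fun ζ hζ hζη => hsmall _ (hγ hζ) ?_
  have : γ ζ - γ η = ((ρ : ℂ) * (ζ - η)) • e := by simp only [γ]; module
  rw [this, norm_smul, he, mul_one, norm_mul, norm_real, Real.norm_of_nonneg hρ.le]
  nlinarith

lemma HasHolomorphicSupport.le_exp_of_mem_ball {c : E} {R : ℝ} (hR : 0 < R)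
    (h : HasHolomorphicSupport φ (ball c R)) (h1 : ∀ z ∈ ball c R, φ z ≤ 1) (hM : 0 ≤ M)
    (hy : y ∈ ball c R) (hx : ‖x - c‖ ≤ 3 / 5 * R)
    (hsmall : ∀ z ∈ ball c R, ‖z - y‖ ≤ (R - ‖y - c‖) / 6 → φ z ≤ Real.exp (-M)) :
    φ x ≤ Real.exp (-(M / 50 * (1 - ‖y - c‖ / R))) := by
  have hRC : (R : ℂ) ≠ 0 := by exact_mod_cast hR.ne'
  have hscale (z : E) : ‖(R : ℂ) • z‖ = R * ‖z‖ := by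
    rw [norm_smul, norm_real, Real.norm_of_nonneg hR.le]
  have hinv (z : E) : ‖(R : ℂ)⁻¹ • (z - c)‖ = ‖z - c‖ / R := by
    rw [norm_smul, norm_inv, norm_real, Real.norm_of_nonneg hR.le, inv_mul_eq_div]
  have hback (z : E) : c + (R : ℂ) • ((R : ℂ)⁻¹ • (z - c)) = z := by
    rw [smul_inv_smul₀ hRC, add_sub_cancel]
  have hmaps : MapsTo (fun z => c + (R : ℂ) • z) (ball (0 : E) 1) (ball c R) := fun z hz => by
    rw [mem_ball_iff_norm, add_sub_cancel_left, hscale]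
    nlinarith [mem_ball_zero_iff.1 hz]
  have main := (h.comp isOpen_ball (by fun_prop) hmaps).le_exp_of_mem_unit_ball
    (x := (R : ℂ)⁻¹ • (x - c)) (y := (R : ℂ)⁻¹ • (y - c)) (fun z hz => h1 _ (hmaps hz)) hM
    (by rw [hinv, div_lt_one hR]; exact mem_ball_iff_norm.1 hy) (fun z hz hzy => ?_)
    (by rw [hinv, div_le_iff₀ hR]; exact hx)
  · rwa [hback, hinv] at main
  · refine hsmall _ (hmaps hz) ?_
    rw [hinv] at hzy
    calc ‖c + (R : ℂ) • z - y‖ = R * ‖z - (R : ℂ)⁻¹ • (y - c)‖ := by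
          rw [← hscale, smul_sub, smul_inv_smul₀ hRC]
          congr 1
          abel
      _ ≤ R * ((1 - ‖y - c‖ / R) / 6) := by gcongr
      _ = (R - ‖y - c‖) / 6 := by field_simp

end BallPoisson

section AlmostEigenfunction

variable {E : Type*} [NormedAddCommGroup E] [NormedSpace ℂ E] {F : E → E} {f : E → ℂ} {x z : E}
  {r e τ B : ℝ} {μ : ℂ}

lemma norm_le_div_three_of_almost_eigenfunction (hμ : ‖μ‖ = 1) (hμ1 : μ ≠ 1) (hr : 0 < r)
    (hf : DifferentiableOn ℂ f (ball x r)) (hB : ∀ y ∈ ball x r, ‖f y‖ ≤ B) (he : ‖F x - x‖ ≤ e)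
    (her : 24 * e ≤ ‖1 - μ‖ * r) (hfF : ‖f (F x) - μ * f x‖ ≤ τ) (hτ : τ ≤ ‖1 - μ‖ * B / 6) :
    ‖f x‖ ≤ B / 3 := by
  have hμ0 : 0 < ‖1 - μ‖ := norm_pos_iff.2 (sub_ne_zero.2 hμ1.symm)
  have hB0 : 0 ≤ B := (norm_nonneg _).trans (hB x (mem_ball_self hr))
  have hFx : F x ∈ ball x (r / 2) := by
    have : ‖1 - μ‖ ≤ 2 := by
      refine (norm_sub_le _ _).trans ?_
      rw [norm_one, hμ]; norm_num
    rw [mem_ball_iff_norm]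
    nlinarith
  have hdiff := norm_sub_le_of_norm_le_ball hr hf hB (mem_ball_self (half_pos hr)) hFx
  refine le_of_mul_le_mul_left ?_ hμ0
  calc ‖1 - μ‖ * ‖f x‖ = ‖(f (F x) - μ * f x) - (f (F x) - f x)‖ := by rw [← norm_mul]; ring_nf
    _ ≤ τ + 4 * B / r * e := norm_sub_le_of_le hfF (hdiff.trans (by gcongr))
    _ = τ + B / 6 / r * (24 * e) := by ring
    _ ≤ ‖1 - μ‖ * B / 6 + B / 6 / r * (‖1 - μ‖ * r) := by gcongr
    _ = ‖1 - μ‖ * (B / 3) := by field_simp; ring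

/-- Each of the `m` applications of `norm_le_div_three_of_almost_eigenfunction` costs `r / (4 m)`
of the radius. -/
lemma norm_le_exp_of_almost_eigenfunction (hμ : ‖μ‖ = 1) (hμ1 : μ ≠ 1) (hr : 0 < r)
    (hf : DifferentiableOn ℂ f (ball z r)) (hf1 : ∀ x ∈ ball z r, ‖f x‖ ≤ 1)
    (hF : ∀ x ∈ ball z (r / 2), ‖F x - x‖ ≤ e)
    (hfF : ∀ x ∈ ball z (r / 2), ‖f (F x) - μ * f x‖ ≤ τ) {m : ℕ} (hm : 0 < m)
    (he : 96 * m * e ≤ ‖1 - μ‖ * r) (hτ : τ ≤ ‖1 - μ‖ * Real.exp (-m) / 6) :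
    ∀ x ∈ ball z (r / 4), ‖f x‖ ≤ Real.exp (-m) := by
  have : (0 : ℝ) < m := by exact_mod_cast hm
  set g : ℝ := r / (4 * m) with hg
  have hg0 : 0 < g := by positivity
  have hgm : m * g = r / 4 := by rw [hg]; field_simp
  have heg : 24 * e ≤ ‖1 - μ‖ * g := by
    rw [hg, ← mul_div_assoc, le_div_iff₀ (by positivity)]
    linarith
  have key (i : ℕ) (him : i ≤ m) : ∀ x ∈ ball z (r / 2 - i * g), ‖f x‖ ≤ Real.exp (-i) := by
    induction i with
    | zero => exact fun x hx => by simpa using hf1 x (ball_subset_ball (by simp; linarith) hx)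
    | succ i ih =>
      intro x hx
      have hxz : dist x z < r / 2 - (i + 1) * g := by exact_mod_cast mem_ball.1 hx
      have hi0 : 0 ≤ i * g := by positivity
      have hsub : ball x g ⊆ ball z (r / 2 - i * g) := ball_subset_ball' (by linarith)
      have hxr : x ∈ ball z (r / 2) := mem_ball.2 (by linarith)
      have him' : (i : ℝ) ≤ m := by exact_mod_cast (Nat.le_succ i).trans him
      refine (norm_le_div_three_of_almost_eigenfunction hμ hμ1 hg0
        (hf.mono (hsub.trans (ball_subset_ball (by linarith))))
        (fun y hy => ih (Nat.le_of_succ_le him) y (hsub hy)) (hF x hxr) heg (hfF x hxr)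
        (hτ.trans (by gcongr))).trans ?_
      rw [div_le_iff₀ three_pos, Nat.cast_succ, neg_add, Real.exp_add]
      have : 1 ≤ Real.exp (-1) * 3 := by
        rw [Real.exp_neg, inv_mul_eq_div, one_le_div (Real.exp_pos 1)]
        linarith [Real.exp_one_lt_d9]
      nlinarith [Real.exp_pos (-i : ℝ)]
  intro x hx
  refine key m le_rfl x ?_
  rwa [hgm, show r / 2 - r / 4 = r / 4 by ring]

end AlmostEigenfunction

section EigenAverage

variable {E : Type*} [NormedAddCommGroup E] [NormedSpace ℂ E] {Ω : Set E} {F : E → E} {q : E}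
  {μ : ℂ} {ℓ : E →L[ℂ] ℂ}

/-- The Cesàro means of `μ⁻ᵏ ℓ (Fᵏ x - q)`. If `ℓ` is a left eigenvector of the derivative of `F` at
its fixed point `q` for the unimodular eigenvalue `μ`, these are almost eigenfunctions of
composition with `F`. -/
def eigenAverage (F : E → E) (ℓ : E →L[ℂ] ℂ) (μ : ℂ) (q : E) (N : ℕ) (x : E) : ℂ :=
  ((N : ℂ) + 1)⁻¹ * ∑ k ∈ Finset.range (N + 1), μ⁻¹ ^ k * ℓ (F^[k] x - q)

lemma norm_natCast_add_one_inv (N : ℕ) : ‖((N : ℂ) + 1)⁻¹‖ = ((N : ℝ) + 1)⁻¹ := by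
  rw [norm_inv, ← Nat.cast_succ, Complex.norm_natCast, Nat.cast_succ]

lemma differentiableOn_eigenAverage (hF : IsHolomorphicSelfMap F Ω) (N : ℕ) :
    DifferentiableOn ℂ (eigenAverage F ℓ μ q N) Ω :=
  (DifferentiableOn.fun_sum fun k _ => (ℓ.differentiable.comp_differentiableOn
    ((hF.iterate k).differentiableOn.sub_const q)).const_mul _).const_mul _

lemma norm_inv_pow_mul_le_one (hF : MapsTo F Ω Ω) (hμ : ‖μ‖ = 1)
    (hℓ1 : ∀ x ∈ Ω, ‖ℓ (x - q)‖ ≤ 1) {x : E} (hx : x ∈ Ω) (k : ℕ) :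
    ‖μ⁻¹ ^ k * ℓ (F^[k] x - q)‖ ≤ 1 := by
  simpa [hμ] using hℓ1 _ (hF.iterate k hx)

lemma norm_eigenAverage_le_one (hF : MapsTo F Ω Ω) (hμ : ‖μ‖ = 1)
    (hℓ1 : ∀ x ∈ Ω, ‖ℓ (x - q)‖ ≤ 1) (N : ℕ) {x : E} (hx : x ∈ Ω) :
    ‖eigenAverage F ℓ μ q N x‖ ≤ 1 := by
  rw [eigenAverage, norm_mul, norm_natCast_add_one_inv, inv_mul_le_one₀ (by positivity)]
  exact (norm_sum_le_of_le _ fun k _ => norm_inv_pow_mul_le_one hF hμ hℓ1 hx k).trans (by simp)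

lemma norm_eigenAverage_apply_sub_le (hF : MapsTo F Ω Ω) (hμ : ‖μ‖ = 1)
    (hℓ1 : ∀ x ∈ Ω, ‖ℓ (x - q)‖ ≤ 1) (N : ℕ) {x : E} (hx : x ∈ Ω) :
    ‖eigenAverage F ℓ μ q N (F x) - μ * eigenAverage F ℓ μ q N x‖ ≤ 2 / (N + 1) := by
  set b : ℕ → ℂ := fun k => μ⁻¹ ^ k * ℓ (F^[k] x - q)
  have hμ0 : μ ≠ 0 := norm_ne_zero_iff.1 (hμ ▸ one_ne_zero)
  have hshift (k : ℕ) : μ⁻¹ ^ k * ℓ (F^[k] (F x) - q) = μ * b (k + 1) := by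
    simp only [b, iterate_succ_apply, pow_succ']
    field_simp
  have hbd (k : ℕ) : ‖b k‖ ≤ 1 := norm_inv_pow_mul_le_one hF hμ hℓ1 hx k
  have htele : eigenAverage F ℓ μ q N (F x) - μ * eigenAverage F ℓ μ q N x =
      ((N : ℂ) + 1)⁻¹ * (μ * (b (N + 1) - b 0)) := by
    rw [← Finset.sum_range_sub, Finset.sum_sub_distrib]
    simp only [eigenAverage, hshift, ← Finset.mul_sum]
    ring
  rw [htele, norm_mul, norm_mul, hμ, one_mul, norm_natCast_add_one_inv, inv_mul_eq_div]
  gcongr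
  linarith [norm_sub_le (b (N + 1)) (b 0), hbd (N + 1), hbd 0]

lemma fderiv_eigenAverage_apply (hF : DifferentiableAt ℂ F q) (hfix : F q = q) (hμ0 : μ ≠ 0)
    (hℓ : ∀ x, ℓ (fderiv ℂ F q x) = μ * ℓ x) (N : ℕ) (w : E) :
    fderiv ℂ (eigenAverage F ℓ μ q N) q w = ℓ w := by
  have hpow (k : ℕ) : ℓ ((fderiv ℂ F q)^[k] w) = μ ^ k * ℓ w := by
    induction k with
    | zero => simp
    | succ k ih => rw [iterate_succ_apply', hℓ, ih, pow_succ']; ring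
  have hder (k : ℕ) : HasFDerivAt (fun x => μ⁻¹ ^ k * ℓ (F^[k] x - q))
      (μ⁻¹ ^ k • ℓ.comp (fderiv ℂ F q ^ k)) q :=
    (ℓ.hasFDerivAt.comp q ((hF.hasFDerivAt.iterate hfix k).sub_const q)).const_mul _
  have hN : (N : ℂ) + 1 ≠ 0 := by exact_mod_cast N.succ_ne_zero
  have hmean : HasFDerivAt (eigenAverage F ℓ μ q N) _ q :=
    (HasFDerivAt.fun_sum fun k _ => hder k).const_mul _
  rw [hmean.fderiv]
  simp [hpow, inv_mul_cancel_left₀ (pow_ne_zero _ hμ0), inv_mul_cancel_left₀ hN]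

end EigenAverage

section UnimodularEigenvalue

lemma exists_forall_norm_sub_le_of_isLittleO {E : Type*} [NormedAddCommGroup E] {Ω : Set E}
    {F : E → E} {p : E} (hp : (fun z => F z - z) =o[𝓝[Ω] p] fun z => ‖z - p‖ ^ 2) {ε : ℝ}
    (hε : 0 < ε) : ∃ δ > 0, ∀ x ∈ Ω, ‖x - p‖ < δ → ‖F x - x‖ ≤ ε * ‖x - p‖ ^ 2 := by
  obtain ⟨δ, hδ, h⟩ := Metric.mem_nhdsWithin_iff.1 (hp.def hε)
  refine ⟨δ, hδ, fun x hx hxp => ?_⟩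
  simpa using h ⟨mem_ball_iff_norm.2 hxp, hx⟩

lemma norm_ofReal_smul_of_nonneg {E : Type*} [NormedAddCommGroup E] [NormedSpace ℂ E] (a : E)
    {t : ℝ} (ht : 0 ≤ t) : ‖(t : ℂ) • a‖ = ‖a‖ * t := by
  rw [norm_smul, norm_real, Real.norm_of_nonneg ht, mul_comm]

lemma norm_sub_smul_sub_sub {E : Type*} [NormedAddCommGroup E] [NormedSpace ℂ E] (p a : E)
    {t : ℝ} (ht : t ≤ 1) : ‖p - (t : ℂ) • a - (p - a)‖ = ‖a‖ * (1 - t) := by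
  rw [← norm_ofReal_smul_of_nonneg a (sub_nonneg.2 ht)]
  congr 1
  push_cast
  module

lemma ball_sub_smul_subset_ball_sub {E : Type*} [NormedAddCommGroup E] [NormedSpace ℂ E] (p a : E)
    {t : ℝ} (ht : t ≤ 1) : ball (p - (t : ℂ) • a) (‖a‖ * t) ⊆ ball (p - a) ‖a‖ :=
  ball_subset_ball' (by rw [dist_eq_norm, norm_sub_smul_sub_sub p a ht]; linarith)

lemma exists_nat_mul_eq_of_pos {κ s : ℝ} (hκ : 0 < κ) (hs : 0 < s) :
    ∃ m : ℕ, 0 < m ∧ ∃ t : ℝ, 0 < t ∧ t ≤ s ∧ m * t = κ := by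
  obtain ⟨m, hm⟩ := exists_nat_gt (κ / s)
  have hm0 : (0 : ℝ) < m := (div_pos hκ hs).trans hm
  exact ⟨m, by exact_mod_cast hm0, κ / m, by positivity, ((div_lt_comm₀ hs hm0).1 hm).le,
    mul_div_cancel₀ _ hm0.ne'⟩

lemma exists_norm_eigenAverage_le_exp_of_norm_sub_le {E : Type*} [NormedAddCommGroup E]
    [NormedSpace ℂ E] {Ω : Set E} {F : E → E} {p q z : E} {μ : ℂ} {ℓ : E →L[ℂ] ℂ} {r ε : ℝ}
    (hF : IsHolomorphicSelfMap F Ω) (hμ : ‖μ‖ = 1) (hμ1 : μ ≠ 1)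
    (hℓ1 : ∀ x ∈ Ω, ‖ℓ (x - q)‖ ≤ 1) (hr : 0 < r) (hz : ball z r ⊆ Ω) (hzp : ‖z - p‖ ≤ r)
    (hε : 0 ≤ ε) (hFp : ∀ x ∈ Ω, ‖x - p‖ < 2 * r → ‖F x - x‖ ≤ ε * ‖x - p‖ ^ 2) {m : ℕ}
    (hm : 0 < m) (hmε : 384 * (m * r) * ε ≤ ‖1 - μ‖) :
    ∃ N, ∀ x ∈ ball z (r / 4), ‖eigenAverage F ℓ μ q N x‖ ≤ Real.exp (-m) := by
  have hμ0 : 0 < ‖1 - μ‖ := norm_pos_iff.2 (sub_ne_zero.2 hμ1.symm)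
  set τ : ℝ := ‖1 - μ‖ * Real.exp (-m) / 6
  have hτ0 : 0 < τ := by positivity
  obtain ⟨N, hN⟩ := exists_nat_gt (2 / τ)
  have hNτ : 2 / ((N : ℝ) + 1) ≤ τ :=
    div_le_of_le_mul₀ (by positivity) hτ0.le (by rw [div_lt_iff₀' hτ0] at hN; linarith)
  have hhalf : ball z (r / 2) ⊆ Ω := (ball_subset_ball (by linarith)).trans hz
  refine ⟨N, norm_le_exp_of_almost_eigenfunction (F := F) (e := ε * (2 * r) ^ 2) hμ hμ1 hr
    ((differentiableOn_eigenAverage hF N).mono hz)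
    (fun x hx => norm_eigenAverage_le_one hF.mapsTo hμ hℓ1 N (hz hx)) (fun x hx => ?_)
    (fun x hx => norm_eigenAverage_apply_sub_le hF.mapsTo hμ hℓ1 N (hhalf hx)) hm ?_ hNτ⟩
  · have hxp : ‖x - p‖ < 2 * r := by
      linarith [norm_sub_le_norm_sub_add_norm_sub x z p, mem_ball_iff_norm.1 hx]
    exact (hFp x (hhalf hx) hxp).trans (by gcongr)
  · calc 96 * m * (ε * (2 * r) ^ 2) = 384 * (m * r) * ε * r := by ring
      _ ≤ ‖1 - μ‖ * r := by gcongr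

variable {E : Type*} [NormedAddCommGroup E] [InnerProductSpace ℂ E] {Ω : Set E} {F : E → E}
  {p q a : E} {μ : ℂ} {ℓ : E →L[ℂ] ℂ}

/-- The smallness `exp (-m)` on a ball of radius comparable to `t` near `p` survives at unit
distance as `exp (-c m t)`; the second order contact allows `m t` to be arbitrarily large. -/
lemma exists_norm_eigenAverage_le_exp (hΩ : IsOpen Ω) (hF : IsHolomorphicSelfMap F Ω)
    (hp : (fun z => F z - z) =o[𝓝[Ω] p] fun z => ‖z - p‖ ^ 2) (ha : a ≠ 0)
    (haΩ : ball (p - a) ‖a‖ ⊆ Ω) (hμ : ‖μ‖ = 1) (hμ1 : μ ≠ 1)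
    (hℓ1 : ∀ x ∈ Ω, ‖ℓ (x - q)‖ ≤ 1) {κ : ℝ} (hκ : 0 < κ) :
    ∃ N, ∀ x, ‖x - (p - a)‖ ≤ 3 / 5 * ‖a‖ → ‖eigenAverage F ℓ μ q N x‖ ≤ Real.exp (-κ) := by
  have ha0 : 0 < ‖a‖ := norm_pos_iff.2 ha
  have hμ0 : 0 < ‖1 - μ‖ := norm_pos_iff.2 (sub_ne_zero.2 hμ1.symm)
  set ε : ℝ := ‖1 - μ‖ / (384 * (50 * κ * ‖a‖)) with hε
  obtain ⟨δ, hδ, hFδ⟩ := exists_forall_norm_sub_le_of_isLittleO hp (by positivity : 0 < ε)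
  obtain ⟨m, hm, t, ht0, ht, hmt⟩ := exists_nat_mul_eq_of_pos (by positivity : 0 < 50 * κ)
    (by positivity : 0 < min 1 (δ / (2 * ‖a‖)))
  obtain ⟨ht1, htδ⟩ := le_min_iff.1 ht
  rw [le_div_iff₀ (by positivity)] at htδ
  have hmε : 384 * (m * (‖a‖ * t)) * ε ≤ ‖1 - μ‖ := by
    rw [hε, ← hmt]
    field_simp
    rfl
  obtain ⟨N, hN⟩ := exists_norm_eigenAverage_le_exp_of_norm_sub_le hF hμ hμ1 hℓ1
    (by positivity : 0 < ‖a‖ * t) ((ball_sub_smul_subset_ball_sub p a ht1).trans haΩ)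
    (by rw [sub_sub_cancel_left, norm_neg, norm_ofReal_smul_of_nonneg a ht0.le]) (by positivity)
    (fun x hx hxp => hFδ x hx (by linarith)) hm hmε
  have hsupp := (hasHolomorphicSupport_norm hΩ (differentiableOn_eigenAverage (ℓ := ℓ) (μ := μ)
    (q := q) hF N)).mono haΩ
  have hza := norm_sub_smul_sub_sub p a ht1
  refine ⟨N, fun x hx => (hsupp.le_exp_of_mem_ball (y := p - (t : ℂ) • a) ha0
    (fun x hx => norm_eigenAverage_le_one hF.mapsTo hμ hℓ1 N (haΩ hx)) m.cast_nonneg ?_ hx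
    fun y _ hy => hN y (mem_ball_iff_norm.2 ?_)).trans_eq ?_⟩
  · rw [mem_ball_iff_norm, hza]
    nlinarith
  · rw [hza] at hy
    nlinarith
  · rw [hza, mul_div_cancel_left₀ _ ha0.ne']
    congr 1
    linear_combination -hmt / 50

lemma eq_zero_of_isExpSmallAt_of_fderiv_apply_eq {f : ℕ → E → ℂ} {K : ℕ → ℝ} {c : ℂ} {w : E}
    (hK : Tendsto K atTop atTop) (hΩ : IsOpen Ω) (hf : ∀ j, DifferentiableOn ℂ (f j) Ω) (hq : q ∈ Ω)
    (h : IsExpSmallAt f K q) (hc : ∀ j, fderiv ℂ (f j) q w = c) : c = 0 := by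
  obtain ⟨r, hr, b, hb, hsmall⟩ := h
  obtain ⟨s, hs, hsΩ⟩ := Metric.isOpen_iff.1 hΩ q hq
  set R : ℝ := min r s
  have hR : 0 < R := lt_min hr hs
  have hlim : Tendsto (fun j => 2 * Real.exp (-(b * K j)) / R * ‖w‖) atTop (𝓝 0) := by
    simpa using (((Real.tendsto_exp_neg_atTop_nhds_zero.comp
      (hK.const_mul_atTop hb)).const_mul 2).div_const R).mul_const ‖w‖
  refine norm_le_zero_iff.1 (ge_of_tendsto hlim ?_)
  filter_upwards [hsmall] with j hj
  rw [← hc j]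
  exact ContinuousLinearMap.le_of_opNorm_le _ (norm_fderiv_le_of_norm_le_ball hR
    ((hf j).mono ((ball_subset_ball (min_le_right r s)).trans hsΩ))
    fun z hz => hj z (ball_subset_ball (min_le_left r s) hz)) w

lemma IsHolomorphicSelfMap.eq_zero_of_forall_norm_apply_sub_le_one (hF : IsHolomorphicSelfMap F Ω)
    (hΩ : IsOpen Ω) (hΩc : IsPreconnected Ω) (hq : q ∈ Ω) (hfix : F q = q)
    (hp : (fun z => F z - z) =o[𝓝[Ω] p] fun z => ‖z - p‖ ^ 2) (ha : a ≠ 0)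
    (haΩ : ball (p - a) ‖a‖ ⊆ Ω) (hμ : ‖μ‖ = 1) (hμ1 : μ ≠ 1)
    (hℓ1 : ∀ x ∈ Ω, ‖ℓ (x - q)‖ ≤ 1) (hℓ : ∀ x, ℓ (fderiv ℂ F q x) = μ * ℓ x) : ℓ = 0 := by
  have ha0 : 0 < ‖a‖ := norm_pos_iff.2 ha
  choose N hN using fun j : ℕ => exists_norm_eigenAverage_le_exp (q := q) hΩ hF hp ha haΩ hμ hμ1
    hℓ1 j.cast_add_one_pos
  have hK : Tendsto (fun j : ℕ => (j : ℝ) + 1) atTop atTop :=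
    tendsto_atTop_add_const_right _ _ tendsto_natCast_atTop_atTop
  have hd (j : ℕ) : DifferentiableOn ℂ (eigenAverage F ℓ μ q (N j)) Ω :=
    differentiableOn_eigenAverage hF (N j)
  have h₀ : IsExpSmallAt (fun j => eigenAverage F ℓ μ q (N j)) (fun j => (j : ℝ) + 1) (p - a) := by
    refine ⟨3 / 5 * ‖a‖, by positivity, 1, one_pos, .of_forall fun j z hz => ?_⟩
    rw [one_mul]
    exact hN j z (mem_ball_iff_norm.1 hz).le
  have hsmall := IsExpSmallAt.of_isPreconnected hΩ hΩc hK hd (fun x hx => by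
    obtain ⟨r, hr, hrΩ⟩ := Metric.isOpen_iff.1 hΩ x hx
    exact ⟨r, hr, 1, fun j z hz => norm_eigenAverage_le_one hF.mapsTo hμ hℓ1 (N j) (hrΩ hz)⟩)
    (haΩ (mem_ball_self ha0)) h₀ hq
  ext w
  exact eq_zero_of_isExpSmallAt_of_fderiv_apply_eq hK hΩ hd hq hsmall fun j =>
    fderiv_eigenAverage_apply (hF.differentiableOn.differentiableAt (hΩ.mem_nhds hq)) hfix
      (norm_ne_zero_iff.1 (hμ ▸ one_ne_zero)) hℓ (N j) w

theorem IsHolomorphicSelfMap.eq_zero_of_forall_apply_fderiv_eq_mul (hF : IsHolomorphicSelfMap F Ω)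
    (hΩ : IsOpen Ω) (hΩc : IsPreconnected Ω) {C : ℝ} (hC : ∀ x ∈ Ω, ‖x‖ ≤ C) (hq : q ∈ Ω)
    (hfix : F q = q) (hp : (fun z => F z - z) =o[𝓝[Ω] p] fun z => ‖z - p‖ ^ 2) (ha : a ≠ 0)
    (haΩ : ball (p - a) ‖a‖ ⊆ Ω) (hμ : ‖μ‖ = 1) (hμ1 : μ ≠ 1)
    (hℓ : ∀ x, ℓ (fderiv ℂ F q x) = μ * ℓ x) : ℓ = 0 := by
  have hC0 : 0 ≤ C := (norm_nonneg q).trans (hC q hq)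
  set s : ℂ := ((‖ℓ‖ * (C + C) + 1 : ℝ) : ℂ)⁻¹ with hs
  have hs0 : s ≠ 0 := inv_ne_zero (by exact_mod_cast (by positivity : ‖ℓ‖ * (C + C) + 1 ≠ 0))
  have hsℓ1 (x) (hx : x ∈ Ω) : ‖(s • ℓ) (x - q)‖ ≤ 1 := by
    rw [smul_apply, norm_smul, hs, norm_inv, norm_real, Real.norm_of_nonneg (by positivity),
      inv_mul_le_one₀ (by positivity)]
    linarith [ℓ.le_opNorm_of_le (norm_sub_le_of_le (hC x hx) (hC q hq))]
  have hsℓ (x : E) : (s • ℓ) (fderiv ℂ F q x) = μ * (s • ℓ) x := by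
    simp only [smul_apply, hℓ, smul_eq_mul]
    ring
  exact (smul_eq_zero_iff_right hs0).1 (hF.eq_zero_of_forall_norm_apply_sub_le_one hΩ hΩc hq hfix
    hp ha haΩ hμ hμ1 hsℓ1 hsℓ)

end UnimodularEigenvalue

section SecondOrder

variable {E : Type*} [NormedAddCommGroup E] [NormedSpace ℝ E]

lemma hasFDerivAt_taylor_two_sub {ρ : E → ℝ} {p x : E} (hρ : DifferentiableAt ℝ ρ (p + x))
    (hsymm : IsSymmSndFDerivAt ℝ ρ p) :
    HasFDerivAt
      (fun x => ρ (p + x) - ρ p - fderiv ℝ ρ p x - 1 / 2 * fderiv ℝ (fderiv ℝ ρ) p x x)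
      (fderiv ℝ ρ (p + x) - fderiv ℝ ρ p - fderiv ℝ (fderiv ℝ ρ) p x) x := by
  set H := fderiv ℝ (fderiv ℝ ρ) p
  have hshift : HasFDerivAt (fun x => ρ (p + x)) (fderiv ℝ ρ (p + x)) x :=
    (hρ.hasFDerivAt.comp x ((hasFDerivAt_id x).const_add p)).congr_fderiv (by ext; rfl)
  have hquad : HasFDerivAt (fun x => H x x) (H x + H.flip x) x :=
    (H.hasFDerivAt.clm_apply (hasFDerivAt_id x)).congr_fderiv (by ext; rfl)
  refine (((hshift.sub_const (ρ p)).sub (fderiv ℝ ρ p).hasFDerivAt).sub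
    (hquad.const_mul (1 / 2))).congr_fderiv (ContinuousLinearMap.ext fun v => ?_)
  have : H v x = H x v := hsymm v x
  simp only [sub_apply, smul_apply, add_apply, ContinuousLinearMap.flip_apply, smul_eq_mul, this]
  ring

lemma isLittleO_taylor_two {ρ : E → ℝ} {p : E} (hρ : ContDiffAt ℝ 2 ρ p) :
    (fun x => ρ (p + x) - ρ p - fderiv ℝ ρ p x - 1 / 2 * fderiv ℝ (fderiv ℝ ρ) p x x)
      =o[𝓝 0] fun x => ‖x‖ ^ 2 := by
  have hdiff : ∀ᶠ x in 𝓝 (0 : E), DifferentiableAt ℝ ρ (p + x) := by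
    have : ∀ᶠ y in 𝓝 (p + 0), DifferentiableAt ℝ ρ y := by
      rw [add_zero]
      filter_upwards [hρ.eventually (by simp)] with y hy
      exact hy.differentiableAt two_ne_zero
    exact (continuous_const_add p).continuousAt.eventually this
  have hderiv : DifferentiableAt ℝ (fderiv ℝ ρ) p :=
    (hρ.fderiv_right (m := 1) (by norm_num)).differentiableAt one_ne_zero
  have hlin := hasFDerivAt_iff_isLittleO_nhds_zero.1 hderiv.hasFDerivAt
  refine Asymptotics.isLittleO_iff.2 fun ε hε => ?_
  obtain ⟨δ, hδ, hball⟩ := Metric.eventually_nhds_iff_ball.1 (hdiff.and (hlin.def hε))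
  filter_upwards [ball_mem_nhds 0 hδ] with x hx
  have hmean := (convex_closedBall (0 : E) ‖x‖).norm_image_sub_le_of_norm_hasFDerivWithin_le
    (x := 0) (y := x) (C := ε * ‖x‖)
    (fun y hy => (hasFDerivAt_taylor_two_sub (hball y (closedBall_subset_ball
      (mem_ball_zero_iff.1 hx) hy)).1 (hρ.isSymmSndFDerivAt (by simp))).hasFDerivWithinAt)
    (fun y hy => (hball y (closedBall_subset_ball (mem_ball_zero_iff.1 hx) hy)).2.trans
      (mul_le_mul_of_nonneg_left (mem_closedBall_zero_iff.1 hy) hε.le)) (by simp) (by simp)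
  simpa [pow_two, mul_assoc] using hmean

lemma exists_pos_eventually_le_fderiv_add_mul_norm_sq {ρ : E → ℝ} {p : E}
    (hρ : ContDiffAt ℝ 2 ρ p) :
    ∃ K : ℝ, 0 < K ∧ ∀ᶠ x in 𝓝 0, ρ (p + x) ≤ ρ p + fderiv ℝ ρ p x + K * ‖x‖ ^ 2 := by
  set H := fderiv ℝ (fderiv ℝ ρ) p
  refine ⟨1 + ‖H‖, by positivity, ?_⟩
  filter_upwards [(isLittleO_taylor_two hρ).def one_pos] with x hx
  have htaylor := (le_abs_self _).trans hx
  rw [norm_pow, norm_norm] at htaylor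
  have hH : H x x ≤ ‖H‖ * ‖x‖ * ‖x‖ := (le_abs_self _).trans (H.le_opNorm₂ x x)
  have : 0 ≤ ‖H‖ * ‖x‖ * ‖x‖ := by positivity
  linarith

lemma exists_pos_forall_mul_norm_sq_le_add [ProperSpace E] {L : E → ℝ} (hL : Continuous L)
    (hLh : ∀ (t : ℝ) (x : E), L (t • x) = t ^ 2 * L x) (ℓ : E →L[ℝ] ℂ)
    (hpos : ∀ x, x ≠ 0 → ℓ x = 0 → 0 < L x) :
    ∃ M c : ℝ, 0 ≤ M ∧ 0 < c ∧ ∀ x, c * ‖x‖ ^ 2 ≤ L x + M * ‖ℓ x‖ ^ 2 := by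
  have hK : IsCompact (sphere (0 : E) 1) := isCompact_sphere _ _
  obtain ⟨m, hm, hmle⟩ := (hK.inter_right (isClosed_le hL continuous_const)).exists_forall_le'
    (f := fun x => ‖ℓ x‖ ^ 2) (a := 0) (by fun_prop) (by
      rintro x ⟨hx, hLx⟩
      have : ℓ x ≠ 0 := fun h => (hpos x (ne_of_mem_sphere hx one_ne_zero) h).not_ge hLx
      positivity)
  obtain ⟨Λ, hΛ⟩ := hK.exists_bound_of_continuousOn hL.continuousOn
  have hM : 0 ≤ (|Λ| + 1) / m := by positivity
  obtain ⟨c, hc, hcle⟩ := hK.exists_forall_le' (f := fun x => L x + (|Λ| + 1) / m * ‖ℓ x‖ ^ 2)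
    (a := 0) (by fun_prop) (by
      intro x hx
      rcases le_or_gt (L x) 0 with h | h
      · have := mul_le_mul_of_nonneg_left (hmle x ⟨hx, h⟩) hM
        rw [div_mul_cancel₀ _ hm.ne'] at this
        linarith [(abs_le.1 (hΛ x hx)).1, le_abs_self Λ]
      · positivity)
  refine ⟨(|Λ| + 1) / m, c, hM, hc, fun x => ?_⟩
  rcases eq_or_ne x 0 with rfl | hx
  · have : L 0 = 0 := by simpa using hLh 0 0
    simp [this]
  · have hx0 : 0 < ‖x‖ := norm_pos_iff.2 hx
    have hunit := hcle (‖x‖⁻¹ • x) (by simp [norm_smul, hx0.ne'])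
    simp only [hLh, map_smul, norm_smul, norm_inv, norm_norm] at hunit
    calc c * ‖x‖ ^ 2 = ‖x‖ ^ 2 * c := mul_comm _ _
      _ ≤ _ := mul_le_mul_of_nonneg_left hunit (sq_nonneg ‖x‖)
      _ = _ := by field_simp

end SecondOrder

section LeviPolynomial

/-- The part of a real bilinear form that is bilinear over `ℂ`; its real part on the diagonal is
what remains of the form after subtraction of the Levi form. -/
def complexBilinearPart {E : Type*} [NormedAddCommGroup E] [NormedSpace ℂ E] [NormedSpace ℝ E]
    [IsScalarTower ℝ ℂ E] (H : E →L[ℝ] E →L[ℝ] ℝ) : E →ₗ[ℂ] E →ₗ[ℂ] ℂ :=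
  have hsmul (c : ℂ) (x : E) : c • x = c.re • x + c.im • (I • x) := by
    rw [← algebraMap_smul ℂ c.re x, ← algebraMap_smul ℂ c.im (I • x), smul_smul, ← add_smul]
    congr 1
    simp
  have hI_smul (c : ℂ) (x : E) : I • c • x = c.re • (I • x) - c.im • x := by
    rw [smul_comm, hsmul, smul_smul, I_mul_I, neg_one_smul, smul_neg, sub_eq_add_neg]
  LinearMap.mk₂ ℂ (fun x y => ((1 / 4 * (H x y - H (I • x) (I • y)) : ℝ) : ℂ) -
      I * ((1 / 4 * (H (I • x) y + H x (I • y)) : ℝ) : ℂ))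
    (fun x y z => by
      simp only [smul_add, map_add, add_apply]
      push_cast
      ring)
    (fun c x y => by
      rw [hI_smul c x, hsmul c x]
      simp only [map_add, map_sub, map_smul, add_apply, sub_apply, smul_apply, smul_eq_mul]
      apply Complex.ext <;> simp <;> ring)
    (fun x y z => by
      simp only [smul_add, map_add]
      push_cast
      ring)
    (fun c x y => by
      rw [hI_smul c y, hsmul c y]
      simp only [map_add, map_sub, map_smul, smul_eq_mul]
      apply Complex.ext <;> simp <;> ring)

lemma re_complexBilinearPart_apply_self {E : Type*} [NormedAddCommGroup E] [NormedSpace ℂ E]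
    [NormedSpace ℝ E] [IsScalarTower ℝ ℂ E] (H : E →L[ℝ] E →L[ℝ] ℝ) (x : E) :
    (complexBilinearPart H x x).re = 1 / 4 * (H x x - H (I • x) (I • x)) := by
  simp [complexBilinearPart]

variable {n : ℕ} {Ω : Set (En n)} {ρ : En n → ℝ} {p x : En n}

lemma leviForm_eq_fderiv_fderiv :
    LeviForm ρ p x = 1 / 4 * (fderiv ℝ (fderiv ℝ ρ) p x x +
      fderiv ℝ (fderiv ℝ ρ) p (I • x) (I • x)) := by
  simp only [LeviForm, iteratedFDeriv_two_apply]
  rfl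

/-- The complex gradient: the vector whose Hermitian product with `x` has real part `dρ_p(x)`. -/
def complexGradient (ρ : En n → ℝ) (p : En n) : En n :=
  (InnerProductSpace.toDual ℂ (En n)).symm (StrongDual.extendRCLike (𝕜 := ℂ) (fderiv ℝ ρ p))

lemma inner_complexGradient :
    inner ℂ (complexGradient ρ p) x = StrongDual.extendRCLike (𝕜 := ℂ) (fderiv ℝ ρ p) x :=
  InnerProductSpace.toDual_symm_apply

lemma re_inner_complexGradient : (inner ℂ (complexGradient ρ p) x).re = fderiv ℝ ρ p x := by
  rw [inner_complexGradient]
  exact StrongDual.re_extendRCLike_apply (𝕜 := ℂ) (fderiv ℝ ρ p) x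

lemma im_inner_complexGradient :
    (inner ℂ (complexGradient ρ p) x).im = -fderiv ℝ ρ p (I • x) := by
  rw [inner_complexGradient]
  exact StrongDual.im_extendRCLike_apply (𝕜 := ℂ) (fderiv ℝ ρ p) x

lemma complexGradient_ne_zero (h : fderiv ℝ ρ p ≠ 0) : complexGradient ρ p ≠ 0 := by
  refine fun h0 => h (ContinuousLinearMap.ext fun x => ?_)
  rw [← re_inner_complexGradient, h0, inner_zero_left]
  rfl

lemma inCplxTangent_of_inner_complexGradient_eq_zero
    (h : inner ℂ (complexGradient ρ p) x = 0) : InCplxTangent ρ p x := by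
  constructor
  · rw [← re_inner_complexGradient, h, zero_re]
  · rw [← neg_eq_zero, ← im_inner_complexGradient, h, zero_im]

lemma exists_pos_ball_sub_smul_complexGradient_subset (hρ : ContDiffAt ℝ 2 ρ p) (hρp : ρ p = 0)
    (hΩ : ∀ᶠ z in 𝓝 p, ρ z < 0 → z ∈ Ω) (hdρ : fderiv ℝ ρ p ≠ 0) :
    ∃ τ : ℝ, 0 < τ ∧
      ball (p - (τ : ℂ) • complexGradient ρ p) ‖(τ : ℂ) • complexGradient ρ p‖ ⊆ Ω := by
  set g := complexGradient ρ p
  have hg : 0 < ‖g‖ := norm_pos_iff.2 (complexGradient_ne_zero hdρ)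
  obtain ⟨K, hK, hquad⟩ := exists_pos_eventually_le_fderiv_add_mul_norm_sq hρ
  have hshift : Tendsto (p + ·) (𝓝 0) (𝓝 p) := by
    simpa using (continuous_const_add p).tendsto 0
  obtain ⟨δ, hδ, hball⟩ := Metric.eventually_nhds_iff_ball.1 ((hshift.eventually hΩ).and hquad)
  obtain ⟨τ, hτ, hτK, hτδ⟩ : ∃ τ : ℝ, 0 < τ ∧ τ * (2 * K) ≤ 1 ∧ τ * (2 * ‖g‖) ≤ δ :=
    ⟨min (1 / (2 * K)) (δ / (2 * ‖g‖)), by positivity,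
      (le_div_iff₀ (by positivity)).1 (min_le_left _ _),
      (le_div_iff₀ (by positivity)).1 (min_le_right _ _)⟩
  refine ⟨τ, hτ, fun y hy => ?_⟩
  obtain ⟨x, rfl⟩ : ∃ x, y = p + x := ⟨y - p, (add_sub_cancel p y).symm⟩
  set a := (τ : ℂ) • g
  have ha : ‖a‖ = τ * ‖g‖ := by rw [norm_smul, norm_real, Real.norm_of_nonneg hτ.le]
  rw [mem_ball_iff_norm, show p + x - (p - a) = x + a by abel] at hy
  have hinner : (inner ℂ x a).re = τ * fderiv ℝ ρ p x := by
    rw [← inner_conj_symm, conj_re, inner_smul_left, conj_ofReal, re_ofReal_mul,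
      re_inner_complexGradient]
  have hexpand : ‖x + a‖ ^ 2 = ‖x‖ ^ 2 + 2 * (τ * fderiv ℝ ρ p x) + ‖a‖ ^ 2 := by
    rw [@norm_add_sq ℂ, ← hinner]
    rfl
  have hsq : ‖x + a‖ ^ 2 < ‖a‖ ^ 2 := by gcongr
  have hx : ‖x‖ < δ := by
    have := norm_sub_le (x + a) a
    rw [add_sub_cancel_right] at this
    linarith
  obtain ⟨hxΩ, hxρ⟩ := hball x (mem_ball_zero_iff.2 hx)
  rw [hρp, zero_add] at hxρ
  refine hxΩ (hxρ.trans_lt (neg_of_mul_neg_right ?_ hτ.le))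
  nlinarith [sq_nonneg ‖x‖]

lemma exists_mul_norm_sq_le_sub_re_add (hρ : ContDiffAt ℝ 2 ρ p) (hρp : ρ p = 0)
    (hs : StronglyPcxAt ρ p) :
    ∃ M c : ℝ, 0 ≤ M ∧ 0 < c ∧ ∀ᶠ x in 𝓝 0, c * ‖x‖ ^ 2 ≤
      ρ (p + x) - (inner ℂ (complexGradient ρ p) x +
        complexBilinearPart (fderiv ℝ (fderiv ℝ ρ) p) x x).re +
      M * ‖inner ℂ (complexGradient ρ p) x‖ ^ 2 := by
  set H := fderiv ℝ (fderiv ℝ ρ) p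
  obtain ⟨M, c, hM, hc, hle⟩ := exists_pos_forall_mul_norm_sq_le_add
    (L := fun x => 1 / 4 * (H x x + H (I • x) (I • x))) (by fun_prop)
    (fun t x => by
      simp only [smul_comm I t x, map_smul, smul_apply, smul_eq_mul]
      ring)
    ((innerSL ℂ (complexGradient ρ p)).restrictScalars ℝ)
    (fun x hx hgx => leviForm_eq_fderiv_fderiv (ρ := ρ) ▸
      hs x hx (inCplxTangent_of_inner_complexGradient_eq_zero hgx))
  refine ⟨M, c / 2, hM, by positivity, ?_⟩
  filter_upwards [(isLittleO_taylor_two hρ).def (half_pos hc)] with x hx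
  have htaylor := (abs_le.1 hx).1
  rw [hρp, norm_pow, norm_norm] at htaylor
  have hlevi : c * ‖x‖ ^ 2 ≤ 1 / 4 * (H x x + H (I • x) (I • x)) +
    M * ‖inner ℂ (complexGradient ρ p) x‖ ^ 2 := hle x
  rw [add_re, re_inner_complexGradient, re_complexBilinearPart_apply_self]
  linarith

/-- The Levi polynomial of `ρ` at `p`, in the variable `x = y - p`: the holomorphic part of the
second-order Taylor polynomial. -/
def leviPolynomial (ρ : En n → ℝ) (p x : En n) : ℂ :=
  inner ℂ (complexGradient ρ p) x + complexBilinearPart (fderiv ℝ (fderiv ℝ ρ) p) x x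

lemma exists_norm_complexBilinearPart_apply_self_le (H : En n →L[ℝ] En n →L[ℝ] ℝ) :
    ∃ b : ℝ, 0 ≤ b ∧ ∀ x, ‖complexBilinearPart H x x‖ ≤ b * ‖x‖ ^ 2 := by
  set B := (complexBilinearPart H).toContinuousBilinearMap
  exact ⟨‖B‖, norm_nonneg B, fun x => (B.le_opNorm₂ x x).trans_eq (by ring)⟩

lemma contDiff_leviPolynomial : ContDiff ℂ 2 (leviPolynomial ρ p) := by
  have hB : ContDiff ℂ 2 fun x => (complexBilinearPart
      (fderiv ℝ (fderiv ℝ ρ) p)).toContinuousBilinearMap x x :=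
    (ContinuousLinearMap.contDiff _).clm_apply contDiff_id
  exact (innerSL ℂ (complexGradient ρ p)).contDiff.add hB

lemma exists_mul_norm_sq_le_neg_re_leviPolynomial_add (hρ : ContDiffAt ℝ 2 ρ p) (hρp : ρ p = 0)
    (hs : StronglyPcxAt ρ p) :
    ∃ M c : ℝ, 0 ≤ M ∧ 0 < c ∧ ∀ᶠ x in 𝓝 0, ρ (p + x) ≤ 0 →
      c * ‖x‖ ^ 2 ≤ -(leviPolynomial ρ p x).re + M * ‖leviPolynomial ρ p x‖ ^ 2 := by
  obtain ⟨M, c, hM, hc, hle⟩ := exists_mul_norm_sq_le_sub_re_add hρ hρp hs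
  obtain ⟨b, -, hB⟩ :=
    exists_norm_complexBilinearPart_apply_self_le (fderiv ℝ (fderiv ℝ ρ) p)
  have hsmall : ∀ᶠ x : En n in 𝓝 0, M * (2 * b ^ 2) * ‖x‖ ^ 2 < c / 2 := by
    have : Continuous fun x : En n => M * (2 * b ^ 2) * ‖x‖ ^ 2 := by fun_prop
    exact this.continuousAt.eventually_lt continuousAt_const (by simpa using half_pos hc)
  refine ⟨2 * M, c / 2, by positivity, half_pos hc, ?_⟩
  filter_upwards [hle, hsmall] with x hx hxs hρx
  set β := complexBilinearPart (fderiv ℝ (fderiv ℝ ρ) p) x x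
  set g : ℂ := inner ℂ (complexGradient ρ p) x
  have hg : ‖g‖ ^ 2 ≤ 2 * ‖g + β‖ ^ 2 + 2 * ‖β‖ ^ 2 := by
    have := norm_sub_le (g + β) β
    rw [add_sub_cancel_right] at this
    nlinarith [norm_nonneg g, sq_nonneg (‖g + β‖ - ‖β‖)]
  have hβ : ‖β‖ ^ 2 ≤ b ^ 2 * ‖x‖ ^ 2 * ‖x‖ ^ 2 := by
    calc ‖β‖ ^ 2 ≤ (b * ‖x‖ ^ 2) ^ 2 := by gcongr; exact hB x
      _ = _ := by ring
  have hMg := mul_le_mul_of_nonneg_left hg hM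
  have hMβ := mul_le_mul_of_nonneg_left hβ hM
  have habsorb := mul_le_mul_of_nonneg_right hxs.le (sq_nonneg ‖x‖)
  change c / 2 * ‖x‖ ^ 2 ≤ -(g + β).re + 2 * M * ‖g + β‖ ^ 2
  linarith

end LeviPolynomial

section SupportFunction

/-- `ψ` is a holomorphic support function for `Ω` at `p` with inner normal direction `-a`: it
has the linear part `-⟨a, · - p⟩ / ‖a‖²`, and `re (1 / ψ)` is bounded below on `Ω` near `p`, with
quantitative control of the distance to `p`. -/
structure IsSupportFunction {E : Type*} [NormedAddCommGroup E] [InnerProductSpace ℂ E]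
    (Ω : Set E) (p a : E) (ψ : E → ℂ) : Prop where
  contDiff : ContDiff ℂ 2 ψ
  exists_norm_add_le : ∃ C : ℝ, 0 ≤ C ∧
    ∀ y, ‖ψ y + inner ℂ a (y - p) / (‖a‖ : ℂ) ^ 2‖ ≤ C * ‖y - p‖ ^ 2
  exists_le_re_add : ∃ M c : ℝ, 0 ≤ M ∧ 0 < c ∧
    ∀ᶠ y in 𝓝[closure Ω] p, c * ‖y - p‖ ^ 2 ≤ (ψ y).re + M * ‖ψ y‖ ^ 2

variable {n : ℕ} {Ω : Set (En n)} {ρ : En n → ℝ} {p : En n}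

lemma eventually_le_zero_of_mem_closure (hρ : ContDiffAt ℝ 2 ρ p)
    (hΩ : ∀ᶠ z in 𝓝 p, z ∈ Ω → ρ z < 0) : ∀ᶠ y in 𝓝[closure Ω] p, ρ y ≤ 0 := by
  have hcont : ∀ᶠ y in 𝓝 p, ContinuousAt ρ y := by
    filter_upwards [hρ.eventually (by simp)] with y hy using hy.continuousAt
  filter_upwards [hcont.filter_mono nhdsWithin_le_nhds,
    hΩ.eventually_nhds.filter_mono nhdsWithin_le_nhds, self_mem_nhdsWithin] with y hy hyΩ hyc
  have : (𝓝[Ω] y).NeBot := mem_closure_iff_nhdsWithin_neBot.1 hyc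
  exact le_of_tendsto (hy.mono_left nhdsWithin_le_nhds)
    (eventually_nhdsWithin_iff.2 (hyΩ.mono fun z hz hzΩ => (hz hzΩ).le))

lemma isSupportFunction_leviPolynomial (hρ : ContDiffAt ℝ 2 ρ p) (hρp : ρ p = 0)
    (hΩ : ∀ᶠ z in 𝓝 p, z ∈ Ω → ρ z < 0) (hs : StronglyPcxAt ρ p)
    (hg : complexGradient ρ p ≠ 0) {τ : ℝ} (hτ : 0 < τ) :
    IsSupportFunction Ω p ((τ : ℂ) • complexGradient ρ p) fun y =>
      -(((τ * ‖complexGradient ρ p‖ ^ 2)⁻¹ : ℝ) * leviPolynomial ρ p (y - p)) := by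
  set g := complexGradient ρ p
  set s : ℝ := (τ * ‖g‖ ^ 2)⁻¹ with hs_def
  have hgn : 0 < ‖g‖ := norm_pos_iff.2 hg
  have hs0 : 0 < s := by positivity
  refine ⟨?_, ?_, ?_⟩
  · exact (contDiff_const.mul
      (contDiff_leviPolynomial.comp (contDiff_id.sub contDiff_const))).neg
  · obtain ⟨b, hb, hB⟩ :=
      exists_norm_complexBilinearPart_apply_self_le (fderiv ℝ (fderiv ℝ ρ) p)
    refine ⟨s * b, by positivity, fun y => ?_⟩
    have hlin : inner ℂ ((τ : ℂ) • g) (y - p) / (‖(τ : ℂ) • g‖ : ℂ) ^ 2 =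
        (s : ℂ) * inner ℂ g (y - p) := by
      have : (τ : ℂ) ≠ 0 := by exact_mod_cast hτ.ne'
      have : (‖g‖ : ℂ) ≠ 0 := by exact_mod_cast hgn.ne'
      rw [inner_smul_left, conj_ofReal, norm_smul, norm_real, Real.norm_of_nonneg hτ.le, hs_def]
      push_cast
      field_simp
    rw [hlin, leviPolynomial, mul_add, neg_add_eq_sub, sub_add_cancel_left, norm_neg, norm_mul,
      norm_real, Real.norm_of_nonneg hs0.le, mul_assoc]
    exact mul_le_mul_of_nonneg_left (hB _) hs0.le
  · obtain ⟨M, c, hM, hc, hle⟩ := exists_mul_norm_sq_le_neg_re_leviPolynomial_add hρ hρp hs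
    have hsub : Tendsto (· - p) (𝓝 p) (𝓝 0) := by
      simpa using (continuous_sub_right p).tendsto p
    refine ⟨M / s, s * c, by positivity, by positivity, ?_⟩
    filter_upwards [(hsub.eventually hle).filter_mono nhdsWithin_le_nhds,
      eventually_le_zero_of_mem_closure hρ hΩ] with y hy hρy
    have hmain := mul_le_mul_of_nonneg_left (hy (by rwa [add_sub_cancel])) hs0.le
    rw [norm_neg, norm_mul, norm_real, Real.norm_of_nonneg hs0.le, neg_re, re_ofReal_mul]
    calc s * c * ‖y - p‖ ^ 2 ≤ _ := (mul_assoc _ _ _).trans_le hmain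
      _ = _ := by field_simp

end SupportFunction

section Barrier

lemma exists_forall_mem_eventually_abs_sub_fderiv_le {E : Type*} [NormedAddCommGroup E]
    [NormedSpace ℝ E] {f : E → ℝ} {K : Set E} (hK : IsCompact K)
    (hf : ∀ x ∈ K, ContDiffAt ℝ 2 f x) :
    ∃ B : ℝ, 0 ≤ B ∧ ∀ x ∈ K, ∀ᶠ y in 𝓝 x,
      |f y - f x - fderiv ℝ f x (y - x)| ≤ B * ‖y - x‖ ^ 2 := by
  refine hK.induction_on (p := fun s => ∃ B : ℝ, 0 ≤ B ∧ ∀ x ∈ s, ∀ᶠ y in 𝓝 x,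
      |f y - f x - fderiv ℝ f x (y - x)| ≤ B * ‖y - x‖ ^ 2) ⟨0, le_rfl, by simp⟩ ?_ ?_ ?_
  · rintro s t hst ⟨B, hB, h⟩
    exact ⟨B, hB, fun x hx => h x (hst hx)⟩
  · rintro s t ⟨B, hB, h⟩ ⟨B', -, h'⟩
    refine ⟨max B B', hB.trans (le_max_left _ _), fun x hx => ?_⟩
    rcases hx with hx | hx
    · filter_upwards [h x hx] with y hy
      exact hy.trans (by gcongr; exact le_max_left _ _)
    · filter_upwards [h' x hx] with y hy
      exact hy.trans (by gcongr; exact le_max_right _ _)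
  · intro x hx
    obtain ⟨B, t, ht, hlip⟩ :=
      ((hf x hx).fderiv_right (m := 1) (by norm_num)).exists_lipschitzOnWith
    have hd : ∀ᶠ y in 𝓝 x, DifferentiableAt ℝ f y := by
      filter_upwards [(hf x hx).eventually (by simp)] with y hy
      exact hy.differentiableAt two_ne_zero
    obtain ⟨r, hr, hrt⟩ := Metric.mem_nhds_iff.1 (inter_mem ht hd)
    refine ⟨ball x r, mem_nhdsWithin_of_mem_nhds (ball_mem_nhds x hr), B, B.coe_nonneg,
      fun y hy => ?_⟩
    filter_upwards [isOpen_ball.mem_nhds hy] with z hz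
    have hseg : segment ℝ y z ⊆ ball x r := (convex_ball x r).segment_subset hy hz
    have hmean := (convex_segment y z).norm_image_sub_le_of_norm_fderiv_le' (𝕜 := ℝ) (f := f)
      (φ := fderiv ℝ f y) (C := B * ‖z - y‖) (fun w hw => (hrt (hseg hw)).2)
      (fun w hw => (hlip.norm_sub_le (hrt (hseg hw)).1 (hrt hy).1).trans
        (mul_le_mul_of_nonneg_left (norm_sub_le_of_mem_segment hw) B.coe_nonneg))
      (left_mem_segment ℝ y z) (right_mem_segment ℝ y z)
    exact hmean.trans_eq (by ring)

lemma ne_zero_of_pos_re_add {w : ℂ} {M : ℝ} (h : 0 < w.re + M * ‖w‖ ^ 2) : w ≠ 0 := by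
  rintro rfl
  simp at h

lemma inv_re_add_nonneg {w : ℂ} {M : ℝ} (h : 0 < w.re + M * ‖w‖ ^ 2) : 0 ≤ w⁻¹.re + M := by
  have hw : 0 < normSq w := normSq_pos.2 (ne_zero_of_pos_re_add h)
  rw [← normSq_eq_norm_sq] at h
  rw [inv_re, div_add' _ _ _ hw.ne']
  exact div_nonneg h.le hw.le

lemma norm_le_inv_of_le_inv_re {w : ℂ} {t : ℝ} (ht : 0 < t) (h : t ≤ w⁻¹.re) : ‖w‖ ≤ t⁻¹ := by
  have : t ≤ ‖w‖⁻¹ := norm_inv w ▸ h.trans (re_le_norm _)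
  exact (le_inv_comm₀ ht (inv_pos.1 (ht.trans_le this))).1 this

lemma re_add_mul_norm_sq_le_of_le_inv_re {w : ℂ} {t M : ℝ} (hM : 0 ≤ M) (ht : 1 ≤ t)
    (h : t ≤ w⁻¹.re) : w.re + M * ‖w‖ ^ 2 ≤ (1 + M) / t := by
  have ht0 : 0 < t := by linarith
  have hw := norm_le_inv_of_le_inv_re ht0 h
  have ht1 : t⁻¹ ≤ 1 := inv_le_one_of_one_le₀ ht
  have hsq : ‖w‖ ^ 2 ≤ t⁻¹ := by nlinarith [norm_nonneg w]
  calc w.re + M * ‖w‖ ^ 2 ≤ t⁻¹ + M * t⁻¹ := by gcongr; exact (re_le_norm w).trans hw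
    _ = (1 + M) / t := by ring

variable {E : Type*} [NormedAddCommGroup E] [InnerProductSpace ℂ E]

/-- Adding a large multiple of `‖z - p‖²` absorbs a quadratic error in the support functions. -/
lemma hasHolomorphicSupport_exp_add_mul_norm_sq {v : E → ℝ} {U : Set E} {B : ℝ}
    (hv : ContinuousOn v U)
    (hsupp : ∀ c ∈ U, ∃ g : E → ℂ, (∀ᶠ z in 𝓝 c, DifferentiableAt ℂ g z ∧
      (g z).re ≤ v z + B * ‖z - c‖ ^ 2) ∧ (g c).re = v c) (p : E) (κ : ℝ) :
    HasHolomorphicSupport (fun z => Real.exp (v z + (B * ‖z - p‖ ^ 2 + κ))) U := by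
  refine ⟨Real.continuous_exp.comp_continuousOn (hv.add (by fun_prop)), fun c hc => ?_⟩
  obtain ⟨g, hg, hgc⟩ := hsupp c hc
  have hsq (z : E) : ‖z - p‖ ^ 2 =
      ‖c - p‖ ^ 2 + 2 * (inner ℂ (c - p) (z - c)).re + ‖z - c‖ ^ 2 := by
    rw [show z - p = (c - p) + (z - c) by abel, @norm_add_sq ℂ]
    rfl
  have hre (z : E) : (g z + ((2 * B : ℝ) * inner ℂ (c - p) (z - c) +
      (B * ‖c - p‖ ^ 2 + κ : ℝ))).re =
      (g z).re + (2 * B * (inner ℂ (c - p) (z - c)).re + (B * ‖c - p‖ ^ 2 + κ)) := by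
    rw [add_re, add_re, re_ofReal_mul, ofReal_re]
  refine ⟨fun z => exp (g z + ((2 * B : ℝ) * inner ℂ (c - p) (z - c) +
      (B * ‖c - p‖ ^ 2 + κ : ℝ))), ?_, ?_⟩
  · filter_upwards [hg] with z hz
    have hinner : DifferentiableAt ℂ (fun z => inner ℂ (c - p) (z - c)) z :=
      (innerSL ℂ (c - p)).differentiableAt.comp z (differentiableAt_id.sub_const c)
    refine ⟨(hz.1.add ((hinner.const_mul _).add_const _)).cexp, ?_⟩
    rw [norm_exp, hre, Real.exp_le_exp, hsq z]
    linarith [hz.2]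
  · rw [norm_exp, hre, hgc, sub_self, inner_zero_right, zero_re, mul_zero, zero_add]

/-- A weight `φ` on `Ω`, dominated by `exp (-re (1 / ψ))` near `p`, which is the exponential of a
negative plurisubharmonic function and can be small only near `p`; the last field quantifies how
near. -/
structure IsPeakWeight (Ω : Set E) (p : E) (ψ : E → ℂ) (φ : E → ℝ) : Prop where
  hasHolomorphicSupport : HasHolomorphicSupport φ Ω
  le_one : ∀ y ∈ Ω, φ y ≤ 1
  eventually_le_exp_neg_inv_re : ∀ᶠ y in 𝓝[Ω] p, φ y ≤ Real.exp (-(ψ y)⁻¹.re)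
  exists_le_div : ∃ Q C : ℝ, 0 < Q ∧ 0 < C ∧ ∀ t, Q ≤ t → ∀ y ∈ Ω, φ y ≤ Real.exp (-t) →
    ‖ψ y‖ ≤ C / t ∧ ‖y - p‖ ^ 2 ≤ C / t

variable [FiniteDimensional ℂ E] {Ω : Set E} {p a : E} {ψ : E → ℂ} {M c : ℝ}
  {χ : ContDiffBump p}

/-- The function `re (1 / ψ) + M`, cut off near `p`. -/
def cutoffInvRe (χ : ContDiffBump p) (ψ : E → ℂ) (M : ℝ) (y : E) : ℝ :=
  χ y * ((ψ y)⁻¹.re + M)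

lemma cutoffInvRe_of_mem_closedBall {y : E} (hy : y ∈ closedBall p χ.rIn) :
    cutoffInvRe χ ψ M y = (ψ y)⁻¹.re + M := by
  rw [cutoffInvRe, χ.one_of_mem_closedBall hy, one_mul]

lemma cutoffInvRe_of_rOut_le_dist {y : E} (hy : χ.rOut ≤ dist y p) :
    cutoffInvRe χ ψ M y = 0 := by
  rw [cutoffInvRe, χ.zero_of_le_dist hy, zero_mul]

lemma cutoffInvRe_nonneg
    (hpos : ∀ y ∈ Ω, dist y p ≤ χ.rOut → 0 < (ψ y).re + M * ‖ψ y‖ ^ 2) {y : E} (hy : y ∈ Ω) :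
    0 ≤ cutoffInvRe χ ψ M y := by
  rcases le_total (dist y p) χ.rOut with hyR | hyR
  · exact mul_nonneg χ.nonneg (inv_re_add_nonneg (hpos y hy hyR))
  · exact (cutoffInvRe_of_rOut_le_dist hyR).ge

lemma le_inv_re_of_le_cutoffInvRe
    (hpos : ∀ y ∈ Ω, dist y p ≤ χ.rOut → 0 < (ψ y).re + M * ‖ψ y‖ ^ 2) {y : E} (hy : y ∈ Ω)
    {t : ℝ} (ht : 0 < t) (h : t + M ≤ cutoffInvRe χ ψ M y) (hM : 0 ≤ M) :
    dist y p < χ.rOut ∧ t ≤ (ψ y)⁻¹.re := by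
  have hyR : dist y p < χ.rOut := by
    by_contra! hyR
    rw [cutoffInvRe_of_rOut_le_dist hyR] at h
    linarith
  have : cutoffInvRe χ ψ M y ≤ (ψ y)⁻¹.re + M :=
    mul_le_of_le_one_left (inv_re_add_nonneg (hpos y hy hyR.le)) χ.le_one
  exact ⟨hyR, by linarith⟩

lemma contDiffAt_cutoffInvRe (hψ : ContDiff ℂ 2 ψ) {y : E}
    (hy : dist y p ≤ χ.rOut → ψ y ≠ 0) : ContDiffAt ℝ 2 (cutoffInvRe χ ψ M) y := by
  rcases le_or_gt (dist y p) χ.rOut with hyR | hyR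
  · have hinv : ContDiffAt ℝ 2 (fun y => (ψ y)⁻¹) y :=
      (hψ.restrict_scalars ℝ).contDiffAt.inv (hy hyR)
    exact χ.contDiff.contDiffAt.mul
      ((reCLM.contDiff.contDiffAt.comp y hinv).add contDiffAt_const)
  · refine contDiffAt_const (c := 0) |>.congr_of_eventuallyEq ?_
    filter_upwards [(continuous_id.dist continuous_const).continuousAt.eventually
      (lt_mem_nhds hyR)] with z hz
    exact cutoffInvRe_of_rOut_le_dist (le_of_lt hz)

lemma exists_holomorphic_re_le_neg_cutoffInvRe (hΩ : IsOpen Ω) (hψ : ContDiff ℂ 2 ψ)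
    (hpos : ∀ y ∈ Ω, dist y p ≤ χ.rOut → 0 < (ψ y).re + M * ‖ψ y‖ ^ 2) {B : ℝ} (hB : 0 ≤ B)
    {y : E} (hy : y ∈ Ω)
    (hquad : χ.rIn ≤ dist y p → ∀ᶠ z in 𝓝 y, |cutoffInvRe χ ψ M z - cutoffInvRe χ ψ M y -
      fderiv ℝ (cutoffInvRe χ ψ M) y (z - y)| ≤ B * ‖z - y‖ ^ 2) :
    ∃ g : E → ℂ, (∀ᶠ z in 𝓝 y, DifferentiableAt ℂ g z ∧
      (g z).re ≤ -cutoffInvRe χ ψ M z + B * ‖z - y‖ ^ 2) ∧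
      (g y).re = -cutoffInvRe χ ψ M y := by
  rcases lt_or_ge (dist y p) χ.rIn with hyR | hyR
  · refine ⟨fun z => -((ψ z)⁻¹ + (M : ℂ)), ?_, ?_⟩
    · filter_upwards [isOpen_ball.mem_nhds (mem_ball.2 hyR), hΩ.mem_nhds hy] with z hz hzΩ
      have hz0 := ne_zero_of_pos_re_add
        (hpos z hzΩ ((mem_ball.1 hz).le.trans χ.rIn_lt_rOut.le))
      refine ⟨(((hψ.differentiable two_ne_zero z).inv hz0).add_const _).neg, ?_⟩
      rw [cutoffInvRe_of_mem_closedBall (ball_subset_closedBall hz), neg_re, add_re, ofReal_re]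
      exact le_add_of_nonneg_right (by positivity)
    · rw [cutoffInvRe_of_mem_closedBall (mem_closedBall.2 hyR.le), neg_re, add_re, ofReal_re]
  · set ℓ : E →L[ℂ] ℂ := StrongDual.extendRCLike (𝕜 := ℂ) (fderiv ℝ (cutoffInvRe χ ψ M) y)
    refine ⟨fun z => -(ℓ (z - y) + (cutoffInvRe χ ψ M y : ℂ)), ?_, ?_⟩
    · filter_upwards [hquad hyR] with z hz
      refine ⟨((ℓ.differentiableAt.comp z (differentiableAt_id.sub_const y)).add_const _).neg, ?_⟩
      have hre : (ℓ (z - y)).re = fderiv ℝ (cutoffInvRe χ ψ M) y (z - y) :=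
        StrongDual.re_extendRCLike_apply (𝕜 := ℂ) _ _
      rw [neg_re, add_re, ofReal_re, hre]
      linarith [(abs_le.1 hz).2]
    · simp only [sub_self, map_zero, zero_add, neg_re, ofReal_re]

lemma exists_hasHolomorphicSupport_exp_neg_cutoffInvRe (hΩ : IsOpen Ω)
    (hbd : Bornology.IsBounded Ω) (hp : p ∉ Ω) (hψ : ContDiff ℂ 2 ψ)
    (hpos : ∀ y ∈ closure Ω, y ≠ p → dist y p ≤ χ.rOut → 0 < (ψ y).re + M * ‖ψ y‖ ^ 2) :
    ∃ B : ℝ, 0 ≤ B ∧ ∀ κ : ℝ, HasHolomorphicSupport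
      (fun y => Real.exp (-cutoffInvRe χ ψ M y + (B * ‖y - p‖ ^ 2 + κ))) Ω := by
  have hsmooth : ∀ y ∈ closure Ω, y ≠ p → ContDiffAt ℝ 2 (cutoffInvRe χ ψ M) y :=
    fun y hy hyp => contDiffAt_cutoffInvRe hψ
      fun hyR => ne_zero_of_pos_re_add (hpos y hy hyp hyR)
  have hne : ∀ y ∈ Ω, y ≠ p := fun y hy h => hp (h ▸ hy)
  have hcompact : IsCompact (closure Ω ∩ {y | χ.rIn ≤ dist y p}) :=
    hbd.isCompact_closure.inter_right (isClosed_le continuous_const (by fun_prop))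
  obtain ⟨B, hB, hquad⟩ := exists_forall_mem_eventually_abs_sub_fderiv_le hcompact
    fun y hy => hsmooth y hy.1 (dist_pos.1 (χ.rIn_pos.trans_le hy.2))
  refine ⟨B, hB, hasHolomorphicSupport_exp_add_mul_norm_sq (fun y hy => ?_) (fun y hy => ?_) p⟩
  · exact (hsmooth y (subset_closure hy) (hne y hy)).continuousAt.neg.continuousWithinAt
  · exact exists_holomorphic_re_le_neg_cutoffInvRe hΩ hψ
      (fun z hz => hpos z (subset_closure hz) (hne z hz)) hB hy
      fun hyR => hquad y ⟨subset_closure hy, hyR⟩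

lemma norm_le_and_norm_sub_sq_le_of_le_cutoffInvRe (hM : 0 ≤ M) (hc : 0 < c)
    (hle : ∀ y ∈ Ω, dist y p ≤ χ.rOut → c * ‖y - p‖ ^ 2 ≤ (ψ y).re + M * ‖ψ y‖ ^ 2)
    (hp : p ∉ Ω) {y : E} (hy : y ∈ Ω) {t : ℝ} (ht : 1 ≤ t) (h : t + M ≤ cutoffInvRe χ ψ M y) :
    ‖ψ y‖ ≤ 1 / t ∧ ‖y - p‖ ^ 2 ≤ (1 + M) / c / t := by
  have ht0 : 0 < t := by linarith
  have hpos : ∀ y ∈ Ω, dist y p ≤ χ.rOut → 0 < (ψ y).re + M * ‖ψ y‖ ^ 2 := by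
    intro z hz hzR
    have : 0 < ‖z - p‖ := norm_sub_pos_iff.2 fun h => hp (h ▸ hz)
    exact lt_of_lt_of_le (by positivity) (hle z hz hzR)
  obtain ⟨hyR, hinv⟩ := le_inv_re_of_le_cutoffInvRe hpos hy ht0 h hM
  refine ⟨one_div t ▸ norm_le_inv_of_le_inv_re ht0 hinv, ?_⟩
  have := (hle y hy hyR.le).trans (re_add_mul_norm_sq_le_of_le_inv_re hM ht hinv)
  rwa [div_right_comm, le_div_iff₀' hc]

theorem IsSupportFunction.exists_isPeakWeight (hψ : IsSupportFunction Ω p a ψ)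
    (hΩ : IsOpen Ω) (hp : p ∉ Ω) (hbd : Bornology.IsBounded Ω) : ∃ φ, IsPeakWeight Ω p ψ φ := by
  obtain ⟨M, c, hM, hc, hle⟩ := hψ.exists_le_re_add
  obtain ⟨R, hR, hRle⟩ := Metric.mem_nhdsWithin_iff.1 hle
  let χ : ContDiffBump p := ⟨R / 4, R / 2, by positivity, by linarith⟩
  have hle' : ∀ y ∈ closure Ω, dist y p ≤ χ.rOut →
      c * ‖y - p‖ ^ 2 ≤ (ψ y).re + M * ‖ψ y‖ ^ 2 :=
    fun y hy hyR => hRle ⟨mem_ball.2 (hyR.trans_lt (half_lt_self hR)), hy⟩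
  have hpos : ∀ y ∈ closure Ω, y ≠ p → dist y p ≤ χ.rOut → 0 < (ψ y).re + M * ‖ψ y‖ ^ 2 := by
    intro y hy hyp hyR
    have : 0 < ‖y - p‖ := norm_sub_pos_iff.2 hyp
    exact lt_of_lt_of_le (by positivity) (hle' y hy hyR)
  obtain ⟨B, hB, hsupp⟩ :=
    exists_hasHolomorphicSupport_exp_neg_cutoffInvRe hΩ hbd hp hψ.contDiff hpos
  obtain ⟨D, hD⟩ := hbd.subset_closedBall p
  have hBD : ∀ y ∈ Ω, B * ‖y - p‖ ^ 2 ≤ B * D ^ 2 := fun y hy => by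
    have := mem_closedBall_iff_norm.1 (hD hy)
    gcongr
  refine ⟨_, hsupp (-(B * D ^ 2)), fun y hy => ?_, ?_, 2 * (B * D ^ 2) + 4 * M + 4,
    4 + 4 * ((1 + M) / c), by positivity, by positivity, fun t ht y hy hyt => ?_⟩
  · have : 0 ≤ cutoffInvRe χ ψ M y := cutoffInvRe_nonneg
      (fun z hz => hpos z (subset_closure hz) fun h => hp (h ▸ hz)) hy
    exact Real.exp_le_one_iff.2 (by linarith [hBD y hy])
  · filter_upwards [self_mem_nhdsWithin,
      mem_nhdsWithin_of_mem_nhds (closedBall_mem_nhds p χ.rIn_pos)] with y hy hyR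
    rw [cutoffInvRe_of_mem_closedBall hyR, Real.exp_le_exp]
    linarith [hBD y hy]
  · have : 0 ≤ B * D ^ 2 := by positivity
    have : 0 ≤ B * ‖y - p‖ ^ 2 := by positivity
    have hdiv : 0 ≤ (1 + M) / c := by positivity
    have := Real.exp_le_exp.1 hyt
    obtain ⟨hψy, hyp⟩ := norm_le_and_norm_sub_sq_le_of_le_cutoffInvRe (t := t / 4) hM hc
      (fun z hz => hle' z (subset_closure hz)) hp hy (by linarith) (by linarith)
    have ht0 : 0 < t := by linarith
    refine ⟨hψy.trans ?_, hyp.trans ?_⟩ <;> rw [div_div_eq_mul_div] <;> gcongr <;> linarith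

end Barrier

section SecondOrderContact

variable {E : Type*} [NormedAddCommGroup E] {Ω : Set E} {F : E → E} {p : E}

lemma isBigO_sub_of_isLittleO_sub (hp : (fun z => F z - z) =o[𝓝[Ω] p] fun z => ‖z - p‖ ^ 2) :
    (fun z => F z - p) =O[𝓝[Ω] p] fun z => z - p := by
  have hsq : (fun z => ‖z - p‖ ^ 2) =O[𝓝[Ω] p] fun z => z - p := by
    have : (fun z => (z - p : E)) =O[𝓝 p] fun _ => (1 : ℝ) :=
      (Continuous.tendsto (by fun_prop) p).isBigO_one ℝ
    simpa [pow_two] using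
      (this.norm_left.mul (Asymptotics.isBigO_refl (fun z => ‖z - p‖) (𝓝 p))).norm_right.mono
        nhdsWithin_le_nhds
  simpa using (hp.isBigO.trans hsq).add (Asymptotics.isBigO_refl _ _)

lemma tendsto_nhdsWithin_of_isLittleO_sub (hm : MapsTo F Ω Ω)
    (hp : (fun z => F z - z) =o[𝓝[Ω] p] fun z => ‖z - p‖ ^ 2) :
    Tendsto F (𝓝[Ω] p) (𝓝[Ω] p) := by
  refine tendsto_nhdsWithin_iff.2 ⟨?_, eventually_mem_nhdsWithin.mono hm⟩
  refine tendsto_sub_nhds_zero_iff.1 ((isBigO_sub_of_isLittleO_sub hp).trans_tendsto ?_)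
  exact tendsto_sub_nhds_zero_iff.2 (tendsto_id.mono_left nhdsWithin_le_nhds)

lemma isLittleO_iterate_sub (hm : MapsTo F Ω Ω)
    (hp : (fun z => F z - z) =o[𝓝[Ω] p] fun z => ‖z - p‖ ^ 2) (k : ℕ) :
    (fun z => F^[k] z - z) =o[𝓝[Ω] p] fun z => ‖z - p‖ ^ 2 := by
  induction k with
  | zero => simp
  | succ k ih =>
    have hstep := (ih.comp_tendsto (tendsto_nhdsWithin_of_isLittleO_sub hm hp)).trans_isBigO
      ((isBigO_sub_of_isLittleO_sub hp).norm_norm.pow 2)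
    simpa using hstep.add hp

end SecondOrderContact

section PoissonEstimate

lemma le_inv_re_of_norm_sub_le {w : ℂ} {r : ℝ} (hr : 0 < r) (h : ‖w - r‖ ≤ r / 4) :
    1 / (4 * r) ≤ w⁻¹.re := by
  have hre : 3 / 4 * r ≤ w.re := by
    have := (abs_le.1 ((abs_re_le_norm _).trans h)).1
    rw [sub_re, ofReal_re] at this
    linarith
  have hnorm : ‖w‖ ≤ 5 / 4 * r := by
    have := norm_le_norm_add_norm_sub' w (r : ℂ)
    rw [norm_real, Real.norm_of_nonneg hr.le] at this
    linarith
  have hw : 0 < ‖w‖ := by linarith [re_le_norm w]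
  have hsq : ‖w‖ ^ 2 ≤ (5 / 4 * r) ^ 2 := by gcongr
  rw [inv_re, normSq_eq_norm_sq, div_le_div_iff₀ (by positivity) (by positivity)]
  nlinarith only [hsq, hre, hr]

lemma HasHolomorphicSupport.le_exp_poisson_one {φ : ℂ → ℝ} {M : ℝ} (hM : 0 ≤ M)
    (h : HasHolomorphicSupport φ (ball 0 1)) (h1 : ∀ z ∈ ball (0 : ℂ) 1, φ z ≤ 1)
    (hsmall : ∀ᶠ s : ℝ in 𝓝[>] 0, ∀ z ∈ ball (0 : ℂ) 1, ‖z - (1 - s : ℝ)‖ ≤ s / 15 →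
      φ z ≤ Real.exp (-(M / s))) {z : ℂ} (hz : z ∈ ball (0 : ℂ) 1) :
    φ z ≤ Real.exp (-(M / 4 * ((1 - ‖z‖ ^ 2) / ‖1 - z‖ ^ 2))) := by
  have hz1 : ‖z‖ < 1 := mem_ball_zero_iff.1 hz
  have hne : ‖1 - ((1 - (0 : ℝ) : ℝ) : ℂ) * z‖ ^ 2 ≠ 0 := by
    have : (1 : ℂ) - z ≠ 0 := sub_ne_zero.2 fun h => by simp [← h] at hz1
    simpa using this
  have hlim : Tendsto (fun s : ℝ => Real.exp (-(M * (2 - s) / 8 *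
      ((1 - ‖z‖ ^ 2) / ‖1 - ((1 - s : ℝ) : ℂ) * z‖ ^ 2)))) (𝓝[>] 0)
      (𝓝 (Real.exp (-(M * (2 - 0) / 8 *
        ((1 - ‖z‖ ^ 2) / ‖1 - ((1 - (0 : ℝ) : ℝ) : ℂ) * z‖ ^ 2))))) := by
    have : ContinuousAt (fun s : ℝ => M * (2 - s) / 8 *
        ((1 - ‖z‖ ^ 2) / ‖1 - ((1 - s : ℝ) : ℂ) * z‖ ^ 2)) 0 :=
      ContinuousAt.mul (by fun_prop) (continuousAt_const.div (by fun_prop) hne)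
    exact this.neg.rexp.tendsto.mono_left nhdsWithin_le_nhds
  have hbound := ge_of_tendsto (b := φ z) hlim ?_
  · refine hbound.trans_eq ?_
    rw [sub_zero, sub_zero, ofReal_one, one_mul]
    ring_nf
  filter_upwards [hsmall, Ioo_mem_nhdsGT (zero_lt_one' ℝ)] with s hs ⟨hs0, hs1⟩
  have hnorm : ‖((1 - s : ℝ) : ℂ)‖ = 1 - s := by
    rw [norm_real, Real.norm_of_nonneg (by linarith)]
  have hs' : ∀ w ∈ ball (0 : ℂ) 1, ‖w - (1 - s : ℝ)‖ ≤ (1 - ‖((1 - s : ℝ) : ℂ)‖) / 15 →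
      φ w ≤ Real.exp (-(M / s)) := by
    rwa [hnorm, sub_sub_cancel]
  refine (h.le_exp_poisson h1 (by linarith) (by positivity) hs' hz).trans_eq ?_
  rw [hnorm, conj_ofReal]
  congr 2
  field_simp
  ring

variable {E : Type*} [NormedAddCommGroup E] [InnerProductSpace ℂ E] {Ω : Set E} {p a u : E}
  {ψ : E → ℂ} {φ : E → ℝ} {G : E → E}

/-- The pluricomplex Poisson kernel of the ball `ball (p - a) ‖a‖` with pole at its boundary
point `p`. -/
def ballPoissonKernel (p a x : E) : ℝ :=
  ‖a‖ ^ 2 * (‖a‖ ^ 2 - ‖x - (p - a)‖ ^ 2) / ‖inner ℂ a (x - p)‖ ^ 2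

lemma norm_add_smul_sq_of_inner_eq (hu : inner ℂ a u = -(‖a‖ : ℂ) ^ 2) (τ : ℂ) :
    ‖a + τ • u‖ ^ 2 = ‖a‖ ^ 2 - 2 * ‖a‖ ^ 2 * τ.re + ‖u‖ ^ 2 * ‖τ‖ ^ 2 := by
  have hre : (-(τ * (‖a‖ : ℂ) ^ 2)).re = -(‖a‖ ^ 2 * τ.re) := by
    rw [neg_re, ← ofReal_pow, re_mul_ofReal, mul_comm]
  rw [@norm_add_sq ℂ, inner_smul_right, hu, norm_smul, mul_neg]
  change ‖a‖ ^ 2 + 2 * (-(τ * (‖a‖ : ℂ) ^ 2)).re + (‖τ‖ * ‖u‖) ^ 2 = _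
  rw [hre]
  ring

lemma ballPoissonKernel_add_smul (ha : a ≠ 0) (hu : inner ℂ a u = -(‖a‖ : ℂ) ^ 2) (η : ℂ) :
    ballPoissonKernel p a (p + η • u) =
      (2 * η.re - ‖u‖ ^ 2 / ‖a‖ ^ 2 * ‖η‖ ^ 2) / ‖η‖ ^ 2 := by
  have : 0 < ‖a‖ := norm_pos_iff.2 ha
  have hsub : p + η • u - (p - a) = a + η • u := by abel
  rw [ballPoissonKernel, hsub, norm_add_smul_sq_of_inner_eq hu, add_sub_cancel_left,
    inner_smul_right, hu, norm_mul, norm_neg, norm_pow, norm_real, norm_norm]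
  field_simp
  ring

lemma mem_ball_of_ballPoissonKernel_pos {x : E} (hx : 0 < ballPoissonKernel p a x) :
    x ∈ ball (p - a) ‖a‖ := by
  by_contra hx'
  have : ‖a‖ ^ 2 ≤ ‖x - (p - a)‖ ^ 2 := by
    gcongr
    simpa only [mem_ball_iff_norm, not_lt] using hx'
  exact hx.not_ge (div_nonpos_of_nonpos_of_nonneg
    (mul_nonpos_of_nonneg_of_nonpos (by positivity) (by linarith)) (by positivity))

lemma exists_eq_add_smul_of_mem_ball {x : E} (hx : x ∈ ball (p - a) ‖a‖) :
    ∃ (u : E) (η : ℂ), η ≠ 0 ∧ inner ℂ a u = -(‖a‖ : ℂ) ^ 2 ∧ x = p + η • u := by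
  have hxa : ‖(x - p) + a‖ < ‖a‖ := by
    rwa [sub_add, ← mem_ball_iff_norm]
  have ha : (‖a‖ : ℂ) ≠ 0 := ofReal_ne_zero.2 ((norm_nonneg _).trans_lt hxa).ne'
  have hinner : inner ℂ a (x - p) ≠ 0 := fun h0 => by
    have := norm_add_sq_eq_norm_sq_add_norm_sq_of_inner_eq_zero (𝕜 := ℂ) _ _
      (inner_eq_zero_symm.1 h0)
    nlinarith [norm_nonneg (x - p + a), norm_nonneg (x - p)]
  set η : ℂ := -(inner ℂ a (x - p) / (‖a‖ : ℂ) ^ 2) with hη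
  have hη0 : η ≠ 0 := neg_ne_zero.2 (div_ne_zero hinner (pow_ne_zero 2 ha))
  refine ⟨η⁻¹ • (x - p), η, hη0, ?_, by rw [smul_inv_smul₀ hη0, add_sub_cancel]⟩
  rw [inner_smul_right, hη]
  field_simp

lemma norm_one_sub_sq (ξ : ℂ) : ‖1 - ξ‖ ^ 2 = 1 - 2 * ξ.re + ‖ξ‖ ^ 2 := by
  rw [@norm_sub_sq_real, norm_one, real_inner_eq_re_inner ℂ]
  simp

lemma mapsTo_add_smul_ball (ha : a ≠ 0) (hu : inner ℂ a u = -(‖a‖ : ℂ) ^ 2) :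
    MapsTo (fun ξ : ℂ => p + ((1 - ξ) / (‖u‖ ^ 2 / ‖a‖ ^ 2 : ℝ)) • u) (ball 0 1)
      (ball (p - a) ‖a‖) := by
  intro ξ hξ
  have ha0 : 0 < ‖a‖ := norm_pos_iff.2 ha
  have hu0 : 0 < ‖u‖ := norm_pos_iff.2 fun h => by simp [h, ha] at hu
  have hξ1 : ‖ξ‖ ^ 2 < 1 := pow_lt_one₀ (norm_nonneg _) (mem_ball_zero_iff.1 hξ) two_ne_zero
  have hsub : p + ((1 - ξ) / (‖u‖ ^ 2 / ‖a‖ ^ 2 : ℝ)) • u - (p - a) =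
      a + ((1 - ξ) / (‖u‖ ^ 2 / ‖a‖ ^ 2 : ℝ)) • u := by abel
  rw [mem_ball_iff_norm, hsub]
  refine lt_of_pow_lt_pow_left₀ 2 ha0.le ?_
  rw [norm_add_smul_sq_of_inner_eq hu, div_ofReal_re, norm_div, norm_real,
    Real.norm_of_nonneg (by positivity), div_pow, norm_one_sub_sq, sub_re, one_re]
  field_simp
  nlinarith [mul_pos ha0 ha0]

lemma tendsto_add_smul_nhdsWithin (Ω : Set E) (p u : E) :
    Tendsto (fun τ : ℂ => p + τ • u) (𝓝[(fun τ : ℂ => p + τ • u) ⁻¹' Ω] 0) (𝓝[Ω] p) := by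
  have : Tendsto (fun τ : ℂ => p + τ • u) (𝓝 0) (𝓝 p) :=
    (by fun_prop : Continuous fun τ : ℂ => p + τ • u).tendsto' 0 p (by simp)
  exact this.inf (tendsto_principal_principal.2 fun _ => id)

lemma IsSupportFunction.isLittleO_comp_add_smul_sub (hψ : IsSupportFunction Ω p a ψ)
    (ha : a ≠ 0)
    (hp : (fun z => G z - z) =o[𝓝[Ω] p] fun z => ‖z - p‖ ^ 2)
    (hu : inner ℂ a u = -(‖a‖ : ℂ) ^ 2) :
    (fun τ : ℂ => ψ (G (p + τ • u)) - τ) =o[𝓝[(fun τ : ℂ => p + τ • u) ⁻¹' Ω] 0] id := by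
  have hγ := tendsto_add_smul_nhdsWithin Ω p u
  have hsq : (fun τ : ℂ => ‖p + τ • u - p‖ ^ 2) =o[𝓝[(fun τ : ℂ => p + τ • u) ⁻¹' Ω] 0] id := by
    have : (fun τ : ℂ => ‖τ ^ 2‖) =o[𝓝 0] id :=
      (Asymptotics.isLittleO_pow_id one_lt_two).norm_left
    simpa [norm_smul, mul_pow, mul_comm] using
      (this.const_mul_left (‖u‖ ^ 2)).mono nhdsWithin_le_nhds
  have hGγ := (hp.comp_tendsto hγ).trans hsq
  have hquad : (fun τ : ℂ => ψ (G (p + τ • u)) + inner ℂ a (G (p + τ • u) - p) / (‖a‖ : ℂ) ^ 2)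
      =o[𝓝[(fun τ : ℂ => p + τ • u) ⁻¹' Ω] 0] id := by
    obtain ⟨C, -, hC⟩ := hψ.exists_norm_add_le
    have hbig := (Asymptotics.IsBigO.of_bound' (l := ⊤) (Eventually.of_forall fun y =>
      (hC y).trans (Real.le_norm_self _))).comp_tendsto (k := fun τ : ℂ => G (p + τ • u))
        (l' := 𝓝[(fun τ : ℂ => p + τ • u) ⁻¹' Ω] 0) tendsto_top
    exact (hbig.trans (((((isBigO_sub_of_isLittleO_sub hp).norm_norm.pow 2).const_mul_left
      C).comp_tendsto hγ))).trans_isLittleO hsq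
  have hinner := (((innerSL ℂ a).isBigO_comp _ _).trans_isLittleO hGγ).const_mul_left
    ((‖a‖ : ℂ) ^ 2)⁻¹
  refine (hquad.sub hinner).congr_left fun τ => ?_
  have ha0 : (‖a‖ : ℂ) ≠ 0 := ofReal_ne_zero.2 (norm_ne_zero_iff.2 ha)
  have hsplit : inner ℂ a (G (p + τ • u) - p) =
      inner ℂ a (G (p + τ • u) - (p + τ • u)) - τ * (‖a‖ : ℂ) ^ 2 := by
    rw [← sub_add_sub_cancel _ (p + τ • u) p, inner_add_right, add_sub_cancel_left,
      inner_smul_right, hu, mul_neg, ← sub_eq_add_neg]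
  simp only [innerSL_apply_apply, Function.comp_apply, hsplit]
  field_simp
  ring

lemma eventually_forall_norm_sub_le_of_eventually {P : ℂ → Prop} (h : ∀ᶠ τ in 𝓝 (0 : ℂ), P τ)
    (c : ℝ) : ∀ᶠ r : ℝ in 𝓝[>] 0, ∀ τ : ℂ, ‖τ - r‖ ≤ c * r → P τ := by
  obtain ⟨δ, hδ, hP⟩ := Metric.eventually_nhds_iff.1 h
  have hlim : ∀ᶠ r : ℝ in 𝓝 0, c * r + r < δ :=
    (by fun_prop : Continuous fun r : ℝ => c * r + r).continuousAt.eventually_lt_const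
      (by simpa using hδ)
  filter_upwards [self_mem_nhdsWithin, mem_nhdsWithin_of_mem_nhds hlim] with r hr hrδ τ hτ
  refine hP ?_
  have := norm_le_norm_add_norm_sub' τ (r : ℂ)
  rw [norm_real, Real.norm_of_nonneg (le_of_lt hr)] at this
  rw [dist_zero_right]
  linarith

lemma IsPeakWeight.eventually_comp_le_exp (hφ : IsPeakWeight Ω p ψ φ)
    (hψ : IsSupportFunction Ω p a ψ) (ha : a ≠ 0) (hm : MapsTo G Ω Ω)
    (hp : (fun z => G z - z) =o[𝓝[Ω] p] fun z => ‖z - p‖ ^ 2)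
    (hu : inner ℂ a u = -(‖a‖ : ℂ) ^ 2) :
    ∀ᶠ r : ℝ in 𝓝[>] 0, ∀ τ : ℂ, ‖τ - r‖ ≤ 1 / 15 * r → p + τ • u ∈ Ω →
      φ (G (p + τ • u)) ≤ Real.exp (-(1 / (4 * r))) := by
  have hweight := ((tendsto_nhdsWithin_of_isLittleO_sub hm hp).comp
    (tendsto_add_smul_nhdsWithin Ω p u)).eventually
    hφ.eventually_le_exp_neg_inv_re
  have hsupport := (hψ.isLittleO_comp_add_smul_sub ha hp hu).bound (c := 1 / 10) (by norm_num)
  filter_upwards [self_mem_nhdsWithin, eventually_forall_norm_sub_le_of_eventually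
    (eventually_nhdsWithin_iff.1 (hweight.and hsupport)) (1 / 15)] with r hr h τ hτ hτΩ
  have hr0 : 0 < r := hr
  obtain ⟨hle, hnorm⟩ := h τ hτ hτΩ
  refine hle.trans (Real.exp_le_exp.2 (neg_le_neg (le_inv_re_of_norm_sub_le hr ?_)))
  have hτr := norm_le_norm_add_norm_sub' τ (r : ℂ)
  rw [norm_real, Real.norm_of_nonneg hr0.le] at hτr
  have htri := norm_sub_le_norm_sub_add_norm_sub (ψ (G (p + τ • u))) τ r
  rw [id] at hnorm
  exact htri.trans (by linarith)

lemma IsPeakWeight.comp_le_exp_of_mem_disc (hφ : IsPeakWeight Ω p ψ φ)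
    (hψ : IsSupportFunction Ω p a ψ) (ha : a ≠ 0) (hball : ball (p - a) ‖a‖ ⊆ Ω)
    (hG : DifferentiableOn ℂ G Ω) (hm : MapsTo G Ω Ω)
    (hp : (fun z => G z - z) =o[𝓝[Ω] p] fun z => ‖z - p‖ ^ 2)
    (hu : inner ℂ a u = -(‖a‖ : ℂ) ^ 2) {β : ℝ} (hβ : β = ‖u‖ ^ 2 / ‖a‖ ^ 2) {ξ : ℂ}
    (hξ : ξ ∈ ball (0 : ℂ) 1) :
    φ (G (p + ((1 - ξ) / β) • u)) ≤
      Real.exp (-(β / 16 * ((1 - ‖ξ‖ ^ 2) / ‖1 - ξ‖ ^ 2))) := by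
  have : 0 < ‖a‖ := norm_pos_iff.2 ha
  have : 0 < ‖u‖ := norm_pos_iff.2 fun h => by simp [h, ha] at hu
  have hβ0 : 0 < β := by rw [hβ]; positivity
  have hdisc : MapsTo (fun ξ : ℂ => p + ((1 - ξ) / β) • u) (ball 0 1) Ω :=
    hβ ▸ (mapsTo_add_smul_ball ha hu).mono_right hball
  have hγ : Differentiable ℂ fun ξ : ℂ => p + ((1 - ξ) / β) • u := by fun_prop
  have hsupp := hφ.hasHolomorphicSupport.comp isOpen_ball (hG.comp hγ.differentiableOn hdisc)
    (hm.comp hdisc)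
  have hscale : Tendsto (fun s : ℝ => s / β) (𝓝[>] 0) (𝓝[>] 0) :=
    ((by fun_prop : Continuous fun s : ℝ => s / β).tendsto' 0 0 (zero_div β)).inf
      (tendsto_principal_principal.2 fun s hs => div_pos hs hβ0)
  refine (hsupp.le_exp_poisson_one (M := β / 4) (by positivity)
    (fun z hz => hφ.le_one _ (hm (hdisc hz))) ?_ hξ).trans_eq (by congr 2; ring)
  filter_upwards [hscale.eventually (hφ.eventually_comp_le_exp hψ ha hm hp hu)] with s hs z hz hzs
  refine (hs ((1 - z) / β) ?_ (hdisc hz)).trans_eq (by congr 2; field_simp)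
  have hdiv : (1 - z) / β - ((s / β : ℝ) : ℂ) = -(z - ((1 - s : ℝ) : ℂ)) / β := by
    push_cast
    ring
  rw [hdiv, norm_div, norm_neg, norm_real, Real.norm_of_nonneg hβ0.le]
  calc ‖z - ((1 - s : ℝ) : ℂ)‖ / β ≤ s / 15 / β := by gcongr
    _ = 1 / 15 * (s / β) := by ring

theorem IsPeakWeight.comp_le_exp_ballPoissonKernel (hφ : IsPeakWeight Ω p ψ φ)
    (hψ : IsSupportFunction Ω p a ψ) (hball : ball (p - a) ‖a‖ ⊆ Ω)
    (hG : DifferentiableOn ℂ G Ω) (hm : MapsTo G Ω Ω)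
    (hp : (fun z => G z - z) =o[𝓝[Ω] p] fun z => ‖z - p‖ ^ 2) {x : E}
    (hx : x ∈ ball (p - a) ‖a‖) :
    φ (G x) ≤ Real.exp (-(ballPoissonKernel p a x / 16)) := by
  have ha0 : 0 < ‖a‖ := (norm_nonneg _).trans_lt (mem_ball_iff_norm.1 hx)
  have ha : a ≠ 0 := norm_pos_iff.1 ha0
  obtain ⟨u, η, hη0, hu, rfl⟩ := exists_eq_add_smul_of_mem_ball hx
  have hu0 : 0 < ‖u‖ := norm_pos_iff.2 fun h => by simp [h, ha] at hu
  obtain ⟨β, hβ⟩ : ∃ β : ℝ, β = ‖u‖ ^ 2 / ‖a‖ ^ 2 := ⟨_, rfl⟩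
  have hβ0 : 0 < β := by rw [hβ]; positivity
  have hβC : (β : ℂ) ≠ 0 := ofReal_ne_zero.2 hβ0.ne'
  have hηβ : β * ‖η‖ ^ 2 < 2 * η.re := by
    have hsq : ‖a + η • u‖ ^ 2 < ‖a‖ ^ 2 := by
      gcongr
      rwa [mem_ball_iff_norm, show p + η • u - (p - a) = a + η • u by abel] at hx
    rw [norm_add_smul_sq_of_inner_eq hu] at hsq
    rw [hβ, div_mul_eq_mul_div, div_lt_iff₀ (by positivity)]
    linarith
  have hξsq : ‖1 - β * η‖ ^ 2 = 1 - β * (2 * η.re - β * ‖η‖ ^ 2) := by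
    rw [norm_one_sub_sq, re_ofReal_mul, norm_mul, norm_real, Real.norm_of_nonneg hβ0.le]
    ring
  have hξ : 1 - β * η ∈ ball (0 : ℂ) 1 := by
    rw [mem_ball_zero_iff, ← sq_lt_one_iff₀ (norm_nonneg _), hξsq]
    linarith [mul_pos hβ0 (sub_pos.2 hηβ)]
  have hle := hφ.comp_le_exp_of_mem_disc hψ ha hball hG hm hp hu hβ hξ
  rw [sub_sub_cancel, mul_div_cancel_left₀ _ hβC, hξsq, norm_mul, norm_real,
    Real.norm_of_nonneg hβ0.le] at hle
  refine hle.trans_eq ?_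
  rw [ballPoissonKernel_add_smul ha hu, ← hβ]
  have : 0 < ‖η‖ := norm_pos_iff.2 hη0
  congr 2
  field_simp
  ring

end PoissonEstimate

section Straighten

lemma norm_det_le_of_norm_le_mul {ι R : Type*} [Fintype ι] [DecidableEq ι] [NormedField R]
    {M : Matrix ι ι R} {r c : ι → ℝ} (h : ∀ i j, ‖M i j‖ ≤ r i * c j) :
    ‖M.det‖ ≤ (Fintype.card ι).factorial * ((∏ i, r i) * ∏ j, c j) := by
  have hterm : ∀ σ ∈ (Finset.univ : Finset (Equiv.Perm ι)),
      ‖Equiv.Perm.sign σ • ∏ i, M (σ i) i‖ ≤ (∏ i, r i) * ∏ j, c j := by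
    intro σ _
    have hsign : ‖Equiv.Perm.sign σ • ∏ i, M (σ i) i‖ = ‖∏ i, M (σ i) i‖ := by
      rcases Int.units_eq_one_or (Equiv.Perm.sign σ) with hs | hs <;> simp [hs]
    rw [hsign, norm_prod, ← Equiv.prod_comp σ r, ← Finset.prod_mul_distrib]
    exact Finset.prod_le_prod (fun _ _ => norm_nonneg _) fun i _ => h _ _
  rw [Matrix.det_apply]
  refine (norm_sum_le_of_le _ hterm).trans_eq ?_
  rw [Finset.sum_const, Finset.card_univ, Fintype.card_perm, nsmul_eq_mul]

variable {E : Type*} [NormedAddCommGroup E] [InnerProductSpace ℂ E]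

lemma norm_inner_fderiv_apply_le {H : E → E} {x w b : E} {s B : ℝ} (hs : 0 < s)
    (hd : ∀ ζ ∈ ball (0 : ℂ) s, DifferentiableAt ℂ H (x + ζ • w))
    (hB : ∀ ζ ∈ ball (0 : ℂ) s, ‖inner ℂ b (H (x + ζ • w))‖ ≤ B) :
    ‖inner ℂ b (fderiv ℂ H x w)‖ ≤ 2 * B / s := by
  have hline (ζ : ℂ) : HasDerivAt (fun ζ : ℂ => x + ζ • w) w ζ := by
    simpa using ((hasDerivAt_id ζ).smul_const w).const_add x
  have hcomp : ∀ ζ ∈ ball (0 : ℂ) s, HasDerivAt (fun ζ : ℂ => inner ℂ b (H (x + ζ • w)))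
      (inner ℂ b (fderiv ℂ H (x + ζ • w) w)) ζ := fun ζ hζ =>
    (innerSL ℂ b).hasFDerivAt.comp_hasDerivAt ζ
      ((hd ζ hζ).hasFDerivAt.comp_hasDerivAt ζ (hline ζ))
  have hle := norm_fderiv_le_of_norm_le_ball hs
    (fun ζ hζ => (hcomp ζ hζ).differentiableAt.differentiableWithinAt) hB
  have hderiv := (hcomp 0 (mem_ball_self hs)).deriv
  rw [zero_smul, add_zero] at hderiv
  rwa [← hderiv, norm_deriv_eq_norm_fderiv]

lemma norm_det_fderiv_le_of_norm_inner_le {ι : Type*} [Fintype ι]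
    (b : OrthonormalBasis ι ℂ E) {H : E → E} {x : E} {r ρ : ι → ℝ} (hρ : ∀ j, 0 < ρ j)
    (hd : ∀ j, ∀ ζ ∈ ball (0 : ℂ) (ρ j), DifferentiableAt ℂ H (x + ζ • b j))
    (hr : ∀ i j, ∀ ζ ∈ ball (0 : ℂ) (ρ j), ‖inner ℂ (b i) (H (x + ζ • b j))‖ ≤ r i) :
    ‖(fderiv ℂ H x).det‖ ≤ (Fintype.card ι).factorial * ((∏ i, r i) * ∏ j, 2 / ρ j) := by
  classical
  have hentry : ∀ i j, ‖LinearMap.toMatrix b.toBasis b.toBasis (fderiv ℂ H x).toLinearMap i j‖ ≤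
      r i * (2 / ρ j) := fun i j => by
    rw [LinearMap.toMatrix_apply, b.coe_toBasis, b.coe_toBasis_repr_apply, b.repr_apply_apply]
    exact (norm_inner_fderiv_apply_le (hρ j) (hd j) (hr i j)).trans_eq (by ring)
  have hdet := norm_det_le_of_norm_le_mul hentry
  rwa [LinearMap.det_toMatrix] at hdet

lemma exists_orthonormalBasis_apply_eq [FiniteDimensional ℂ E] {a : E} (ha : a ≠ 0) :
    ∃ (i₀ : Fin (Module.finrank ℂ E)) (b : OrthonormalBasis (Fin (Module.finrank ℂ E)) ℂ E),
      a = (‖a‖ : ℂ) • b i₀ := by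
  have := nontrivial_of_ne a 0 ha
  let i₀ : Fin (Module.finrank ℂ E) := ⟨0, Module.finrank_pos⟩
  have ha0 : (‖a‖ : ℂ) ≠ 0 := ofReal_ne_zero.2 (norm_ne_zero_iff.2 ha)
  have hv : Orthonormal ℂ (({i₀} : Set (Fin (Module.finrank ℂ E))).domRestrict
      fun _ => (‖a‖ : ℂ)⁻¹ • a) :=
    ⟨fun _ => norm_smul_inv_norm ha, fun i j hij => absurd (Subsingleton.elim i j) hij⟩
  obtain ⟨b, hb⟩ := hv.exists_orthonormalBasis_extension_of_card_eq (by simp)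
  exact ⟨i₀, b, by rw [hb i₀ rfl, smul_inv_smul₀ ha0]⟩

variable {Ω : Set E} {p a : E} {ψ : E → ℂ}

lemma ballPoissonKernel_sub_smul_add (ha : a ≠ 0) {w : E} (hw : inner ℂ a w = 0) (η : ℂ) :
    ballPoissonKernel p a (p - η • a + w) =
      (2 * η.re - ‖η‖ ^ 2 - ‖w‖ ^ 2 / ‖a‖ ^ 2) / ‖η‖ ^ 2 := by
  have : 0 < ‖a‖ := norm_pos_iff.2 ha
  have hsub : p - η • a + w - (p - a) = (1 - η) • a + w := by module
  have hnorm : ‖(1 - η) • a + w‖ ^ 2 = ‖1 - η‖ ^ 2 * ‖a‖ ^ 2 + ‖w‖ ^ 2 := by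
    have := norm_add_sq_eq_norm_sq_add_norm_sq_of_inner_eq_zero (𝕜 := ℂ) ((1 - η) • a) w
      (by rw [inner_smul_left, hw, mul_zero])
    rw [pow_two, this, norm_smul]
    ring
  have hinner : inner ℂ a (p - η • a + w - p) = -(η * (‖a‖ : ℂ) ^ 2) := by
    rw [show p - η • a + w - p = w - η • a by abel, inner_sub_right, hw, inner_smul_right,
      inner_self_eq_norm_sq_to_K, zero_sub]
    rfl
  rw [ballPoissonKernel, hsub, hnorm, hinner, norm_one_sub_sq, norm_neg, norm_mul, norm_pow,
    norm_real, norm_norm]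
  field_simp
  ring

lemma le_ballPoissonKernel_sub_smul_add (ha : a ≠ 0) {η : ℂ} (hη : ‖η‖ ^ 2 ≤ η.re / 8) {w : E}
    (hw : inner ℂ a w = 0) (hwη : ‖w‖ ^ 2 ≤ ‖a‖ ^ 2 / 4 * η.re) :
    η.re / (4 * ‖η‖ ^ 2) ≤ ballPoissonKernel p a (p - η • a + w) := by
  have : 0 < ‖a‖ := norm_pos_iff.2 ha
  have : ‖w‖ ^ 2 / ‖a‖ ^ 2 ≤ η.re / 4 := by
    rw [div_le_iff₀ (by positivity)]
    linarith
  have := sq_nonneg ‖η‖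
  rw [ballPoissonKernel_sub_smul_add ha hw, ← div_div]
  gcongr
  linarith

lemma le_ballPoissonKernel_sub_smul_add_smul (ha : a ≠ 0) {η ω : ℂ} (hη₀ : 0 < η.re)
    (hη : ‖η‖ ^ 2 ≤ η.re / 8) (hω : ‖ω‖ ≤ η.re / 2) :
    η.re / (4 * ‖η‖ ^ 2) ≤ ballPoissonKernel p a (p - η • a + ω • a) := by
  have hηre := re_le_norm η
  have hωre := re_le_norm ω
  have hηpos : 0 < ‖η‖ := hη₀.trans_le hηre
  have hpos : 0 < ‖η - ω‖ := by linarith [norm_sub_norm_le η ω]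
  have hsq : ‖η - ω‖ ^ 2 ≤ 9 / 4 * ‖η‖ ^ 2 := calc
    ‖η - ω‖ ^ 2 ≤ (3 / 2 * ‖η‖) ^ 2 := by gcongr; linarith [norm_sub_le η ω]
    _ = 9 / 4 * ‖η‖ ^ 2 := by ring
  have hpoint : p - η • a + ω • a = p - (η - ω) • a + 0 := by module
  rw [hpoint, ballPoissonKernel_sub_smul_add ha (inner_zero_right a), sub_re, norm_zero]
  calc η.re / (4 * ‖η‖ ^ 2) = 9 / 16 * η.re / (9 / 4 * ‖η‖ ^ 2) := by field_simp; norm_num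
    _ ≤ 9 / 16 * η.re / ‖η - ω‖ ^ 2 := by gcongr
    _ ≤ (2 * (η.re - ω.re) - ‖η - ω‖ ^ 2 - 0 ^ 2 / ‖a‖ ^ 2) / ‖η - ω‖ ^ 2 := by
      gcongr
      rw [zero_pow two_ne_zero, zero_div]
      linarith

lemma le_ballPoissonKernel_sub_smul_add_smul_apply {ι : Type*} [Fintype ι] [DecidableEq ι]
    {b : OrthonormalBasis ι ℂ E} {i₀ : ι} (ha : a ≠ 0) (hab : a = (‖a‖ : ℂ) • b i₀) {η ζ : ℂ}
    (hη₀ : 0 < η.re) (hη : ‖η‖ ^ 2 ≤ η.re / 8) {j : ι}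
    (hζ : ‖ζ‖ ≤ ‖a‖ / 2 * if j = i₀ then η.re else √η.re) :
    η.re / (4 * ‖η‖ ^ 2) ≤ ballPoissonKernel p a (p - η • a + ζ • b j) := by
  have hapos : 0 < ‖a‖ := norm_pos_iff.2 ha
  split_ifs at hζ with hj
  · have hdir : ζ • b j = (ζ / ‖a‖) • a := by
      nth_rw 2 [hab]
      rw [hj, smul_smul, div_mul_cancel₀ _ (ofReal_ne_zero.2 hapos.ne')]
    rw [hdir]
    refine le_ballPoissonKernel_sub_smul_add_smul ha hη₀ hη ?_
    rw [norm_div, norm_real, norm_norm, div_le_iff₀ hapos]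
    linarith
  · refine le_ballPoissonKernel_sub_smul_add ha hη ?_ ?_
    · rw [hab, inner_smul_left, inner_smul_right, b.orthonormal.2 (Ne.symm hj), mul_zero, mul_zero]
    · rw [norm_smul, b.norm_eq_one, mul_one]
      calc ‖ζ‖ ^ 2 ≤ (‖a‖ / 2 * √η.re) ^ 2 := by gcongr
        _ = ‖a‖ ^ 2 / 4 * η.re := by rw [mul_pow, Real.sq_sqrt hη₀.le]; ring

/-- The map `y ↦ y - p` with its component along `a` replaced by `-ψ y`. When `ψ` supports a domain
at `p` with inner normal `-a`, this is a change of coordinates near `p`, tangent to the translation,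
in which the first coordinate is the support function. -/
def straighten (p a : E) (ψ : E → ℂ) (y : E) : E :=
  y - p - (inner ℂ a (y - p) / (‖a‖ : ℂ) ^ 2 + ψ y) • a

lemma inner_straighten (ha : a ≠ 0) (y : E) :
    inner ℂ a (straighten p a ψ y) = -(‖a‖ : ℂ) ^ 2 * ψ y := by
  have ha₀ : (‖a‖ : ℂ) ≠ 0 := ofReal_ne_zero.2 (norm_ne_zero_iff.2 ha)
  rw [straighten, inner_sub_right, inner_smul_right, inner_self_eq_norm_sq_to_K]
  simp only [coe_algebraMap]
  field_simp
  ring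

lemma inner_straighten_of_inner_eq_zero {b : E} (hb : inner ℂ b a = 0) (y : E) :
    inner ℂ b (straighten p a ψ y) = inner ℂ b (y - p) := by
  rw [straighten, inner_sub_right, inner_smul_right, hb, mul_zero, sub_zero]

lemma differentiable_straighten (hψ : Differentiable ℂ ψ) :
    Differentiable ℂ (straighten p a ψ) := by
  have hsub : Differentiable ℂ fun y => y - p := differentiable_id.sub_const p
  have hinner : Differentiable ℂ fun y => inner ℂ a (y - p) :=
    (innerSL ℂ a).differentiable.comp hsub
  have hcoeff : Differentiable ℂ fun y => inner ℂ a (y - p) / (‖a‖ : ℂ) ^ 2 + ψ y := by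
    simp only [div_eq_mul_inv]
    exact (hinner.mul_const _).add hψ
  exact hsub.sub (hcoeff.smul_const a)

lemma IsSupportFunction.fderiv_straighten (hψ : IsSupportFunction Ω p a ψ) :
    fderiv ℂ (straighten p a ψ) p = 1 := by
  obtain ⟨C, -, hC⟩ := hψ.exists_norm_add_le
  have hcoeff : HasFDerivAt (fun y => inner ℂ a (y - p) / (‖a‖ : ℂ) ^ 2 + ψ y)
      (0 : E →L[ℂ] ℂ) p := by
    refine Asymptotics.IsBigO.hasFDerivAt (n := 2)
      (Asymptotics.IsBigO.of_bound C (Eventually.of_forall fun y => ?_)) one_lt_two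
    rw [norm_pow, norm_norm, add_comm]
    exact hC y
  have hderiv := ((hasFDerivAt_id (𝕜 := ℂ) p).sub_const p).sub (hcoeff.smul_const a)
  refine (HasFDerivAt.congr_fderiv hderiv ?_).fderiv
  ext x
  simp

lemma norm_inner_straighten_le {ι : Type*} [Fintype ι] [DecidableEq ι]
    {b : OrthonormalBasis ι ℂ E} {i₀ : ι} (ha : a ≠ 0) (hab : a = (‖a‖ : ℂ) • b i₀) {y : E}
    {B s : ℝ} (hψ : ‖ψ y‖ ≤ B * s ^ 2) (hy : ‖y - p‖ ≤ B * s) (i : ι) :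
    ‖inner ℂ (b i) (straighten p a ψ y)‖ ≤ B * (‖a‖ + 1) * if i = i₀ then s ^ 2 else s := by
  split_ifs with hi
  · have ha₀ : (‖a‖ : ℂ) ≠ 0 := ofReal_ne_zero.2 (norm_ne_zero_iff.2 ha)
    have hscaled : (‖a‖ : ℂ) * inner ℂ (b i) (straighten p a ψ y) = -(‖a‖ : ℂ) ^ 2 * ψ y := by
      rw [← inner_straighten ha, hi, ← conj_ofReal, ← inner_smul_left, ← hab]
    have hinner : inner ℂ (b i) (straighten p a ψ y) = -(‖a‖ : ℂ) * ψ y :=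
      mul_left_cancel₀ ha₀ (hscaled.trans (by ring))
    rw [hinner, norm_mul, norm_neg, norm_real, norm_norm]
    nlinarith [mul_le_mul_of_nonneg_left hψ (norm_nonneg a), norm_nonneg (ψ y)]
  · have horth : inner ℂ (b i) a = 0 := by
      rw [hab, inner_smul_right, b.orthonormal.2 hi, mul_zero]
    rw [inner_straighten_of_inner_eq_zero horth]
    have hle := norm_inner_le_norm (𝕜 := ℂ) (b i) (y - p)
    rw [b.norm_eq_one, one_mul] at hle
    nlinarith [mul_nonneg (norm_nonneg a) ((norm_nonneg (y - p)).trans hy)]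

lemma prod_mul_ite_sq {ι : Type*} [Fintype ι] [DecidableEq ι] (i₀ : ι) (c t : ℝ) :
    ∏ i, c * (if i = i₀ then t ^ 2 else t) = c ^ Fintype.card ι * t ^ (Fintype.card ι + 1) := by
  have hfactor : ∀ i, c * (if i = i₀ then t ^ 2 else t) = c * t * if i = i₀ then t else 1 := by
    intro i
    split_ifs <;> ring
  simp only [hfactor, Finset.prod_mul_distrib, Finset.prod_const, Finset.card_univ,
    Finset.prod_ite_eq', Finset.mem_univ, if_true]
  ring

/-- The discs have radius of order `η.re` in the direction of `a` and `√η.re` in the orthogonal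
ones, the scaling under which the ball looks the same at every distance from `p`. -/
lemma norm_det_fderiv_straighten_comp_le {ι : Type*} [Fintype ι]
    {b : OrthonormalBasis ι ℂ E} {i₀ : ι} (ha : a ≠ 0) (hab : a = (‖a‖ : ℂ) • b i₀)
    (hψ : Differentiable ℂ ψ) {f : E → E} {η : ℂ} (hη₀ : 0 < η.re) (hη : ‖η‖ ^ 2 ≤ η.re / 8)
    {B s : ℝ}
    (hf : ∀ x, η.re / (4 * ‖η‖ ^ 2) ≤ ballPoissonKernel p a x →
      DifferentiableAt ℂ f x ∧ ‖ψ (f x)‖ ≤ B * s ^ 2 ∧ ‖f x - p‖ ≤ B * s) :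
    ‖(fderiv ℂ (straighten p a ψ ∘ f) (p - η • a)).det‖ ≤
      (Fintype.card ι).factorial * (B * (‖a‖ + 1) * (4 / ‖a‖)) ^ Fintype.card ι *
        (s / √η.re) ^ (Fintype.card ι + 1) := by
  classical
  have : 0 < ‖a‖ := norm_pos_iff.2 ha
  have : 0 < √η.re := Real.sqrt_pos.2 hη₀
  have hdisc : ∀ j, ∀ ζ ∈ ball (0 : ℂ) (‖a‖ / 2 * if j = i₀ then η.re else √η.re),
      DifferentiableAt ℂ f (p - η • a + ζ • b j) ∧ ‖ψ (f (p - η • a + ζ • b j))‖ ≤ B * s ^ 2 ∧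
        ‖f (p - η • a + ζ • b j) - p‖ ≤ B * s := fun j ζ hζ =>
    hf _ (le_ballPoissonKernel_sub_smul_add_smul_apply ha hab hη₀ hη (mem_ball_zero_iff.1 hζ).le)
  have hdet := norm_det_fderiv_le_of_norm_inner_le b (H := straighten p a ψ ∘ f) (x := p - η • a)
    (fun j => by split_ifs <;> positivity)
    (fun j ζ hζ => (differentiable_straighten hψ _).comp _ (hdisc j ζ hζ).1)
    (fun i j ζ hζ => norm_inner_straighten_le ha hab (hdisc j ζ hζ).2.1 (hdisc j ζ hζ).2.2 i)
  have hradius : ∀ j, 2 / (‖a‖ / 2 * if j = i₀ then η.re else √η.re) =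
      4 / ‖a‖ * if j = i₀ then (√η.re)⁻¹ ^ 2 else (√η.re)⁻¹ := by
    intro j
    rw [inv_pow, Real.sq_sqrt hη₀.le]
    split_ifs <;> field_simp <;> norm_num
  simp only [hradius, prod_mul_ite_sq] at hdet
  refine hdet.trans_eq ?_
  simp only [div_eq_mul_inv, mul_pow]
  ring

lemma exists_norm_det_fderiv_straighten_comp_le [FiniteDimensional ℂ E] (ha : a ≠ 0)
    (hball : ball (p - a) ‖a‖ ⊆ Ω) (hΩ : IsOpen Ω) (hψ : Differentiable ℂ ψ) {Q C : ℝ}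
    (hQ : 0 < Q) (hC : 0 < C) :
    ∃ σ, 0 < σ ∧ ∃ K, 0 < K ∧ ∀ f : E → E, DifferentiableOn ℂ f Ω →
      (∀ x, Q ≤ ballPoissonKernel p a x → ‖ψ (f x)‖ ≤ C / ballPoissonKernel p a x ∧
        ‖f x - p‖ ^ 2 ≤ C / ballPoissonKernel p a x) →
      ∀ η : ℂ, 0 < η.re → ‖η‖ ^ 2 ≤ σ * η.re →
        ‖(fderiv ℂ (straighten p a ψ ∘ f) (p - η • a)).det‖ ≤
          K * (‖η‖ / η.re) ^ (Module.finrank ℂ E + 1) := by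
  have : 0 < ‖a‖ := norm_pos_iff.2 ha
  obtain ⟨i₀, b, hab⟩ := exists_orthonormalBasis_apply_eq ha
  refine ⟨min (1 / 8) (1 / (4 * Q)), by positivity, (Module.finrank ℂ E).factorial *
    ((4 * C + 1) * (‖a‖ + 1) * (4 / ‖a‖)) ^ Module.finrank ℂ E, by positivity,
    fun f hf hbound η hη₀ hη => ?_⟩
  have hη8 : ‖η‖ ^ 2 ≤ η.re / 8 := hη.trans (by nlinarith [min_le_left (1 / 8) (1 / (4 * Q))])
  have hηQ : ‖η‖ ^ 2 ≤ 1 / (4 * Q) * η.re := hη.trans (by gcongr; exact min_le_right _ _)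
  have hηpos : 0 < ‖η‖ := hη₀.trans_le (re_le_norm η)
  have hdet := norm_det_fderiv_straighten_comp_le (p := p) (f := f) (B := 4 * C + 1)
    (s := ‖η‖ / √η.re) ha hab hψ hη₀ hη8 fun x hx => ?_
  · rwa [Fintype.card_fin, div_div, Real.mul_self_sqrt hη₀.le] at hdet
  have hQx : Q ≤ ballPoissonKernel p a x := by
    refine le_trans ?_ hx
    rw [le_div_iff₀ (by positivity)]
    calc Q * (4 * ‖η‖ ^ 2) ≤ Q * (4 * (1 / (4 * Q) * η.re)) := by gcongr
      _ = η.re := by field_simp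
  have hCx : C / ballPoissonKernel p a x ≤ 4 * C * (‖η‖ / √η.re) ^ 2 := calc
    C / ballPoissonKernel p a x ≤ C / (η.re / (4 * ‖η‖ ^ 2)) := by gcongr
    _ = 4 * C * (‖η‖ / √η.re) ^ 2 := by rw [div_pow, Real.sq_sqrt hη₀.le]; field_simp
  obtain ⟨hψx, hfx⟩ := hbound x hQx
  refine ⟨hf.differentiableAt (hΩ.mem_nhds (hball (mem_ball_of_ballPoissonKernel_pos
    (hQ.trans_le hQx)))), ?_, ?_⟩
  · exact hψx.trans (hCx.trans (by gcongr; linarith))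
  · refine le_of_sq_le_sq ((hfx.trans hCx).trans ?_) (by positivity)
    rw [mul_pow]
    gcongr
    nlinarith

end Straighten

section JacobianDeterminant

variable {E : Type*} [NormedAddCommGroup E] [NormedSpace ℂ E] {G H : E → E} {U : Set E} {x : E}

lemma det_one : (1 : E →L[ℂ] E).det = 1 := LinearMap.det_id

lemma det_fderiv_comp (hG : DifferentiableAt ℂ G (H x)) (hH : DifferentiableAt ℂ H x) :
    (fderiv ℂ (G ∘ H) x).det = (fderiv ℂ G (H x)).det * (fderiv ℂ H x).det := by
  rw [fderiv_comp x hG hH]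
  exact LinearMap.det_comp _ _

variable (E) in
lemma exists_forall_three_quarters_le_norm_det :
    ∃ ν, 0 < ν ∧ ∀ A : E →L[ℂ] E, ‖A - 1‖ < ν → 3 / 4 ≤ ‖A.det‖ := by
  have hcont : ContinuousAt (fun A : E →L[ℂ] E => ‖A.det‖) 1 :=
    ContinuousLinearMap.continuous_det.norm.continuousAt
  have hev : ∀ᶠ A : E →L[ℂ] E in 𝓝 1, 3 / 4 < ‖A.det‖ :=
    hcont.eventually_const_lt (by
      change (3 / 4 : ℝ) < ‖(1 : E →L[ℂ] E).det‖
      rw [det_one, norm_one]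
      norm_num)
  obtain ⟨ν, hν, hball⟩ := Metric.eventually_nhds_iff_ball.1 hev
  exact ⟨ν, hν, fun A hA => (hball A (mem_ball_iff_norm.2 hA)).le⟩

variable [FiniteDimensional ℂ E]

variable (E) in
lemma exists_forall_norm_det_le (B : ℝ) :
    ∃ D, ∀ A : E →L[ℂ] E, ‖A‖ ≤ B → ‖A.det‖ ≤ D := by
  have : ProperSpace (E →L[ℂ] E) := FiniteDimensional.proper ℂ _
  obtain ⟨D, hD⟩ := (isCompact_closedBall (0 : E →L[ℂ] E) B).exists_bound_of_continuousOn
    (f := fun A => A.det) ContinuousLinearMap.continuous_det.continuousOn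
  exact ⟨D, fun A hA => hD A (mem_closedBall_zero_iff.2 hA)⟩

lemma differentiableOn_det_fderiv (hU : IsOpen U) (hH : DifferentiableOn ℂ H U) :
    DifferentiableOn ℂ (fun x => (fderiv ℂ H x).det) U := by
  have : CompleteSpace E := FiniteDimensional.complete ℂ E
  let b := Module.finBasis ℂ E
  have hdet : ∀ x, (fderiv ℂ H x).det = ∑ σ : Equiv.Perm (Fin (Module.finrank ℂ E)),
      (Equiv.Perm.sign σ : ℂ) *
        ∏ i, (b.coord (σ i)).toContinuousLinearMap (fderiv ℂ H x (b i)) := by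
    intro x
    rw [ContinuousLinearMap.det, ← LinearMap.det_toMatrix b, Matrix.det_apply']
    simp [LinearMap.toMatrix_apply]
  simp only [hdet]
  have hentry : ∀ i j, DifferentiableOn ℂ
      (fun x => (b.coord j).toContinuousLinearMap (fderiv ℂ H x (b i))) U := fun i j =>
    (b.coord j).toContinuousLinearMap.differentiable.comp_differentiableOn
      (differentiableOn_fderiv_apply hU hH (b i))
  refine DifferentiableOn.fun_sum fun σ _ => DifferentiableOn.const_mul (fun x hx => ?_) _
  exact (HasFDerivWithinAt.finsetProd fun i _ =>
    (hentry i (σ i) x hx).hasFDerivWithinAt).differentiableWithinAt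

lemma continuous_det_fderiv (hH : Differentiable ℂ H) :
    Continuous fun x => (fderiv ℂ H x).det := by
  rw [← continuousOn_univ]
  exact (differentiableOn_det_fderiv isOpen_univ hH.differentiableOn).continuousOn

end JacobianDeterminant

section JacobianOfIterates

variable {E : Type*} [NormedAddCommGroup E] [NormedSpace ℂ E] {F Θ : E → E} {Ω : Set E} {q x : E}
  {C : ℝ}

lemma IsHolomorphicSelfMap.norm_det_fderiv_comp_iterate_le (hF : IsHolomorphicSelfMap F Ω)
    (hΩ : IsOpen Ω) (hΘ : Differentiable ℂ Θ) {A B : ℝ}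
    (hA : ∀ x ∈ Ω, ‖(fderiv ℂ Θ x).det‖ ≤ A) (hx : x ∈ Ω) {k : ℕ}
    (hB : ‖(fderiv ℂ F^[k] x).det‖ ≤ B) : ‖(fderiv ℂ (Θ ∘ F^[k]) x).det‖ ≤ A * B := by
  have hk := hF.iterate k
  rw [det_fderiv_comp (hΘ _) (hk.differentiableOn.differentiableAt (hΩ.mem_nhds hx)), norm_mul]
  exact mul_le_mul (hA _ (hk.mapsTo hx)) hB (norm_nonneg _) ((norm_nonneg _).trans (hA x hx))

variable [FiniteDimensional ℂ E]

lemma IsHolomorphicSelfMap.exists_forall_norm_det_fderiv_iterate_le_pow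
    (hF : IsHolomorphicSelfMap F Ω) (hΩ : IsOpen Ω) (hC : ∀ x ∈ Ω, ‖x‖ ≤ C) (hq : q ∈ Ω)
    (hfix : F q = q) (hdet : ‖(fderiv ℂ F q).det‖ < 1) :
    ∃ r, 0 < r ∧ ball q r ⊆ Ω ∧ ∃ θ, 0 < θ ∧ θ < 1 ∧
      ∀ k, ∀ x ∈ ball q r, ‖(fderiv ℂ F^[k] x).det‖ ≤ θ ^ k := by
  obtain ⟨R, hR, hRΩ⟩ := Metric.isOpen_iff.1 hΩ q hq
  have hC0 : 0 ≤ C := (norm_nonneg q).trans (hC q hq)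
  obtain ⟨θ, hdetθ, hθ1⟩ := exists_between hdet
  have hθ0 : 0 < θ := (norm_nonneg _).trans_lt hdetθ
  have hcont : ContinuousAt (fun x => ‖(fderiv ℂ F x).det‖) q :=
    ((differentiableOn_det_fderiv hΩ hF.differentiableOn).continuousOn.continuousAt
      (hΩ.mem_nhds hq)).norm
  obtain ⟨s, hs, hsθ⟩ := Metric.eventually_nhds_iff_ball.1 (hcont.eventually_lt_const hdetθ)
  have hsub : ball q (min (R / 2) (s / (4 * C / R + 1))) ⊆ Ω :=
    (ball_subset_ball ((min_le_left _ _).trans (by linarith))).trans hRΩ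
  refine ⟨min (R / 2) (s / (4 * C / R + 1)), by positivity, hsub, θ, hθ0, hθ1, fun k x hx => ?_⟩
  have horbit : ∀ j, F^[j] x ∈ ball q s := by
    intro j
    have hlip := norm_sub_le_of_norm_le_ball hR ((hF.iterate j).differentiableOn.mono hRΩ)
      (fun z hz => hC _ ((hF.iterate j).mapsTo (hRΩ hz))) (mem_ball_self (by positivity))
      (ball_subset_ball (min_le_left _ _) hx)
    rw [iterate_fixed hfix] at hlip
    have hxs : ‖x - q‖ < s / (4 * C / R + 1) :=
      (mem_ball_iff_norm.1 hx).trans_le (min_le_right _ _)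
    rw [lt_div_iff₀ (by positivity)] at hxs
    exact mem_ball_iff_norm.2 (by nlinarith [norm_nonneg (x - q)])
  induction k with
  | zero =>
    rw [iterate_zero, fderiv_id, pow_zero]
    exact (congrArg norm det_one).trans_le norm_one.le
  | succ k ih =>
    have hk := hF.iterate k
    rw [iterate_succ', det_fderiv_comp
      (hF.differentiableOn.differentiableAt (hΩ.mem_nhds (hk.mapsTo (hsub hx))))
      (hk.differentiableOn.differentiableAt (hΩ.mem_nhds (hsub hx))), norm_mul, pow_succ']
    exact mul_le_mul (hsθ _ (horbit k)).le ih (norm_nonneg _) hθ0.le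

lemma exists_forall_norm_det_fderiv_le (hΘ : Differentiable ℂ Θ) (hC : ∀ x ∈ Ω, ‖x‖ ≤ C) :
    ∃ B, 0 < B ∧ ∀ x ∈ Ω, ‖(fderiv ℂ Θ x).det‖ ≤ B := by
  have : ProperSpace E := FiniteDimensional.proper ℂ E
  obtain ⟨B, hB⟩ := (isCompact_closedBall (0 : E) C).exists_bound_of_continuousOn
    (continuous_det_fderiv hΘ).continuousOn
  exact ⟨max B 1, by positivity, fun x hx =>
    (hB x (mem_closedBall_zero_iff.2 (hC x hx))).trans (le_max_left _ _)⟩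

lemma IsHolomorphicSelfMap.exists_forall_norm_det_fderiv_iterate_le
    (hF : IsHolomorphicSelfMap F Ω) (hΩ : IsOpen Ω) (hC : ∀ x ∈ Ω, ‖x‖ ≤ C) (hx : x ∈ Ω) :
    ∃ r, 0 < r ∧ ball x r ⊆ Ω ∧ ∃ B, ∀ k, ∀ z ∈ ball x r, ‖(fderiv ℂ F^[k] z).det‖ ≤ B := by
  obtain ⟨R, hR, hRΩ⟩ := Metric.isOpen_iff.1 hΩ x hx
  obtain ⟨B, hdet⟩ := exists_forall_norm_det_le E (2 * C / (R / 2))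
  refine ⟨R / 2, by positivity, (ball_subset_ball (by linarith)).trans hRΩ, B,
    fun k z hz => hdet _ ?_⟩
  have hzR : ball z (R / 2) ⊆ Ω := (ball_subset_ball' (by linarith [mem_ball.1 hz])).trans hRΩ
  exact norm_fderiv_le_of_norm_le_ball (by positivity) ((hF.iterate k).differentiableOn.mono hzR)
    fun w hw => hC _ ((hF.iterate k).mapsTo (hzR hw))

lemma eventually_mul_pow_le_exp {B θ : ℝ} (hB : 0 < B) (hθ0 : 0 < θ) (hθ1 : θ < 1) :
    ∃ b > 0, ∀ᶠ k : ℕ in atTop, B * θ ^ k ≤ Real.exp (-(b * k)) := by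
  have hlog : 0 < -Real.log θ := neg_pos.2 (Real.log_neg hθ0 hθ1)
  refine ⟨-Real.log θ / 2, by positivity, ?_⟩
  filter_upwards [tendsto_natCast_atTop_atTop.eventually_ge_atTop
    (Real.log B / (-Real.log θ / 2))] with k hk
  rw [div_le_iff₀ (by positivity)] at hk
  calc B * θ ^ k = Real.exp (Real.log B + k * Real.log θ) := by
        rw [Real.exp_add, Real.exp_log hB, Real.exp_nat_mul, Real.exp_log hθ0]
    _ ≤ Real.exp (-(-Real.log θ / 2 * k)) := Real.exp_le_exp.2 (by linarith)

lemma IsHolomorphicSelfMap.isExpSmallAt_det_fderiv_comp_iterate (hF : IsHolomorphicSelfMap F Ω)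
    (hΩ : IsOpen Ω) (hΩc : IsPreconnected Ω) (hC : ∀ x ∈ Ω, ‖x‖ ≤ C) (hq : q ∈ Ω)
    (hfix : F q = q) (hdet : ‖(fderiv ℂ F q).det‖ < 1) (hΘ : Differentiable ℂ Θ) (hx : x ∈ Ω) :
    IsExpSmallAt (fun k x => (fderiv ℂ (Θ ∘ F^[k]) x).det) (fun k => k) x := by
  obtain ⟨A, hA, hAΩ⟩ := exists_forall_norm_det_fderiv_le hΘ hC
  refine IsExpSmallAt.of_isPreconnected hΩ hΩc tendsto_natCast_atTop_atTop
    (fun k => differentiableOn_det_fderiv hΩ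
      (hΘ.comp_differentiableOn (hF.iterate k).differentiableOn)) (fun x hx => ?_) hq ?_ hx
  · obtain ⟨r, hr, hrΩ, B, hBr⟩ := hF.exists_forall_norm_det_fderiv_iterate_le hΩ hC hx
    exact ⟨r, hr, A * B, fun k z hz =>
      hF.norm_det_fderiv_comp_iterate_le hΩ hΘ hAΩ (hrΩ hz) (hBr k z hz)⟩
  · obtain ⟨r, hr, hrΩ, θ, hθ0, hθ1, hθr⟩ :=
      hF.exists_forall_norm_det_fderiv_iterate_le_pow hΩ hC hq hfix hdet
    obtain ⟨b, hb, hexp⟩ := eventually_mul_pow_le_exp hA hθ0 hθ1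
    refine ⟨r, hr, b, hb, hexp.mono fun k hk z hz => ?_⟩
    exact (hF.norm_det_fderiv_comp_iterate_le hΩ hΘ hAΩ (hrΩ hz) (hθr k z hz)).trans hk

end JacobianOfIterates

section NontangentialDecay

variable {h : ℂ → ℂ}

lemma norm_le_mul_exp_of_norm_le_ball {A L M s : ℝ} (hs0 : 0 < s) (hs1 : s ≤ 1)
    (hh : DifferentiableOn ℂ h (ball 0 s)) (hA : 1 ≤ A) (hhA : ∀ ζ ∈ ball 0 s, ‖h ζ‖ ≤ A)
    (hL : 1 ≤ L) (hM : 0 ≤ M)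
    (hsmall : ∀ ζ ∈ ball 0 s, ‖ζ‖ ≤ Real.exp (-L) → ‖h ζ‖ ≤ Real.exp (-M)) {ζ : ℂ}
    (hζ : ζ ∈ ball 0 s) : ‖h ζ‖ ≤ A * Real.exp (-(M / L * (1 - ‖ζ‖ / s))) := by
  have hA0 : 0 < A := zero_lt_one.trans_le hA
  have hnorm : ∀ z : ℂ, ‖(s : ℂ) * z‖ = s * ‖z‖ := fun z => by
    rw [norm_mul, Complex.norm_real, Real.norm_of_nonneg hs0.le]
  have hmaps : MapsTo (fun z : ℂ => (s : ℂ) * z) (ball 0 1) (ball 0 s) := fun z hz => by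
    rw [mem_ball_zero_iff] at hz ⊢
    rw [hnorm]
    exact mul_lt_of_lt_one_right hs0 hz
  have hg : DifferentiableOn ℂ (fun z => h (s * z) / A) (ball 0 1) :=
    (hh.comp (by fun_prop) hmaps).div_const _
  have hgnorm : ∀ z, ‖h (s * z) / (A : ℂ)‖ = ‖h (s * z)‖ / A := fun z => by
    rw [norm_div, Complex.norm_real, Real.norm_of_nonneg hA0.le]
  have hζs : ζ / s ∈ ball (0 : ℂ) 1 := by
    rw [mem_ball_zero_iff, norm_div, Complex.norm_real, Real.norm_of_nonneg hs0.le, div_lt_one hs0]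
    exact mem_ball_zero_iff.1 hζ
  have hdecay := (hasHolomorphicSupport_norm isOpen_ball hg).le_exp
    (fun z hz => by rw [hgnorm, div_le_one hA0]; exact hhA _ (hmaps hz)) hL hM
    (fun z hz hzL => by
      rw [hgnorm]
      refine (div_le_self (norm_nonneg _) hA).trans (hsmall _ (hmaps hz) ?_)
      rw [hnorm]
      exact (mul_le_of_le_one_left (norm_nonneg z) hs1).trans hzL) hζs
  rwa [hgnorm, mul_div_cancel₀ _ (Complex.ofReal_ne_zero.2 hs0.ne'), norm_div, Complex.norm_real,
    Real.norm_of_nonneg hs0.le, div_le_iff₀' hA0] at hdecay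

lemma norm_one_sub_div_mul_div_le_two {t : ℝ} (ht : 0 < t) {ζ : ℂ} (hζ : ‖ζ‖ ≤ 1 - t / 2) :
    ‖1 - ζ‖ / (1 - ζ.re) * (t / ‖1 + t - ζ‖) ≤ 2 := by
  have hre : t / 2 ≤ 1 - ζ.re := by linarith [Complex.re_le_norm ζ]
  have hre0 : 0 < 1 - ζ.re := by linarith
  have hnorm : ‖1 - ζ‖ ≤ ‖1 + t - ζ‖ := by
    rw [← sq_le_sq₀ (norm_nonneg _) (norm_nonneg _), ← Complex.normSq_eq_norm_sq,
      ← Complex.normSq_eq_norm_sq, Complex.normSq_apply, Complex.normSq_apply]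
    simp only [sub_re, one_re, sub_im, one_im, add_re, ofReal_re, add_im, ofReal_im]
    nlinarith
  have hnorm0 : 0 < ‖1 - ζ‖ :=
    hre0.trans_le (by simpa using Complex.re_le_norm (1 - ζ))
  rw [div_mul_div_comm, div_le_iff₀ (mul_pos hre0 (hnorm0.trans_le hnorm))]
  calc ‖1 - ζ‖ * t ≤ ‖1 + t - ζ‖ * (2 * (1 - ζ.re)) := by gcongr; linarith
    _ = 2 * ((1 - ζ.re) * ‖1 + t - ζ‖) := by ring

lemma norm_mul_div_pow {t : ℝ} (ht : 0 ≤ t) (w ζ : ℂ) (N : ℕ) :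
    ‖w * (t / (1 + t - ζ)) ^ N‖ = ‖w‖ * (t / ‖1 + t - ζ‖) ^ N := by
  rw [norm_mul, norm_pow, norm_div, Complex.norm_real, Real.norm_of_nonneg ht]

lemma norm_mul_div_pow_le {K t : ℝ} {N : ℕ} {w ζ : ℂ} (ht : 0 < t) (hζ : ‖ζ‖ ≤ 1 - t / 2)
    (hK : 0 ≤ K) (hw : ‖w‖ ≤ K * (‖1 - ζ‖ / (1 - ζ.re)) ^ N) :
    ‖w * (t / (1 + t - ζ)) ^ N‖ ≤ K * 2 ^ N := by
  have : 0 ≤ 1 - ζ.re := by linarith [Complex.re_le_norm ζ]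
  calc ‖w * (t / (1 + t - ζ)) ^ N‖
      ≤ K * (‖1 - ζ‖ / (1 - ζ.re)) ^ N * (t / ‖1 + t - ζ‖) ^ N := by
        rw [norm_mul_div_pow ht.le]
        gcongr
    _ = K * (‖1 - ζ‖ / (1 - ζ.re) * (t / ‖1 + t - ζ‖)) ^ N := by rw [mul_pow]; ring
    _ ≤ K * 2 ^ N := by
        gcongr
        exact norm_one_sub_div_mul_div_le_two ht hζ

/-- The factor `(t / (1 + t - ζ)) ^ N` absorbs the blow-up of the majorant at `ζ = 1`. -/
lemma norm_le_mul_exp_of_nontangential_bound {K L M t : ℝ} {N : ℕ}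
    (hh : DifferentiableOn ℂ h (ball 0 1)) (hK : 0 ≤ K)
    (hhK : ∀ ζ ∈ ball 0 1, ‖h ζ‖ ≤ K * (‖1 - ζ‖ / (1 - ζ.re)) ^ N) (hL : 1 ≤ L) (hM : 0 ≤ M)
    (hsmall : ∀ ζ ∈ ball 0 1, ‖ζ‖ ≤ Real.exp (-L) → ‖h ζ‖ ≤ Real.exp (-M))
    (ht0 : 0 < t) (ht1 : t ≤ 1) :
    ‖h (1 - t)‖ ≤ (K * 2 ^ N + 1) * 2 ^ N * Real.exp (-(M / L * (t / 2))) := by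
  have hsub : ball (0 : ℂ) (1 - t / 2) ⊆ ball 0 1 := ball_subset_ball (by linarith)
  have hre : ∀ ζ ∈ ball (0 : ℂ) (1 - t / 2), t ≤ (1 + t - ζ).re := fun ζ hζ => by
    simp only [sub_re, add_re, one_re, ofReal_re]
    linarith [Complex.re_le_norm ζ, mem_ball_zero_iff.1 hζ]
  have hdiff : DifferentiableOn ℂ (fun ζ => h ζ * (t / (1 + t - ζ)) ^ N) (ball 0 (1 - t / 2)) := by
    refine (hh.mono hsub).mul (DifferentiableOn.pow (DifferentiableOn.div (by fun_prop)
      (by fun_prop) fun ζ hζ hzero => ?_) _)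
    linarith [hre ζ hζ, congrArg Complex.re hzero, Complex.zero_re]
  have hbound : ∀ ζ ∈ ball (0 : ℂ) (1 - t / 2),
      ‖h ζ * (t / (1 + t - ζ)) ^ N‖ ≤ K * 2 ^ N + 1 := fun ζ hζ =>
    (norm_mul_div_pow_le ht0 (mem_ball_zero_iff.1 hζ).le hK (hhK ζ (hsub hζ))).trans
      (le_add_of_nonneg_right zero_le_one)
  have hnorm_t : ‖(1 - t : ℂ)‖ = 1 - t := by
    rw [← ofReal_one, ← ofReal_sub, Complex.norm_real, Real.norm_of_nonneg (by linarith)]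
  have hdecay := norm_le_mul_exp_of_norm_le_ball (by linarith) (by linarith) hdiff
    (le_add_of_nonneg_left (by positivity)) hbound hL hM
    (fun ζ hζ hζL => by
      rw [norm_mul_div_pow ht0.le]
      refine (mul_le_of_le_one_right (norm_nonneg _) (pow_le_one₀ (by positivity) ?_)).trans
        (hsmall ζ (hsub hζ) hζL)
      exact div_le_one_of_le₀ ((hre ζ hζ).trans (Complex.re_le_norm _)) (norm_nonneg _))
    (ζ := 1 - t) (mem_ball_zero_iff.2 (by rw [hnorm_t]; linarith))
  have hfactor : (t : ℂ) / (1 + t - (1 - t)) = (2 : ℂ)⁻¹ := by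
    have : (t : ℂ) ≠ 0 := Complex.ofReal_ne_zero.2 ht0.ne'
    rw [show (1 + t - (1 - t) : ℂ) = t * 2 by ring, div_mul_cancel_left₀ this]
  have hexp : t / 2 ≤ 1 - (1 - t) / (1 - t / 2) := by
    rw [le_sub_comm, div_le_iff₀ (by linarith)]
    nlinarith
  rw [hfactor, norm_mul, norm_pow, norm_inv, Complex.norm_two, hnorm_t, inv_pow,
    ← div_eq_mul_inv, div_le_iff₀ (by positivity)] at hdecay
  calc ‖h (1 - t)‖
      ≤ (K * 2 ^ N + 1) * Real.exp (-(M / L * (1 - (1 - t) / (1 - t / 2)))) * 2 ^ N := hdecay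
    _ ≤ (K * 2 ^ N + 1) * Real.exp (-(M / L * (t / 2))) * 2 ^ N := by gcongr
    _ = (K * 2 ^ N + 1) * 2 ^ N * Real.exp (-(M / L * (t / 2))) := by ring

end NontangentialDecay

section IteratesNearBoundaryPoint

variable {E : Type*} [NormedAddCommGroup E] {Ω : Set E} {F : E → E} {p : E}

lemma norm_iterate_sub_le_mul (hF : MapsTo F Ω Ω) {e s : ℝ} (he : 0 ≤ e)
    (hFe : ∀ x ∈ Ω, ‖x - p‖ ≤ s → ‖F x - x‖ ≤ e) {x : E} (hx : x ∈ Ω) {k : ℕ}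
    (hxk : ‖x - p‖ + k * e ≤ s) : ‖F^[k] x - x‖ ≤ k * e := by
  induction k with
  | zero => simp
  | succ k ih =>
    rw [Nat.cast_succ, add_one_mul] at hxk ⊢
    have hk := ih (by linarith)
    have hkp := norm_sub_le_norm_sub_add_norm_sub (F^[k] x) x p
    have hstep := hFe _ (hF.iterate k hx) (by linarith)
    rw [iterate_succ_apply']
    linarith [norm_sub_le_norm_sub_add_norm_sub (F (F^[k] x)) (F^[k] x) x]

variable [NormedSpace ℂ E]

lemma norm_fderiv_sub_one_le {f : E → E} {z : E} {e r : ℝ} (hr : 0 < r)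
    (hf : DifferentiableOn ℂ f (ball z r)) (he : ∀ x ∈ ball z r, ‖f x - x‖ ≤ e) :
    ‖fderiv ℂ f z - 1‖ ≤ 2 * e / r := by
  have hfz := hf.differentiableAt (ball_mem_nhds z hr)
  have hfderiv : HasFDerivAt (fun x => f x - x) (fderiv ℂ f z - 1) z :=
    hfz.hasFDerivAt.sub (hasFDerivAt_id z)
  rw [← hfderiv.fderiv]
  exact norm_fderiv_le_of_norm_le_ball hr (hf.sub differentiableOn_id) he

lemma IsHolomorphicSelfMap.norm_iterate_sub_le_and_norm_fderiv_iterate_sub_one_le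
    (hF : IsHolomorphicSelfMap F Ω) {e r κ : ℝ} (hr : 0 < r) (he : 0 ≤ e)
    (hFe : ∀ x ∈ Ω, ‖x - p‖ ≤ 2 * r → ‖F x - x‖ ≤ e) (hκ : κ ≤ 1 / 2) {k : ℕ}
    (hk : k * e ≤ κ * r) {z : E} (hz : ball z (r / 2) ⊆ Ω) (hzp : ‖z - p‖ ≤ r) :
    ‖F^[k] z - z‖ ≤ κ * r ∧ ‖fderiv ℂ F^[k] z - 1‖ ≤ 4 * κ := by
  have hdrift : ∀ x ∈ ball z (r / 2), ‖F^[k] x - x‖ ≤ κ * r := fun x hx => by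
    refine (norm_iterate_sub_le_mul hF.mapsTo he hFe (hz hx) ?_).trans hk
    have : κ * r ≤ 1 / 2 * r := by gcongr
    linarith [norm_sub_le_norm_sub_add_norm_sub x z p, mem_ball_iff_norm.1 hx]
  refine ⟨hdrift z (mem_ball_self (half_pos hr)), (norm_fderiv_sub_one_le (half_pos hr)
    ((hF.iterate k).differentiableOn.mono hz) hdrift).trans_eq ?_⟩
  field_simp
  ring

variable {Θ : E → E}

lemma IsHolomorphicSelfMap.half_le_norm_det_fderiv_comp_iterate (hF : IsHolomorphicSelfMap F Ω)
    (hΩ : IsOpen Ω) (hΘ : Differentiable ℂ Θ) {e r κ ν : ℝ} (hr : 0 < r) (he : 0 ≤ e)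
    (hFe : ∀ x ∈ Ω, ‖x - p‖ ≤ 2 * r → ‖F x - x‖ ≤ e) (hκ : κ ≤ 1 / 2) (hκν : 4 * κ < ν)
    (hν : ∀ A : E →L[ℂ] E, ‖A - 1‖ < ν → 3 / 4 ≤ ‖A.det‖)
    (hΘr : ∀ y ∈ ball p (2 * r), 3 / 4 ≤ ‖(fderiv ℂ Θ y).det‖) {k : ℕ} (hk : k * e ≤ κ * r)
    {z : E} (hz : ball z (r / 2) ⊆ Ω) (hzp : ‖z - p‖ ≤ r) :
    1 / 2 ≤ ‖(fderiv ℂ (Θ ∘ F^[k]) z).det‖ := by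
  obtain ⟨hdrift, hfderiv⟩ :=
    hF.norm_iterate_sub_le_and_norm_fderiv_iterate_sub_one_le hr he hFe hκ hk hz hzp
  have hFkz : F^[k] z ∈ ball p (2 * r) := by
    have : κ * r ≤ 1 / 2 * r := by gcongr
    rw [mem_ball_iff_norm]
    linarith [norm_sub_le_norm_sub_add_norm_sub (F^[k] z) z p]
  rw [det_fderiv_comp (hΘ _) ((hF.iterate k).differentiableOn.differentiableAt
    (hΩ.mem_nhds (hz (mem_ball_self (half_pos hr))))), norm_mul]
  nlinarith [hν _ (hfderiv.trans_lt hκν), hΘr _ hFkz]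

variable [FiniteDimensional ℂ E] {a : E}

lemma eventually_three_quarters_le_norm_det_fderiv (hΘ : Differentiable ℂ Θ)
    (hΘp : fderiv ℂ Θ p = 1) : ∀ᶠ y in 𝓝 p, 3 / 4 ≤ ‖(fderiv ℂ Θ y).det‖ := by
  have hp : (3 / 4 : ℝ) < ‖(fderiv ℂ Θ p).det‖ := by
    rw [hΘp, det_one, norm_one]
    norm_num
  exact ((continuous_det_fderiv hΘ).norm.continuousAt.eventually_const_lt hp).mono fun _ => le_of_lt

/-- At distance `r` from `p` one application of `F` moves points by `o(r²)`, so `O(1 / r)`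
iterations move them by `o(r)`. -/
lemma IsHolomorphicSelfMap.eventually_half_le_norm_det_fderiv_comp_iterate
    (hF : IsHolomorphicSelfMap F Ω) (hΩ : IsOpen Ω)
    (hp : (fun z => F z - z) =o[𝓝[Ω] p] fun z => ‖z - p‖ ^ 2) (ha : a ≠ 0)
    (haΩ : ball (p - a) ‖a‖ ⊆ Ω) (hΘ : Differentiable ℂ Θ) (hΘp : fderiv ℂ Θ p = 1) {c : ℝ}
    (hc : 0 < c) :
    ∀ᶠ τ : ℝ in 𝓝[>] 0, ∀ k : ℕ, k * τ ≤ c →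
      1 / 2 ≤ ‖(fderiv ℂ (Θ ∘ F^[k]) (p - (τ : ℂ) • a)).det‖ := by
  have : 0 < ‖a‖ := norm_pos_iff.2 ha
  obtain ⟨ν, hν, hdet⟩ := exists_forall_three_quarters_le_norm_det E
  obtain ⟨δ₁, hδ₁, hdetΘ⟩ := Metric.eventually_nhds_iff_ball.1
    (eventually_three_quarters_le_norm_det_fderiv hΘ hΘp)
  set κ := min (1 / 2) (ν / 8)
  have hκν : 4 * κ < ν := by linarith [min_le_right (1 / 2) (ν / 8)]
  set ε := κ / (4 * ‖a‖ * c) with hε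
  obtain ⟨δ₂, hδ₂, hFδ⟩ := exists_forall_norm_sub_le_of_isLittleO hp (ε := ε) (by positivity)
  have hτ : ∀ᶠ τ : ℝ in 𝓝[>] 0, τ < min 1 (min δ₁ δ₂ / (2 * ‖a‖)) :=
    nhdsWithin_le_nhds (eventually_lt_nhds (by positivity))
  filter_upwards [self_mem_nhdsWithin, hτ] with τ (hτ0 : 0 < τ) hτ k hk
  obtain ⟨hτ1, hτδ⟩ := lt_min_iff.1 hτ
  rw [lt_div_iff₀ (by positivity)] at hτδ
  set r := ‖a‖ * τ with hr
  have hr0 : 0 < r := by positivity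
  have hrδ : 2 * r < min δ₁ δ₂ := by linarith
  obtain ⟨hrδ₁, hrδ₂⟩ := lt_min_iff.1 hrδ
  refine hF.half_le_norm_det_fderiv_comp_iterate hΩ hΘ (e := ε * (2 * r) ^ 2) hr0 (by positivity)
    (fun x hx hxp => (hFδ x hx (hxp.trans_lt hrδ₂)).trans (by gcongr)) (min_le_left _ _)
    hκν hdet (fun y hy => hdetΘ y (ball_subset_ball hrδ₁.le hy)) ?_ ?_ ?_
  · calc k * (ε * (2 * r) ^ 2) = k * τ * (4 * ‖a‖ * ε) * r := by rw [hr]; ring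
      _ ≤ c * (4 * ‖a‖ * ε) * r := by gcongr
      _ = κ * r := by rw [hε]; field_simp
  · exact (ball_subset_ball (half_le_self hr0.le)).trans
      ((ball_sub_smul_subset_ball_sub p a hτ1.le).trans haΩ)
  · rw [sub_sub_cancel_left, norm_neg, norm_ofReal_smul_of_nonneg a hτ0.le]

end IteratesNearBoundaryPoint

section DecayAlongNormal

variable {E : Type*} [NormedAddCommGroup E] [NormedSpace ℂ E] {Ω : Set E} {p a : E}

lemma re_smul_one_sub_pos {s : ℝ} (hs : 0 < s) {ζ : ℂ} (hζ : ζ ∈ ball (0 : ℂ) 1) :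
    0 < ((s : ℂ) * (1 - ζ)).re := by
  rw [re_ofReal_mul, sub_re, one_re]
  exact mul_pos hs (by linarith [Complex.re_le_norm ζ, mem_ball_zero_iff.1 hζ])

lemma norm_smul_one_sub_sq_le {s : ℝ} {ζ : ℂ} (hζ : ζ ∈ ball (0 : ℂ) 1) :
    ‖(s : ℂ) * (1 - ζ)‖ ^ 2 ≤ 2 * s * ((s : ℂ) * (1 - ζ)).re := by
  have hζ1 : ‖ζ‖ ^ 2 ≤ 1 := pow_le_one₀ (norm_nonneg ζ) (mem_ball_zero_iff.1 hζ).le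
  rw [norm_mul, mul_pow, Complex.norm_real, Real.norm_eq_abs, sq_abs, norm_one_sub_sq,
    re_ofReal_mul, sub_re, one_re]
  nlinarith [sq_nonneg s]

lemma sub_smul_one_sub_mem_ball (ha : a ≠ 0) {s : ℝ} (hs0 : 0 < s) (hs1 : s ≤ 1) {ζ : ℂ}
    (hζ : ζ ∈ ball (0 : ℂ) 1) : p - ((s : ℂ) * (1 - ζ)) • a ∈ ball (p - a) ‖a‖ := by
  refine ball_sub_smul_subset_ball_sub p a hs1 (mem_ball_iff_norm.2 ?_)
  have hsub : p - ((s : ℂ) * (1 - ζ)) • a - (p - (s : ℂ) • a) = ζ • (s : ℂ) • a := by module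
  rw [hsub, norm_smul, norm_ofReal_smul_of_nonneg a hs0.le]
  exact mul_lt_of_lt_one_left (mul_pos (norm_pos_iff.2 ha) hs0) (mem_ball_zero_iff.1 hζ)

lemma norm_apply_sub_smul_le_mul_exp (ha : a ≠ 0) (haΩ : ball (p - a) ‖a‖ ⊆ Ω) {σ K : ℝ} {N : ℕ}
    (hK : 0 ≤ K) {f : E → ℂ} (hf : DifferentiableOn ℂ f Ω)
    (hfK : ∀ η : ℂ, 0 < η.re → ‖η‖ ^ 2 ≤ σ * η.re → ‖f (p - η • a)‖ ≤ K * (‖η‖ / η.re) ^ N)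
    {s : ℝ} (hs0 : 0 < s) (hs1 : s ≤ 1) (hsσ : 2 * s ≤ σ) {r L M : ℝ} (hL : 1 ≤ L)
    (hLr : ‖a‖ * s * Real.exp (-L) < r) (hM : 0 ≤ M)
    (hfM : ∀ x ∈ ball (p - (s : ℂ) • a) r, ‖f x‖ ≤ Real.exp (-M)) {τ : ℝ} (hτ0 : 0 < τ)
    (hτs : τ ≤ s) :
    ‖f (p - (τ : ℂ) • a)‖ ≤ (K * 2 ^ N + 1) * 2 ^ N * Real.exp (-(M / L * (τ / s / 2))) := by
  have hh : DifferentiableOn ℂ (fun ζ : ℂ => f (p - ((s : ℂ) * (1 - ζ)) • a)) (ball 0 1) :=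
    hf.comp (by fun_prop) fun ζ hζ => haΩ (sub_smul_one_sub_mem_ball ha hs0 hs1 hζ)
  have hdecay := norm_le_mul_exp_of_nontangential_bound (N := N) hh hK (fun ζ hζ => ?_) hL hM
    (fun ζ _ hζL => hfM _ ?_) (div_pos hτ0 hs0) ((div_le_one hs0).2 hτs)
  · have : (s : ℂ) ≠ 0 := ofReal_ne_zero.2 hs0.ne'
    rwa [sub_sub_cancel, ofReal_div, mul_div_cancel₀ _ this] at hdecay
  · have hbound := hfK _ (re_smul_one_sub_pos hs0 hζ) ((norm_smul_one_sub_sq_le hζ).trans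
      (mul_le_mul_of_nonneg_right hsσ (re_smul_one_sub_pos hs0 hζ).le))
    rwa [re_ofReal_mul, norm_mul, Complex.norm_real, Real.norm_of_nonneg hs0.le,
      mul_div_mul_left _ _ hs0.ne', sub_re, one_re] at hbound
  · have hsub : p - ((s : ℂ) * (1 - ζ)) • a - (p - (s : ℂ) • a) = ζ • (s : ℂ) • a := by module
    rw [mem_ball_iff_norm, hsub, norm_smul, norm_ofReal_smul_of_nonneg a hs0.le, mul_comm]
    exact lt_of_le_of_lt (by gcongr) hLr

lemma exists_eventually_norm_apply_sub_smul_le_mul_exp (ha : a ≠ 0)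
    (haΩ : ball (p - a) ‖a‖ ⊆ Ω) {σ K : ℝ} {N : ℕ} (hσ : 0 < σ) (hK : 0 ≤ K) {g : ℕ → E → ℂ}
    (hg : ∀ k, DifferentiableOn ℂ (g k) Ω)
    (hgK : ∀ k, ∀ η : ℂ, 0 < η.re → ‖η‖ ^ 2 ≤ σ * η.re →
      ‖g k (p - η • a)‖ ≤ K * (‖η‖ / η.re) ^ N)
    (hsmall : ∀ x ∈ Ω, IsExpSmallAt g (fun k => k) x) :
    ∃ s > 0, ∃ b > 0, ∃ A > 0, ∀ᶠ k : ℕ in atTop, ∀ τ : ℝ, 0 < τ → τ ≤ s →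
      ‖g k (p - (τ : ℂ) • a)‖ ≤ A * Real.exp (-(b * (k * τ))) := by
  set s := min (σ / 2) 1
  have hs0 : 0 < s := by positivity
  have hs1 : s ≤ 1 := min_le_right _ _
  have hsσ : 2 * s ≤ σ := by linarith [min_le_left (σ / 2) 1]
  have hx₀ : p - (s : ℂ) • a ∈ Ω := haΩ (by
    simpa using sub_smul_one_sub_mem_ball (p := p) ha hs0 hs1 (mem_ball_self one_pos))
  obtain ⟨r, hr, b, hb, hsm⟩ := hsmall _ hx₀
  have hlim : Tendsto (fun L : ℝ => ‖a‖ * s * Real.exp (-L)) atTop (𝓝 0) := by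
    simpa using Real.tendsto_exp_neg_atTop_nhds_zero.const_mul (‖a‖ * s)
  obtain ⟨L, hLr, hL⟩ := ((hlim.eventually_lt_const hr).and (eventually_ge_atTop 1)).exists
  refine ⟨s, hs0, b / (2 * L * s), by positivity, (K * 2 ^ N + 1) * 2 ^ N, by positivity, ?_⟩
  filter_upwards [hsm] with k hk τ hτ0 hτs
  refine (norm_apply_sub_smul_le_mul_exp ha haΩ hK (hg k) (hgK k) hs0 hs1 hsσ hL hLr
    (by positivity) hk hτ0 hτs).trans_eq ?_
  congr 3
  field_simp

end DecayAlongNormal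

section FixedPoint

lemma IsHolomorphicSelfMap.norm_fderiv_pow_le {E : Type*} [NormedAddCommGroup E] [NormedSpace ℂ E]
    {Ω : Set E} {F : E → E} (hF : IsHolomorphicSelfMap F Ω) (hΩ : IsOpen Ω) {q : E}
    (hfix : F q = q) {C R : ℝ} (hC : ∀ x ∈ Ω, ‖x‖ ≤ C) (hR : 0 < R) (hRΩ : ball q R ⊆ Ω) (k : ℕ) :
    ‖fderiv ℂ F q ^ k‖ ≤ 2 * C / R := by
  have hFk := hF.iterate k
  rw [← hF.fderiv_iterate hΩ (hRΩ (mem_ball_self hR)) hfix k]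
  exact norm_fderiv_le_of_norm_le_ball hR (hFk.differentiableOn.mono hRΩ)
    fun z hz => hC _ (hFk.mapsTo (hRΩ hz))

variable {E : Type*} [NormedAddCommGroup E] [InnerProductSpace ℂ E] [FiniteDimensional ℂ E]
  {Ω : Set E} {F : E → E} {p q a : E} {ψ : E → ℂ} {C : ℝ}

lemma IsHolomorphicSelfMap.exists_norm_det_fderiv_straighten_comp_iterate_le
    (hF : IsHolomorphicSelfMap F Ω) (hΩ : IsOpen Ω) (hbd : Bornology.IsBounded Ω) (hpΩ : p ∉ Ω)
    (hp : (fun z => F z - z) =o[𝓝[Ω] p] fun z => ‖z - p‖ ^ 2) (ha : a ≠ 0)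
    (haΩ : ball (p - a) ‖a‖ ⊆ Ω) (hψ : IsSupportFunction Ω p a ψ) :
    ∃ σ, 0 < σ ∧ ∃ K, 0 < K ∧ ∀ k : ℕ, ∀ η : ℂ, 0 < η.re → ‖η‖ ^ 2 ≤ σ * η.re →
      ‖(fderiv ℂ (straighten p a ψ ∘ F^[k]) (p - η • a)).det‖ ≤
        K * (‖η‖ / η.re) ^ (Module.finrank ℂ E + 1) := by
  obtain ⟨φ, hφ⟩ := hψ.exists_isPeakWeight hΩ hpΩ hbd
  obtain ⟨Q, B, hQ, hB, hle⟩ := hφ.exists_le_div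
  obtain ⟨σ, hσ, K, hK, hdet⟩ := exists_norm_det_fderiv_straighten_comp_le (Q := 16 * Q)
    (C := 16 * B) ha haΩ hΩ (hψ.contDiff.differentiable two_ne_zero) (by positivity) (by positivity)
  refine ⟨σ, hσ, K, hK, fun k => hdet _ (hF.iterate k).differentiableOn fun x hx => ?_⟩
  have hxb := mem_ball_of_ballPoissonKernel_pos (lt_of_lt_of_le (by positivity) hx)
  have hbound := hle (ballPoissonKernel p a x / 16) (by linarith) _
    ((hF.iterate k).mapsTo (haΩ hxb)) (hφ.comp_le_exp_ballPoissonKernel hψ haΩ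
      (hF.iterate k).differentiableOn (hF.iterate k).mapsTo (isLittleO_iterate_sub hF.mapsTo hp k)
      hxb)
  rwa [div_div_eq_mul_div, mul_comm B] at hbound

lemma IsHolomorphicSelfMap.one_le_norm_det_fderiv (hF : IsHolomorphicSelfMap F Ω) (hΩ : IsOpen Ω)
    (hΩc : IsPreconnected Ω) (hbd : Bornology.IsBounded Ω) (hpΩ : p ∉ Ω) (hq : q ∈ Ω)
    (hfix : F q = q) (hp : (fun z => F z - z) =o[𝓝[Ω] p] fun z => ‖z - p‖ ^ 2) (ha : a ≠ 0)
    (haΩ : ball (p - a) ‖a‖ ⊆ Ω) (hψ : IsSupportFunction Ω p a ψ) :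
    1 ≤ ‖(fderiv ℂ F q).det‖ := by
  by_contra! hdet
  obtain ⟨D, hD⟩ := hbd.exists_norm_le
  have hΘ := differentiable_straighten (p := p) (a := a) (hψ.contDiff.differentiable two_ne_zero)
  obtain ⟨σ, hσ, K, hK, hbound⟩ :=
    hF.exists_norm_det_fderiv_straighten_comp_iterate_le hΩ hbd hpΩ hp ha haΩ hψ
  obtain ⟨s, hs, b, hb, A, -, hupper⟩ := exists_eventually_norm_apply_sub_smul_le_mul_exp ha haΩ
    hσ hK.le
    (fun k => differentiableOn_det_fderiv hΩ
      (hΘ.comp_differentiableOn (hF.iterate k).differentiableOn))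
    hbound fun x hx => hF.isExpSmallAt_det_fderiv_comp_iterate hΩ hΩc hD hq hfix hdet hΘ hx
  have hlim : Tendsto (fun c : ℝ => A * Real.exp (-(b * c))) atTop (𝓝 0) := by
    simpa using (Real.tendsto_exp_neg_atTop_nhds_zero.comp
      (tendsto_id.const_mul_atTop hb)).const_mul A
  obtain ⟨c, hAc, hc⟩ :=
    ((hlim.eventually_lt_const one_half_pos).and (eventually_gt_atTop 0)).exists
  have hck : Tendsto (fun k : ℕ => c / k) atTop (𝓝[>] 0) :=
    tendsto_nhdsWithin_iff.2 ⟨tendsto_const_div_atTop_nhds_zero_nat c,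
      (eventually_gt_atTop 0).mono fun k hk => div_pos hc (Nat.cast_pos.2 hk)⟩
  have hlower := hck.eventually
    (hF.eventually_half_le_norm_det_fderiv_comp_iterate hΩ hp ha haΩ hΘ hψ.fderiv_straighten hc)
  obtain ⟨k, hk, hkup, hklow, hks⟩ := ((eventually_gt_atTop 0).and (hupper.and
    (hlower.and (hck.eventually (Ioc_mem_nhdsGT hs))))).exists
  have hkc : (k : ℝ) * (c / k) = c := mul_div_cancel₀ _ (Nat.cast_ne_zero.2 hk.ne')
  have hle := (hklow k hkc.le).trans (hkup _ hks.1 hks.2)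
  rw [hkc] at hle
  exact hle.not_gt hAc

lemma IsHolomorphicSelfMap.eq_self_of_isSupportFunction (hF : IsHolomorphicSelfMap F Ω)
    (hΩ : IsOpen Ω) (hΩc : IsPreconnected Ω) (hbd : Bornology.IsBounded Ω) (hpΩ : p ∉ Ω)
    (hq : q ∈ Ω) (hfix : F q = q) (hp : (fun z => F z - z) =o[𝓝[Ω] p] fun z => ‖z - p‖ ^ 2)
    (ha : a ≠ 0) (haΩ : ball (p - a) ‖a‖ ⊆ Ω) (hψ : IsSupportFunction Ω p a ψ) :
    ∀ z ∈ Ω, F z = z := by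
  have : CompleteSpace E := FiniteDimensional.complete ℂ E
  obtain ⟨D, hD⟩ := hbd.exists_norm_le
  obtain ⟨R, hR, hRΩ⟩ := Metric.isOpen_iff.1 hΩ q hq
  rcases det_lt_one_or_eq_one_or_exists_unimodular_of_norm_pow_le
    (hF.norm_fderiv_pow_le hΩ hfix hD hR hRΩ) with hdet | hA | ⟨μ, hμ, hμ1, ℓ, hℓ0, hℓ⟩
  · exact absurd hdet
      (hF.one_le_norm_det_fderiv hΩ hΩc hbd hpΩ hq hfix hp ha haΩ hψ).not_gt
  · have hlocal := hF.eventually_eq_self hΩ hD hq hfix hA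
    exact fun z hz => sub_eq_zero.1 <| eq_zero_of_eventually_eq_zero hΩ hΩc
      (hF.differentiableOn.sub differentiableOn_id) hq
      (hlocal.mono fun x hx => sub_eq_zero.2 hx) hz
  · exact absurd
      (hF.eq_zero_of_forall_apply_fderiv_eq_mul hΩ hΩc hD hq hfix hp ha haΩ hμ hμ1 hℓ) hℓ0

end FixedPoint

lemma LittleOh.isLittleO {n : ℕ} {Ω : Set (En n)} {F : En n → En n} {p : En n} {k : ℕ}
    (ho : LittleOh Ω F p k) (hp : p ∉ Ω) :
    (fun z => F z - z) =o[𝓝[Ω] p] fun z => ‖z - p‖ ^ k := by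
  refine (Asymptotics.isLittleO_of_tendsto' ?_ ho).of_norm_left
  filter_upwards [self_mem_nhdsWithin] with z hz h
  have hzp : z - p ≠ 0 := sub_ne_zero.2 fun h => hp (h ▸ hz)
  exact absurd h (pow_ne_zero k (norm_ne_zero_iff.2 hzp))

theorem huang_simply_connected_interior_fixed_point_general {n : ℕ} {Ω : Set (En n)}
    {ρ : En n → ℝ} (hΩ : IsDomain' Ω) (hbd : Bornology.IsBounded Ω) {p : En n}
    (hρ : ContDiffAt ℝ 2 ρ p) (hΩρ : ∀ᶠ z in 𝓝 p, z ∈ Ω ↔ ρ z < 0) (hρp : ρ p = 0)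
    (hdρ : fderiv ℝ ρ p ≠ 0) (hspc : StronglyPcxAt ρ p) {F : En n → En n}
    (hF : DifferentiableOn ℂ F Ω) (hFself : MapsTo F Ω Ω) {q : En n} (hq : q ∈ Ω)
    (hfix : F q = q) (ho : LittleOh Ω F p 2) : ∀ z ∈ Ω, F z = z := by
  have hpΩ : p ∉ Ω := fun h => (hΩρ.self_of_nhds.1 h).ne hρp
  have hg := complexGradient_ne_zero hdρ
  obtain ⟨τ, hτ, hball⟩ := exists_pos_ball_sub_smul_complexGradient_subset hρ hρp
    (hΩρ.mono fun _ => Iff.mpr) hdρ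
  have hψ := isSupportFunction_leviPolynomial hρ hρp (hΩρ.mono fun _ => Iff.mp) hspc hg hτ
  exact IsHolomorphicSelfMap.eq_self_of_isSupportFunction ⟨hF, hFself⟩ hΩ.1 hΩ.2.isPreconnected
    hbd hpΩ hq hfix (ho.isLittleO hpΩ) (smul_ne_zero (ofReal_ne_zero.2 hτ.ne') hg) hball hψ

theorem huang_simply_connected_interior_fixed_point
    {n : ℕ} (hn : 2 ≤ n) (Ω : Set (En n)) (ρ : En n → ℝ)
    (hΩ : IsDomain' Ω) (hbd : Bornology.IsBounded Ω)
    (hsc : SimplyConnectedSpace ↥Ω)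
    (hρ : IsPcxCinfBoundary Ω ρ)
    (p : En n) (hp : p ∈ frontier Ω) (hspc : StronglyPcxAt ρ p)
    (F : En n → En n) (hF : DifferentiableOn ℂ F Ω) (hFself : MapsTo F Ω Ω)
    (q : En n) (hq : q ∈ Ω) (hfix : F q = q)
    (ho : LittleOh Ω F p 2) :
    ∀ z ∈ Ω, F z = z := by
  obtain ⟨⟨hρs, hΩρ, hfr, hdρ⟩, -⟩ := hρ
  exact huang_simply_connected_interior_fixed_point_general hΩ hbd
    (contDiff_infty.1 hρs 2).contDiffAt (.of_forall fun z => Set.ext_iff.1 hΩρ z)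
    ((Set.ext_iff.1 hfr p).1 hp) (hdρ p hp) hspc hF hFself hq hfix ho
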